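/- Let n ≥ 2 and 0 < α, s < 1. Suppose u ∈ 𝓛_{2s,α}(ℝⁿ×ℝ) is a distributional solution of ∂_t^α u + (-Δ)^s u = 0 in ℝⁿ×ℝ, i.e. ∫_ℝ ∫_{ℝⁿ} u(x,t)·[D_right^α φ(x,t) + (-Δ)^s φ(x,t)] dx dt = 0 for every real-valued Schwartz function φ on ℝⁿ×ℝ. Then u is affine in x and independent of t: there exist real constants C₀, C₁, …, Cₙ such that u(x,t) = C₀ + Σ_{i=1}^n Cᵢ xᵢ for almost every (x,t) ∈ ℝⁿ×ℝ. -/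

import Mathlib

open MeasureTheory Set

/-- The normalization constant `C_α = 1/|Γ(-α)|` for the Marchaud fractional derivative. -/
noncomputable def Calpha (α : ℝ) : ℝ := 1 / |Real.Gamma (-α)|

/-- The normalization constant `C_{n,s} = 4^s Γ(n/2+s)/(π^{n/2}|Γ(-s)|)` for the
fractional Laplacian. -/
noncomputable def Cns (n : ℕ) (s : ℝ) : ℝ :=
  (4 : ℝ) ^ s * Real.Gamma ((n : ℝ) / 2 + s) / (Real.pi ^ ((n : ℝ) / 2) * |Real.Gamma (-s)|)

/-- The right Marchaud fractional derivative of order `α` in the time variable: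
`D_right^α φ(x,t) = C_α ∫_t^∞ (φ(x,t) - φ(x,τ))/(τ-t)^{1+α} dτ`. -/
noncomputable def marchaudRight {n : ℕ} (α : ℝ) (φ : EuclideanSpace ℝ (Fin n) × ℝ → ℝ)
    (x : EuclideanSpace ℝ (Fin n)) (t : ℝ) : ℝ :=
  Calpha α * ∫ τ in Ioi t, (φ (x, t) - φ (x, τ)) / (τ - t) ^ (1 + α)

/-- The fractional Laplacian `(-Δ)^s` acting in the space variable:
`(-Δ)^s φ(x,t) = (C_{n,s}/2) ∫_{ℝⁿ} (2φ(x,t) - φ(x+y,t) - φ(x-y,t))/|y|^{n+2s} dy`. -/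
noncomputable def fracLap {n : ℕ} (s : ℝ) (φ : EuclideanSpace ℝ (Fin n) × ℝ → ℝ)
    (x : EuclideanSpace ℝ (Fin n)) (t : ℝ) : ℝ :=
  Cns n s / 2 * ∫ y : EuclideanSpace ℝ (Fin n),
    (2 * φ (x, t) - φ (x + y, t) - φ (x - y, t)) / ‖y‖ ^ ((n : ℝ) + 2 * s)

open scoped ContDiff FourierTransform SchwartzMap LineDeriv Topology

set_option linter.unusedSectionVars false

/-- Derivatives of `f` up to order `n` are `O((1 + ‖x‖) ^ d)`. -/
def DerivBound {V F : Type*} [NormedAddCommGroup V] [NormedSpace ℝ V] [NormedAddCommGroup F]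
    [NormedSpace ℝ F] (n : ℕ) (d : ℝ) (f : V → F) : Prop :=
  ∃ C, ∀ m ≤ n, ∀ x, ‖iteratedFDeriv ℝ m f x‖ ≤ C * (1 + ‖x‖) ^ d

section DerivBound

variable {V F : Type*} [NormedAddCommGroup V] [NormedSpace ℝ V] [NormedAddCommGroup F]
  [NormedSpace ℝ F]

lemma DerivBound.mono {n : ℕ} {d d' : ℝ} {f : V → F} (h : DerivBound n d f) (hd : d ≤ d') :
    DerivBound n d' f := by
  obtain ⟨C, hC⟩ := h
  refine ⟨C, fun m hm x => (hC m hm x).trans ?_⟩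
  have hC0 : 0 ≤ C := by
    have := (norm_nonneg _).trans (hC 0 (Nat.zero_le _) (0 : V))
    simpa using this
  gcongr
  linarith [norm_nonneg x]

lemma DerivBound.of_hasTemperateGrowth {f : V → F} (hf : f.HasTemperateGrowth) (n : ℕ) :
    ∃ d : ℝ, 0 ≤ d ∧ DerivBound n d f := by
  obtain ⟨k, C, -, h⟩ := hf.norm_iteratedFDeriv_le_uniform n
  exact ⟨k, by positivity, C, fun m hm x => by simpa using h m hm x⟩

lemma DerivBound.smul {n : ℕ} {d d' : ℝ} {f : V → ℂ} {g : V → F} [NormedSpace ℂ F]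
    (hf : ContDiff ℝ ∞ f) (hg : ContDiff ℝ ∞ g)
    (hfb : DerivBound n d f) (hgb : DerivBound n d' g) :
    DerivBound n (d + d') (fun x => f x • g x) := by
  obtain ⟨C, hC⟩ := hfb
  obtain ⟨C', hC'⟩ := hgb
  have hC0 : 0 ≤ C := by
    have := (norm_nonneg _).trans (hC 0 (Nat.zero_le _) (0 : V))
    simpa using this
  have hC0' : 0 ≤ C' := by
    have := (norm_nonneg _).trans (hC' 0 (Nat.zero_le _) (0 : V))
    simpa using this
  refine ⟨2 ^ n * (C * C'), fun m hm x => ?_⟩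
  have h1 := norm_iteratedFDeriv_smul_le (𝕜 := ℝ) hf hg x (n := m) (mod_cast le_top)
  refine h1.trans ?_
  have h2 : ∀ i ∈ Finset.range (m + 1), (m.choose i : ℝ) * ‖iteratedFDeriv ℝ i f x‖ *
      ‖iteratedFDeriv ℝ (m - i) g x‖ ≤ (m.choose i : ℝ) * ((C * C') * (1 + ‖x‖) ^ (d + d')) := by
    intro i hi
    have hi' : i ≤ m := by simpa [Nat.lt_succ_iff] using hi
    have a := hC i (hi'.trans hm) x
    have b := hC' (m - i) ((Nat.sub_le _ _).trans hm) x
    rw [Real.rpow_add (by positivity), mul_assoc]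
    calc _ ≤ (m.choose i : ℝ) * ((C * (1 + ‖x‖) ^ d) * (C' * (1 + ‖x‖) ^ d')) := by gcongr
      _ = _ := by ring
  refine (Finset.sum_le_sum h2).trans ?_
  rw [← Finset.sum_mul]
  have h3 : ∑ i ∈ Finset.range (m + 1), (m.choose i : ℝ) = 2 ^ m := by
    exact_mod_cast Nat.sum_range_choose m
  rw [h3, mul_assoc ((2 : ℝ) ^ n)]
  have : (2 : ℝ) ^ m ≤ 2 ^ n := pow_le_pow_right₀ (by norm_num) hm
  gcongr

lemma DerivBound.succ {n : ℕ} {d : ℝ} {f : V → F} (h0 : DerivBound 0 d f)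
    (h1 : DerivBound n d (fderiv ℝ f)) : DerivBound (n + 1) d f := by
  obtain ⟨C, hC⟩ := h0
  obtain ⟨C', hC'⟩ := h1
  refine ⟨max C C', fun m hm x => ?_⟩
  rcases m with _ | m
  · exact (hC 0 le_rfl x).trans (by gcongr; exact le_max_left _ _)
  · rw [← norm_iteratedFDeriv_fderiv]
    exact (hC' m (by omega) x).trans (by gcongr; exact le_max_right _ _)

lemma fderiv_inv_eq_smul {f : V → ℂ} (hf : ContDiff ℝ ∞ f) (h0 : ∀ x, f x ≠ 0) :
    fderiv ℝ (fun x => (f x)⁻¹) = fun x => ((-1 : ℂ) * ((f x)⁻¹ * (f x)⁻¹)) • fderiv ℝ f x := by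
  ext x v
  have h := ((hf.differentiable (by simp)) x).hasFDerivAt
  have h2 := (hasDerivAt_inv (h0 x)).comp_hasFDerivAt x h
  rw [show (fun x => (f x)⁻¹) = (fun y : ℂ => y⁻¹) ∘ f from rfl, h2.fderiv]
  simp [pow_two]

lemma hasTemperateGrowth_inv {f : V → ℂ} (hf : f.HasTemperateGrowth) {c : ℝ} (hc : 0 < c)
    (h : ∀ x, c ≤ ‖f x‖) : (fun x => (f x)⁻¹).HasTemperateGrowth := by
  have h0 : ∀ x, f x ≠ 0 := fun x hx => by have := h x; rw [hx, norm_zero] at this; linarith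
  have hsm : ContDiff ℝ ∞ (fun x => (f x)⁻¹) := hf.1.inv h0
  have hz : DerivBound 0 0 (fun x => (f x)⁻¹) := by
    refine ⟨c⁻¹, fun m hm x => ?_⟩
    obtain rfl : m = 0 := by omega
    rw [norm_iteratedFDeriv_zero, norm_inv, Real.rpow_zero, mul_one]
    exact inv_anti₀ hc (h x)
  have key : ∀ n, ∃ d : ℝ, 0 ≤ d ∧ DerivBound n d (fun x => (f x)⁻¹) := by
    intro n
    induction n with
    | zero => exact ⟨0, le_rfl, hz⟩
    | succ n ih =>
      obtain ⟨d, hd, hb⟩ := ih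
      obtain ⟨d', hd', hb'⟩ := DerivBound.of_hasTemperateGrowth hf (n + 1)
      have hb'' : DerivBound n d' (fderiv ℝ f) := by
        obtain ⟨C, hC⟩ := hb'
        exact ⟨C, fun m hm x => by rw [norm_iteratedFDeriv_fderiv]; exact hC _ (by omega) x⟩
      have hfd : ContDiff ℝ ∞ (fderiv ℝ f) := hf.1.fderiv_right (by simp)
      have h1 : DerivBound n (d + d + d') (fderiv ℝ (fun x => (f x)⁻¹)) := by
        rw [fderiv_inv_eq_smul hf.1 h0]
        refine DerivBound.smul (contDiff_const.mul (hsm.mul hsm)) hfd ?_ hb''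
        have h2 := DerivBound.smul hsm hsm hb hb
        obtain ⟨C, hC⟩ := h2
        refine ⟨C, fun m hm x => ?_⟩
        have : (fun x => (-1 : ℂ) * ((f x)⁻¹ * (f x)⁻¹)) = -(fun x => (f x)⁻¹ • (f x)⁻¹) := by
          ext x; simp
        rw [this, iteratedFDeriv_neg, Pi.neg_apply, norm_neg]
        exact hC m hm x
      exact ⟨d + d + d', by positivity, DerivBound.succ (hz.mono (by positivity)) h1⟩
  refine ⟨hsm, fun n => ?_⟩
  obtain ⟨d, hd, C, hC⟩ := key n
  have hC0 : 0 ≤ C := by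
    have := (norm_nonneg _).trans (hC 0 (Nat.zero_le _) (0 : V))
    simpa using this
  refine ⟨⌈d⌉₊, C, fun x => (hC n le_rfl x).trans ?_⟩
  rw [← Real.rpow_natCast]
  gcongr
  · linarith [norm_nonneg x]
  · exact Nat.le_ceil d

lemma DerivBound.pow_of_decay {g : V → ℂ} (hg : g.HasTemperateGrowth) {C δ : ℝ} (hδ : 0 < δ)
    (hC : ∀ x, ‖g x‖ ≤ C * (1 + ‖x‖) ^ (-δ)) (n : ℕ) :
    ∀ D : ℝ, ∃ N₀ : ℕ, ∀ N ≥ N₀, DerivBound n (-D) (fun x => g x ^ N) := by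
  have hz : ∀ D : ℝ, ∃ N₀ : ℕ, ∀ N ≥ N₀, DerivBound 0 (-D) (fun x => g x ^ N) := by
    intro D
    refine ⟨⌈D / δ⌉₊, fun N hN => ⟨C ^ N, fun m hm x => ?_⟩⟩
    obtain rfl : m = 0 := by omega
    have hC0 : 0 ≤ C := by
      have := (norm_nonneg _).trans (hC (0 : V))
      simpa using this
    rw [norm_iteratedFDeriv_zero, norm_pow]
    refine (pow_le_pow_left₀ (norm_nonneg _) (hC x) N).trans ?_
    rw [mul_pow, ← Real.rpow_natCast ((1 + ‖x‖) ^ (-δ)), ← Real.rpow_mul (by positivity)]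
    gcongr
    · linarith [norm_nonneg x]
    · have : D / δ ≤ N := (Nat.le_ceil _).trans (by exact_mod_cast hN)
      rw [div_le_iff₀ hδ] at this
      linarith
  induction n with
  | zero => exact hz
  | succ n ih =>
    intro D
    obtain ⟨d', hd', hb'⟩ := DerivBound.of_hasTemperateGrowth hg (n + 1)
    have hb'' : DerivBound n d' (fderiv ℝ g) := by
      obtain ⟨C, hC⟩ := hb'
      exact ⟨C, fun m hm x => by rw [norm_iteratedFDeriv_fderiv]; exact hC _ (by omega) x⟩
    obtain ⟨N₁, h₁⟩ := ih (D + d')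
    obtain ⟨N₂, h₂⟩ := hz D
    refine ⟨max (N₁ + 1) N₂, fun N hN => ?_⟩
    refine DerivBound.succ (h₂ N (le_trans (le_max_right _ _) hN)) ?_
    have hN1 : N₁ ≤ N - 1 := by have := le_trans (le_max_left _ _) hN; omega
    have hfd : ContDiff ℝ ∞ (fderiv ℝ g) := hg.1.fderiv_right (by simp)
    have h3 := DerivBound.smul (hg.1.pow (N - 1)) hfd (h₁ (N - 1) hN1) hb''
    rw [show -(D + d') + d' = -D by ring] at h3
    have h4 : fderiv ℝ (fun x => g x ^ N) = (N : ℝ) • fun x => g x ^ (N - 1) • fderiv ℝ g x := by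
      ext x v
      rw [fderiv_fun_pow N ((hg.1.differentiable (by simp)) x)]
      simp [mul_assoc]
    rw [h4]
    obtain ⟨K, hK⟩ := h3
    refine ⟨N * K, fun m hm x => ?_⟩
    rw [iteratedFDeriv_const_smul_apply, norm_smul, Real.norm_natCast, mul_assoc]
    · gcongr
      exact hK m hm x
    · exact (((hg.1.pow (N - 1)).smul hfd).contDiffAt).of_le (mod_cast le_top)

end DerivBound

section FourierDecay

variable {V : Type*} [NormedAddCommGroup V] [InnerProductSpace ℝ V] [FiniteDimensional ℝ V]
  [MeasurableSpace V] [BorelSpace V]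

lemma integrable_norm_iteratedFDeriv_of_derivBound {f : V → ℂ} {n m : ℕ} {D : ℝ}
    (hf : ContDiff ℝ ∞ f) (hD : Module.finrank ℝ V < D) {C : ℝ}
    (hC : ∀ m ≤ n, ∀ x, ‖iteratedFDeriv ℝ m f x‖ ≤ C * (1 + ‖x‖) ^ (-D)) (hm : m ≤ n) :
    Integrable (fun x => ‖iteratedFDeriv ℝ m f x‖) := by
  refine ((integrable_one_add_norm hD).const_mul C).mono'
    ((hf.continuous_iteratedFDeriv (mod_cast le_top)).norm.aestronglyMeasurable) ?_
  filter_upwards with x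
  simpa using hC m hm x

/-- Weighted sup bound for the inverse Fourier transform, uniform over contracted factors. -/
lemma exists_fourierInv_decay {F h : V → ℂ} {M : ℕ} {D : ℝ} (hF : ContDiff ℝ ∞ F)
    (hFb : DerivBound M (-D) F) (hD : Module.finrank ℝ V < D)
    (hh : ContDiff ℝ ∞ h) (hhb : DerivBound M 0 h) :
    ∃ C, ∀ A : V →L[ℝ] V, ‖A‖ ≤ 1 → ∀ z,
      (1 + ‖z‖) ^ M * ‖𝓕⁻ (fun ζ => F ζ * h (A ζ)) z‖ ≤ C := by
  obtain ⟨C₁, hC₁⟩ := hFb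
  obtain ⟨C₂, hC₂⟩ := hhb
  have hC₁0 : 0 ≤ C₁ := by
    have := (norm_nonneg _).trans (hC₁ 0 (Nat.zero_le _) (0 : V))
    simpa using this
  have hC₂0 : 0 ≤ C₂ := by
    have := (norm_nonneg _).trans (hC₂ 0 (Nat.zero_le _) (0 : V))
    simpa using this
  set I := ∫ v : V, (1 + ‖v‖) ^ (-D) with hI
  have hI0 : 0 ≤ I := integral_nonneg fun v => by positivity
  set K := 2 ^ M * (C₁ * C₂) with hK
  have hK0 : 0 ≤ K := by positivity
  refine ⟨2 ^ M * (2 * (2 ^ M * ((M + 1) * (K * I)))), fun A hA z => ?_⟩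
  set f : V → ℂ := fun ζ => F ζ * h (A ζ) with hf
  have hhA : ContDiff ℝ ∞ (fun ζ => h (A ζ)) := hh.comp A.contDiff
  have hfs : ContDiff ℝ ∞ f := hF.mul hhA
  have hAb : ∀ j ≤ M, ∀ x, ‖iteratedFDeriv ℝ j (fun ζ => h (A ζ)) x‖ ≤ C₂ := by
    intro j hj x
    have e := A.iteratedFDeriv_comp_right (f := h) hh x (i := j) (mod_cast le_top)
    rw [show (fun ζ => h (A ζ)) = h ∘ A from rfl, e]
    refine (ContinuousMultilinearMap.norm_compContinuousLinearMap_le _ _).trans ?_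
    have e2 := hC₂ j hj (A x)
    rw [Real.rpow_zero, mul_one] at e2
    have e3 : ∏ _j : Fin j, ‖A‖ ≤ 1 :=
      Finset.prod_le_one (fun _ _ => norm_nonneg _) (fun _ _ => hA)
    calc _ ≤ C₂ * 1 := by gcongr
      _ = C₂ := mul_one _
  have hb : ∀ m ≤ M, ∀ x, ‖iteratedFDeriv ℝ m f x‖ ≤ K * (1 + ‖x‖) ^ (-D) := by
    intro m hm x
    have h1 := norm_iteratedFDeriv_mul_le (𝕜 := ℝ) hF hhA x (n := m) (mod_cast le_top)
    refine h1.trans ?_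
    have h2 : ∀ i ∈ Finset.range (m + 1), (m.choose i : ℝ) * ‖iteratedFDeriv ℝ i F x‖ *
        ‖iteratedFDeriv ℝ (m - i) (fun ζ => h (A ζ)) x‖ ≤
        (m.choose i : ℝ) * ((C₁ * C₂) * (1 + ‖x‖) ^ (-D)) := by
      intro i hi
      have hi' : i ≤ m := by simpa [Nat.lt_succ_iff] using hi
      have a := hC₁ i (hi'.trans hm) x
      have b := hAb (m - i) ((Nat.sub_le _ _).trans hm) x
      rw [mul_assoc]
      calc _ ≤ (m.choose i : ℝ) * ((C₁ * (1 + ‖x‖) ^ (-D)) * C₂) := by gcongr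
        _ = _ := by ring
    refine (Finset.sum_le_sum h2).trans ?_
    rw [← Finset.sum_mul]
    have h3 : ∑ i ∈ Finset.range (m + 1), (m.choose i : ℝ) = 2 ^ m := by
      exact_mod_cast Nat.sum_range_choose m
    rw [h3, hK, mul_assoc ((2 : ℝ) ^ M)]
    have : (2 : ℝ) ^ m ≤ 2 ^ M := pow_le_pow_right₀ (by norm_num) hm
    gcongr
  have h_int : ∀ m ≤ M, ∫ v, ‖iteratedFDeriv ℝ m f v‖ ≤ K * I := by
    intro m hm
    rw [hI, ← integral_const_mul]
    exact integral_mono (integrable_norm_iteratedFDeriv_of_derivBound hfs hD hb hm)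
      ((integrable_one_add_norm hD).const_mul K) (fun x => hb m hm x)
  have hfour : ∀ n ≤ M, ‖z‖ ^ n * ‖𝓕⁻ f z‖ ≤ 2 ^ M * ((M + 1) * (K * I)) := by
    intro n hn
    have h1 := Real.pow_mul_norm_iteratedFDeriv_fourier_le (f := f) (K := 0) (N := (M : ℕ∞))
      (hfs.of_le (mod_cast le_top)) (fun k m hk hm => by
        obtain rfl : k = 0 := by simpa using hk
        simpa using integrable_norm_iteratedFDeriv_of_derivBound hfs hD hb (by simpa using hm))
      (k := 0) (n := n) (by simp) (by exact_mod_cast hn) (-z)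
    rw [norm_iteratedFDeriv_zero, norm_neg] at h1
    rw [Real.fourierInv_eq_fourier_neg]
    refine h1.trans ?_
    simp only [pow_zero, one_mul, Nat.cast_zero, mul_zero, zero_add, Finset.range_one]
    have h2 : ∑ p ∈ ({0} : Finset ℕ) ×ˢ Finset.range (n + 1),
        ∫ v, ‖v‖ ^ p.1 * ‖iteratedFDeriv ℝ p.2 f v‖ ≤ (M + 1) * (K * I) := by
      have : ∀ p ∈ ({0} : Finset ℕ) ×ˢ Finset.range (n + 1),
          ∫ v, ‖v‖ ^ p.1 * ‖iteratedFDeriv ℝ p.2 f v‖ ≤ K * I := by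
        rintro ⟨a, b⟩ hp
        simp only [Finset.mem_product, Finset.mem_singleton, Finset.mem_range] at hp
        obtain ⟨rfl, hb'⟩ := hp
        simpa using h_int b (by omega)
      refine (Finset.sum_le_sum this).trans ?_
      simp only [Finset.sum_const, Finset.card_product, Finset.card_singleton, Finset.card_range,
        one_mul, nsmul_eq_mul]
      gcongr
      push_cast
      have : (n : ℝ) ≤ M := by exact_mod_cast hn
      linarith
    have h3 : (2 : ℝ) ^ n ≤ 2 ^ M := pow_le_pow_right₀ (by norm_num) hn
    have h4 : 0 ≤ (M + 1) * (K * I) := by positivity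
    calc _ ≤ (2 : ℝ) ^ n * ((M + 1) * (K * I)) := by gcongr
      _ ≤ _ := by gcongr
  have h0 := hfour 0 (Nat.zero_le _)
  have h1 := hfour M le_rfl
  rw [pow_zero, one_mul] at h0
  have h5 : (1 + ‖z‖) ^ M ≤ 2 ^ M * (1 + ‖z‖ ^ M) := by
    rcases le_total 1 ‖z‖ with h | h
    · calc (1 + ‖z‖) ^ M ≤ (2 * ‖z‖) ^ M := by gcongr; linarith
        _ = 2 ^ M * ‖z‖ ^ M := by rw [mul_pow]
        _ ≤ _ := by gcongr; linarith
    · calc (1 + ‖z‖) ^ M ≤ 2 ^ M := by gcongr; linarith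
        _ ≤ _ := by
          have : 0 ≤ ‖z‖ ^ M := by positivity
          nlinarith [show (0 : ℝ) < 2 ^ M by positivity]
  calc (1 + ‖z‖) ^ M * ‖𝓕⁻ f z‖ ≤ 2 ^ M * (1 + ‖z‖ ^ M) * ‖𝓕⁻ f z‖ := by gcongr
    _ = 2 ^ M * (‖𝓕⁻ f z‖ + ‖z‖ ^ M * ‖𝓕⁻ f z‖) := by ring
    _ ≤ _ := by gcongr; linarith

end FourierDecay

section WeightKernel

variable {V : Type*} [NormedAddCommGroup V] [InnerProductSpace ℝ V] [FiniteDimensional ℝ V]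
  [MeasurableSpace V] [BorelSpace V]

/-- A positive continuous weight `w` which is almost stable under averaging against translates
by `ν`. -/
structure WeightKernel (w : V → ℝ) (ν : Measure V) (C : ℝ) : Prop where
  pos : ∀ z, 0 < w z
  cont : Continuous w
  integrable : ∀ z, Integrable (fun y => w (z + y)) ν
  le : ∀ z, ∫ y, w (z + y) ∂ν ≤ C * w z

/-- The average of `u` over backward translates by `ν`. -/
noncomputable def backAverage (ν : Measure V) (u : V → ℂ) (z : V) : ℂ := ∫ y, u (z - y) ∂ν

variable {w : V → ℝ} {ν : Measure V} {C : ℝ} {u : V → ℂ}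

lemma WeightKernel.aestronglyMeasurable (h : WeightKernel w ν C)
    (hu : Integrable (fun z => (w z : ℂ) * u z)) : AEStronglyMeasurable u := by
  have h1 : u = fun z => ((w z)⁻¹ : ℂ) * ((w z : ℂ) * u z) := by
    ext z
    have : (w z : ℂ) ≠ 0 := by exact_mod_cast (h.pos z).ne'
    field_simp
  rw [h1]
  refine AEStronglyMeasurable.mul ?_ hu.aestronglyMeasurable
  have := h.cont.measurable
  exact (by fun_prop : Measurable fun z => ((w z)⁻¹ : ℂ)).aestronglyMeasurable

lemma WeightKernel.integrable_mul_of_le (h : WeightKernel w ν C)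
    (hu : Integrable (fun z => (w z : ℂ) * u z)) {ψ : V → ℂ} {B : ℝ}
    (hψm : AEStronglyMeasurable ψ) (hψ : ∀ z, ‖ψ z‖ ≤ B * w z) :
    Integrable (fun z => u z * ψ z) := by
  refine (hu.norm.const_mul B).mono' ((h.aestronglyMeasurable hu).mul hψm) ?_
  filter_upwards with z
  rw [norm_mul, norm_mul, Complex.norm_real, Real.norm_of_nonneg (h.pos z).le]
  calc _ ≤ ‖u z‖ * (B * w z) := by gcongr; exact hψ z
    _ = _ := by ring

variable [IsFiniteMeasure ν]

lemma WeightKernel.integrable_shear (h : WeightKernel w ν C)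
    (hu : Integrable (fun z => (w z : ℂ) * u z)) :
    Integrable (fun p : V × V => (w (p.1 + p.2) : ℂ) * u p.1) (volume.prod ν) := by
  have hm : AEStronglyMeasurable (fun p : V × V => (w (p.1 + p.2) : ℂ) * u p.1)
      (volume.prod ν) := by
    refine AEStronglyMeasurable.mul ?_ (h.aestronglyMeasurable hu).comp_fst
    have := h.cont
    exact (by fun_prop : Continuous fun p : V × V => (w (p.1 + p.2) : ℂ)).aestronglyMeasurable
  rw [integrable_prod_iff hm]
  refine ⟨Filter.Eventually.of_forall fun z => ?_, ?_⟩
  · exact ((h.integrable z).ofReal (𝕜 := ℂ)).mul_const (u z)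
  · refine (hu.norm.const_mul C).mono' hm.norm.integral_prod_right' ?_
    filter_upwards with z
    have : ∀ y, ‖(w (z + y) : ℂ) * u z‖ = w (z + y) * ‖u z‖ := fun y => by
      rw [norm_mul, Complex.norm_real, Real.norm_of_nonneg (h.pos _).le]
    simp only [this, integral_mul_const]
    rw [Real.norm_of_nonneg, norm_mul, Complex.norm_real, Real.norm_of_nonneg (h.pos z).le,
      ← mul_assoc]
    · gcongr
      exact h.le z
    · exact mul_nonneg (integral_nonneg fun y => (h.pos _).le) (norm_nonneg _)

lemma WeightKernel.integral_shear_le (h : WeightKernel w ν C)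
    (hu : Integrable (fun z => (w z : ℂ) * u z)) :
    ∫ p : V × V, ‖(w (p.1 + p.2) : ℂ) * u p.1‖ ∂(volume.prod ν) ≤
      C * ∫ z, ‖(w z : ℂ) * u z‖ := by
  rw [integral_prod _ (h.integrable_shear hu).norm, ← integral_const_mul]
  refine integral_mono (h.integrable_shear hu).norm.integral_prod_left (hu.norm.const_mul C) ?_
  intro z
  have : ∀ y, ‖(w (z + y) : ℂ) * u z‖ = w (z + y) * ‖u z‖ := fun y => by
    rw [norm_mul, Complex.norm_real, Real.norm_of_nonneg (h.pos _).le]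
  simp only [this, integral_mul_const]
  rw [norm_mul, Complex.norm_real, Real.norm_of_nonneg (h.pos z).le, ← mul_assoc]
  gcongr
  exact h.le z

lemma WeightKernel.integrable_unshear (h : WeightKernel w ν C)
    (hu : Integrable (fun z => (w z : ℂ) * u z)) :
    Integrable (fun p : V × V => (w p.1 : ℂ) * u (p.1 - p.2)) (volume.prod ν) := by
  have := (measurePreserving_sub_prod (volume : Measure V) ν).integrable_comp_of_integrable
    (h.integrable_shear hu)
  simpa [Function.comp_def] using this

lemma WeightKernel.integral_unshear_le (h : WeightKernel w ν C)
    (hu : Integrable (fun z => (w z : ℂ) * u z)) :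
    ∫ p : V × V, ‖(w p.1 : ℂ) * u (p.1 - p.2)‖ ∂(volume.prod ν) ≤
      C * ∫ z, ‖(w z : ℂ) * u z‖ := by
  refine le_of_eq_of_le ?_ (h.integral_shear_le hu)
  have := (measurePreserving_sub_prod (volume : Measure V) ν)
  conv_rhs => rw [← this.map_eq]
  rw [integral_map this.aemeasurable]
  · simp
  · rw [this.map_eq]
    exact (h.integrable_shear hu).norm.aestronglyMeasurable

lemma WeightKernel.integrable_backAverage (h : WeightKernel w ν C)
    (hu : Integrable (fun z => (w z : ℂ) * u z)) :
    Integrable (fun z => (w z : ℂ) * backAverage ν u z) := by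
  simpa only [integral_const_mul, backAverage] using (h.integrable_unshear hu).integral_prod_left

lemma WeightKernel.integral_backAverage_le (h : WeightKernel w ν C)
    (hu : Integrable (fun z => (w z : ℂ) * u z)) :
    ∫ z, ‖(w z : ℂ) * backAverage ν u z‖ ≤ C * ∫ z, ‖(w z : ℂ) * u z‖ := by
  refine le_trans ?_ (h.integral_unshear_le hu)
  rw [integral_prod _ (h.integrable_unshear hu).norm]
  refine integral_mono (h.integrable_backAverage hu).norm
    (h.integrable_unshear hu).norm.integral_prod_left ?_
  intro z
  simp only [backAverage]
  rw [← integral_const_mul]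
  exact norm_integral_le_integral_norm _

lemma WeightKernel.integrable_unshear_mul (h : WeightKernel w ν C)
    (hu : Integrable (fun z => (w z : ℂ) * u z)) {ψ : V → ℂ} {B : ℝ}
    (hψc : Continuous ψ) (hψ : ∀ z, ‖ψ z‖ ≤ B * w z) :
    Integrable (fun p : V × V => u (p.1 - p.2) * ψ p.1) (volume.prod ν) := by
  have hm : AEStronglyMeasurable (fun p : V × V => u (p.1 - p.2)) (volume.prod ν) :=
    (h.aestronglyMeasurable hu).comp_quasiMeasurePreserving
      (quasiMeasurePreserving_sub_of_right_invariant _ _)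
  refine ((h.integrable_unshear hu).norm.const_mul B).mono'
    (hm.mul (hψc.comp continuous_fst).aestronglyMeasurable) ?_
  filter_upwards with p
  rw [norm_mul, norm_mul, Complex.norm_real, Real.norm_of_nonneg (h.pos _).le]
  calc _ ≤ ‖u (p.1 - p.2)‖ * (B * w p.1) := by gcongr; exact hψ _
    _ = _ := by ring

lemma WeightKernel.integral_backAverage_mul (h : WeightKernel w ν C)
    (hu : Integrable (fun z => (w z : ℂ) * u z)) {ψ : V → ℂ} {B : ℝ}
    (hψc : Continuous ψ) (hψ : ∀ z, ‖ψ z‖ ≤ B * w z) :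
    ∫ z, backAverage ν u z * ψ z = ∫ y, (∫ z, u z * ψ (z + y)) ∂ν := by
  have h1 := h.integrable_unshear_mul hu hψc hψ
  have h2 := integral_integral_swap (f := fun z y => u (z - y) * ψ z) h1
  simp only [integral_mul_const] at h2
  rw [show (fun z => backAverage ν u z * ψ z) = fun z => (∫ y, u (z - y) ∂ν) * ψ z from rfl, h2]
  congr 1 with y
  rw [← integral_add_right_eq_self (fun z => u (z - y) * ψ z) y]
  simp

lemma WeightKernel.integral_backAverage_mul' (h : WeightKernel w ν C)
    (hu : Integrable (fun z => (w z : ℂ) * u z)) {ψ : V → ℂ} {B : ℝ}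
    (hψc : Continuous ψ) (hψ : ∀ z, ‖ψ z‖ ≤ B * w z) :
    ∫ z, backAverage ν u z * ψ z = ∫ z, u z * ∫ y, ψ (z + y) ∂ν := by
  rw [h.integral_backAverage_mul hu hψc hψ]
  have h1 := (measurePreserving_add_prod (volume : Measure V) ν).integrable_comp_of_integrable
    (h.integrable_unshear_mul hu hψc hψ)
  simp only [Function.comp_def, add_sub_cancel_right] at h1
  rw [← integral_integral_swap (f := fun z y => u z * ψ (z + y)) h1]
  simp only [integral_const_mul]

lemma WeightKernel.schwartz_le (h : WeightKernel w ν C) {c : ℝ} (hc : 0 < c) {M : ℕ}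
    (hw : ∀ z, c ≤ (1 + ‖z‖) ^ M * w z) (ψ : 𝓢(V, ℂ)) : ∃ B, ∀ z, ‖ψ z‖ ≤ B * w z := by
  have h1 := fun z => SchwartzMap.one_add_le_sup_seminorm_apply (𝕜 := ℂ) (m := (M, 0)) (k := M)
    (n := 0) le_rfl le_rfl ψ z
  set K := 2 ^ M * ((Finset.Iic (M, 0)).sup fun m => SchwartzMap.seminorm ℂ m.1 m.2) ψ
  refine ⟨K / c, fun z => ?_⟩
  have h2 := h1 z
  rw [norm_iteratedFDeriv_zero] at h2
  rw [div_mul_eq_mul_div, le_div_iff₀ hc]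
  calc ‖ψ z‖ * c ≤ ‖ψ z‖ * ((1 + ‖z‖) ^ M * w z) := by gcongr; exact hw z
    _ = ((1 + ‖z‖) ^ M * ‖ψ z‖) * w z := by ring
    _ ≤ _ := by have := (h.pos z).le; gcongr

/-- `u` solves `P' u = ν' u` in the sense of distributions. -/
def IsAverageSol (P : 𝓢(V, ℂ) → 𝓢(V, ℂ)) (ν : Measure V) (u : V → ℂ) : Prop :=
  ∀ φ : 𝓢(V, ℂ), ∫ z, u z * P φ z = ∫ z, backAverage ν u z * φ z

lemma IsAverageSol.backAverage (h : WeightKernel w ν C) {c : ℝ} (hc : 0 < c) {M : ℕ}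
    (hw : ∀ z, c ≤ (1 + ‖z‖) ^ M * w z) {P : 𝓢(V, ℂ) → 𝓢(V, ℂ)}
    (hP : ∀ φ a, P (φ.compSubConstCLM ℂ a) = (P φ).compSubConstCLM ℂ a)
    (hu : Integrable (fun z => (w z : ℂ) * u z)) (hs : IsAverageSol P ν u) :
    IsAverageSol P ν (backAverage ν u) := by
  intro φ
  obtain ⟨B, hB⟩ := h.schwartz_le hc hw (P φ)
  obtain ⟨B', hB'⟩ := h.schwartz_le hc hw φ
  rw [h.integral_backAverage_mul hu (P φ).continuous hB,
    h.integral_backAverage_mul (h.integrable_backAverage hu) φ.continuous hB']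
  congr 1 with y
  have h1 := hs (φ.compSubConstCLM ℂ (-y))
  rw [hP] at h1
  simpa using h1

/-- Iterating the resolvent identity `u = R' ν' u`. -/
lemma IsAverageSol.exists_pairing_le (h : WeightKernel w ν C) {c : ℝ} (hc : 0 < c) {M : ℕ}
    (hw : ∀ z, c ≤ (1 + ‖z‖) ^ M * w z) {P R : 𝓢(V, ℂ) → 𝓢(V, ℂ)}
    (hP : ∀ φ a, P (φ.compSubConstCLM ℂ a) = (P φ).compSubConstCLM ℂ a)
    (hR : ∀ φ, P (R φ) = φ) (N : ℕ) :
    ∃ K, 0 ≤ K ∧ ∀ u : V → ℂ, Integrable (fun z => (w z : ℂ) * u z) → IsAverageSol P ν u →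
      ∀ (η : 𝓢(V, ℂ)) (B : ℝ), (∀ z, (1 + ‖z‖) ^ M * ‖(R^[N] η) z‖ ≤ B) →
      ‖∫ z, u z * η z‖ ≤ K * B * ∫ z, ‖(w z : ℂ) * u z‖ := by
  induction N with
  | zero =>
    refine ⟨c⁻¹, by positivity, fun u hu _ η B hB => ?_⟩
    have hB' : ∀ z, ‖η z‖ ≤ c⁻¹ * B * w z := fun z => by
      rw [mul_assoc, inv_mul_eq_div, le_div_iff₀ hc]
      calc ‖η z‖ * c ≤ ‖η z‖ * ((1 + ‖z‖) ^ M * w z) := by gcongr; exact hw z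
        _ = ((1 + ‖z‖) ^ M * ‖η z‖) * w z := by ring
        _ ≤ _ := by have := (h.pos z).le; gcongr; exact hB z
    refine (norm_integral_le_integral_norm _).trans ?_
    rw [← integral_const_mul]
    refine integral_mono (h.integrable_mul_of_le hu η.continuous.aestronglyMeasurable hB').norm
      (hu.norm.const_mul _) fun z => ?_
    simp only [norm_mul, Complex.norm_real, Real.norm_of_nonneg (h.pos z).le]
    calc _ ≤ ‖u z‖ * (c⁻¹ * B * w z) := by gcongr; exact hB' z
      _ = _ := by ring
  | succ N ih =>
    obtain ⟨K, hK0, hK⟩ := ih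
    have hC : 0 ≤ C := by
      have h1 := (integral_nonneg fun y => (h.pos (0 + y)).le).trans (h.le 0)
      have h2 := h.pos 0
      by_contra! h3
      nlinarith
    refine ⟨K * C, by positivity, fun u hu hs η B hB => ?_⟩
    have h1 := hs (R η)
    rw [hR] at h1
    rw [h1]
    refine (hK _ (h.integrable_backAverage hu) (hs.backAverage h hc hw hP hu) (R η) B hB).trans ?_
    have hB0 : 0 ≤ B := le_trans (by positivity) (hB 0)
    calc _ ≤ K * B * (C * ∫ z, ‖(w z : ℂ) * u z‖) := by
          gcongr; exact h.integral_backAverage_le hu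
      _ = _ := by ring

end WeightKernel

section Multiplier

variable {V : Type*} [NormedAddCommGroup V] [InnerProductSpace ℝ V] [FiniteDimensional ℝ V]
  [MeasurableSpace V] [BorelSpace V]

open SchwartzMap

lemma fourierMultiplierCLM_eq_fourierInv {m : V → ℂ} (hm : m.HasTemperateGrowth) (φ : 𝓢(V, ℂ))
    (z : V) : fourierMultiplierCLM ℂ m φ z = 𝓕⁻ (fun ζ => m ζ * 𝓕 (φ : V → ℂ) ζ) z := by
  rw [fourierMultiplierCLM_apply, fourierInv_coe]
  refine congrFun (congrArg _ (funext fun ζ => ?_)) z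
  rw [smulLeftCLM_apply_apply hm, fourier_coe, smul_eq_mul]

lemma fourier_compSub (φ : V → ℂ) (a ζ : V) :
    𝓕 (fun x => φ (x - a)) ζ = (Real.fourierChar (-inner ℝ a ζ) : ℂ) * 𝓕 φ ζ := by
  rw [Real.fourier_eq, Real.fourier_eq, ← integral_const_mul,
    ← integral_add_right_eq_self _ a]
  congr 1 with x
  simp only [add_sub_cancel_right, Circle.smul_def, smul_eq_mul, inner_add_left, neg_add_rev,
    AddChar.map_add_eq_mul, Circle.coe_mul]
  ring

lemma fourierMultiplierCLM_compSubConstCLM {m : V → ℂ} (hm : m.HasTemperateGrowth) (φ : 𝓢(V, ℂ))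
    (a : V) : fourierMultiplierCLM ℂ m (φ.compSubConstCLM ℂ a) =
      (fourierMultiplierCLM ℂ m φ).compSubConstCLM ℂ a := by
  ext z
  rw [compSubConstCLM_apply, fourierMultiplierCLM_eq_fourierInv hm,
    fourierMultiplierCLM_eq_fourierInv hm, Real.fourierInv_eq, Real.fourierInv_eq]
  congr 1 with ζ
  have : (fun x => (φ.compSubConstCLM ℂ a) x) = fun x => φ (x - a) := rfl
  rw [show ⇑(φ.compSubConstCLM ℂ a) = fun x => φ (x - a) from rfl, fourier_compSub,
    inner_sub_right, sub_eq_add_neg, AddChar.map_add_eq_mul, real_inner_comm a ζ]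
  simp only [Circle.smul_def, smul_eq_mul, Circle.coe_mul]
  ring

lemma fourierMultiplierCLM_inv_rightInverse {m : V → ℂ} (hm : m.HasTemperateGrowth) {c : ℝ}
    (hc : 0 < c) (hmc : ∀ x, c ≤ ‖m x‖) (φ : 𝓢(V, ℂ)) :
    fourierMultiplierCLM ℂ m (fourierMultiplierCLM ℂ (fun x => (m x)⁻¹) φ) = φ := by
  rw [fourierMultiplierCLM_fourierMultiplierCLM_apply hm (hasTemperateGrowth_inv hm hc hmc)]
  have : m * (fun x => (m x)⁻¹) = fun _ => 1 := by
    ext x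
    have h0 : m x ≠ 0 := fun hx => by have := hmc x; rw [hx, norm_zero] at this; linarith
    simp [h0]
  rw [this, fourierMultiplierCLM_const]
  simp

lemma fourierMultiplierCLM_iterate {g : V → ℂ} (hg : g.HasTemperateGrowth) (N : ℕ)
    (φ : 𝓢(V, ℂ)) :
    (fourierMultiplierCLM ℂ g)^[N] φ = fourierMultiplierCLM ℂ (fun x => g x ^ N) φ := by
  induction N generalizing φ with
  | zero => simp
  | succ N ih =>
    rw [Function.iterate_succ_apply', ih,
      fourierMultiplierCLM_fourierMultiplierCLM_apply hg
        (g₂ := fun x => g x ^ N) (hg.pow N)]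
    congr 2
    ext x
    simp [pow_succ']

lemma fourier_comp_selfAdjoint (S : V ≃L[ℝ] V) (hS : ∀ x y, inner ℝ (S x) y = inner ℝ x (S y))
    (f : V → ℂ) (ζ : V) :
    𝓕 (fun x => f (S x)) ζ =
      ((|LinearMap.det (S : V →ₗ[ℝ] V)|⁻¹ : ℝ) : ℂ) * 𝓕 f (S.symm ζ) := by
  have hdet : LinearMap.det (S : V →ₗ[ℝ] V) ≠ 0 := (LinearEquiv.isUnit_det' S.toLinearEquiv).ne_zero
  have hmap := Measure.map_linearMap_addHaar_eq_smul_addHaar (volume : Measure V) hdet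
  rw [Real.fourier_eq, Real.fourier_eq]
  have h1 : (fun x => Real.fourierChar (-inner ℝ x ζ) • f (S x)) =
      fun x => (fun y => Real.fourierChar (-inner ℝ y (S.symm ζ)) • f y) (S x) := by
    ext x
    simp [hS]
  rw [h1]
  have h2 := S.toHomeomorph.toMeasurableEquiv.measurableEmbedding.integral_map (μ := volume)
    (fun y => Real.fourierChar (-inner ℝ y (S.symm ζ)) • f y)
  have h3 : Measure.map (⇑S.toHomeomorph.toMeasurableEquiv) (volume : Measure V) =
      ENNReal.ofReal |(LinearMap.det (S : V →ₗ[ℝ] V))⁻¹| • volume := hmap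
  rw [h3, integral_smul_measure, ENNReal.toReal_ofReal (abs_nonneg _)] at h2
  rw [abs_inv] at h2
  exact h2.symm

lemma lineDeriv_lineDeriv_eq (v v' : V) (φ : 𝓢(V, ℂ)) :
    ∂_{v} (∂_{v'} φ) = fourierMultiplierCLM ℂ
      (fun ζ => ((2 * Real.pi * Complex.I) * (inner ℝ ζ v : ℝ)) *
        ((2 * Real.pi * Complex.I) * (inner ℝ ζ v' : ℝ))) φ := by
  have h : ∀ (v : V) (φ : 𝓢(V, ℂ)), ∂_{v} φ = fourierMultiplierCLM ℂ
      (fun ζ => (2 * Real.pi * Complex.I) * (inner ℝ ζ v : ℝ)) φ := by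
    intro v φ
    rw [lineDeriv_eq_fourierMultiplierCLM, ← fourierMultiplierCLM_ofReal ℂ (by fun_prop)]
    rw [← smul_apply, ← fourierMultiplierCLM_smul (by fun_prop)]
    rfl
  rw [h, h, fourierMultiplierCLM_fourierMultiplierCLM_apply (by fun_prop) (by fun_prop)]
  rfl

lemma exists_resolvent_decay {m : V → ℂ} (hm : m.HasTemperateGrowth) {c δ : ℝ}
    (hc : 0 < c) (hδ : 0 < δ) (hmc : ∀ x, c * (1 + ‖x‖) ^ δ ≤ ‖m x‖) (M : ℕ) (v v' : V)
    (η : 𝓢(V, ℂ)) :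
    ∃ (N : ℕ) (C : ℝ), ∀ S : V ≃L[ℝ] V, (∀ x y, inner ℝ (S x) y = inner ℝ x (S y)) →
      ‖(S.symm : V →L[ℝ] V)‖ ≤ 1 → ∀ z, (1 + ‖z‖) ^ M *
        ‖((fourierMultiplierCLM ℂ (fun x => (m x)⁻¹))^[N]
          (∂_{v} (∂_{v'} (compCLMOfContinuousLinearEquiv ℂ S η)))) z‖ ≤
        C * |LinearMap.det (S : V →ₗ[ℝ] V)|⁻¹ := by
  have hmc' : ∀ x, c ≤ ‖m x‖ := fun x => le_trans (by
    have : (1 : ℝ) ≤ (1 + ‖x‖) ^ δ := Real.one_le_rpow (by linarith [norm_nonneg x]) hδ.le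
    nlinarith) (hmc x)
  have hg := hasTemperateGrowth_inv hm hc hmc'
  set g : V → ℂ := fun x => (m x)⁻¹ with hgdef
  have hgb : ∀ x, ‖g x‖ ≤ c⁻¹ * (1 + ‖x‖) ^ (-δ) := fun x => by
    rw [hgdef, norm_inv, Real.rpow_neg (by positivity), ← mul_inv]
    exact inv_anti₀ (by positivity) (hmc x)
  set q : V → ℂ := fun ζ => ((2 * Real.pi * Complex.I) * (inner ℝ ζ v : ℝ)) *
        ((2 * Real.pi * Complex.I) * (inner ℝ ζ v' : ℝ)) with hq
  have hqt : q.HasTemperateGrowth := by rw [hq]; fun_prop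
  obtain ⟨d, hd, hqb⟩ := DerivBound.of_hasTemperateGrowth hqt M
  obtain ⟨N, hN⟩ := DerivBound.pow_of_decay hg hδ hgb M (Module.finrank ℝ V + 1 + d)
  have hNb := hN N le_rfl
  have hgN : (fun x => g x ^ N).HasTemperateGrowth := hg.pow N
  have hF := DerivBound.smul hgN.1 hqt.1 hNb hqb
  rw [show -((Module.finrank ℝ V : ℝ) + 1 + d) + d = -(Module.finrank ℝ V + 1) by ring] at hF
  have hη : DerivBound M 0 (𝓕 (η : V → ℂ)) := by
    rw [← fourier_coe]
    have h1 := fun (k : ℕ) z => le_seminorm ℂ 0 k (𝓕 η) z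
    refine ⟨∑ k ∈ Finset.range (M + 1), SchwartzMap.seminorm ℂ 0 k (𝓕 η), fun k hk z => ?_⟩
    have h2 := h1 k z
    rw [pow_zero, one_mul] at h2
    rw [Real.rpow_zero, mul_one]
    exact h2.trans (Finset.single_le_sum (f := fun k => SchwartzMap.seminorm ℂ 0 k (𝓕 η))
      (fun i _ => apply_nonneg _ _) (by simpa [Nat.lt_succ_iff] using hk))
  have hηs : ContDiff ℝ ∞ (𝓕 (η : V → ℂ)) := by
    rw [← fourier_coe]; exact (𝓕 η).smooth'
  obtain ⟨C, hC⟩ := exists_fourierInv_decay (hgN.1.smul hqt.1) hF (by linarith) hηs hη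
  refine ⟨N, C, fun S hS hS1 z => ?_⟩
  rw [lineDeriv_lineDeriv_eq, fourierMultiplierCLM_iterate hg,
    fourierMultiplierCLM_fourierMultiplierCLM_apply hgN hqt,
    fourierMultiplierCLM_eq_fourierInv (hgN.mul hqt)]
  have h1 : (fun ζ => ((fun x => g x ^ N) * q) ζ *
      𝓕 (compCLMOfContinuousLinearEquiv ℂ S η : V → ℂ) ζ) =
      fun ζ => ((|LinearMap.det (S : V →ₗ[ℝ] V)|⁻¹ : ℝ) : ℂ) *
        ((g ζ ^ N • q ζ) * 𝓕 (η : V → ℂ) ((S.symm : V →L[ℝ] V) ζ)) := by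
    ext ζ
    rw [show (compCLMOfContinuousLinearEquiv ℂ S η : V → ℂ) = fun x => η (S x) from rfl,
      fourier_comp_selfAdjoint S hS]
    simp only [Pi.mul_apply, smul_eq_mul, ContinuousLinearEquiv.coe_coe]
    ring
  have h2 : ∀ (a : ℂ) (f : V → ℂ), 𝓕⁻ (fun ζ => a * f ζ) z = a * 𝓕⁻ f z := by
    intro a f
    rw [Real.fourierInv_eq, Real.fourierInv_eq, ← integral_const_mul]
    congr 1 with ζ
    simp only [Circle.smul_def, smul_eq_mul]
    ring
  rw [h1, h2, norm_mul, Complex.norm_real, norm_inv, norm_abs_eq_norm, Real.norm_eq_abs]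
  have h3 := hC S.symm hS1 z
  calc _ = ((1 + ‖z‖) ^ M * ‖𝓕⁻ (fun ζ => (g ζ ^ N • q ζ) *
        𝓕 (η : V → ℂ) ((S.symm : V →L[ℝ] V) ζ)) z‖) * |LinearMap.det (S : V →ₗ[ℝ] V)|⁻¹ := by ring
    _ ≤ _ := by gcongr; exact h3

/-- The basic a priori estimate: pairings of solutions with second derivatives of rescaled test
functions. -/
lemma exists_scaled_pairing_le {w : V → ℝ} {ν : Measure V} [IsFiniteMeasure ν] {C : ℝ}
    (h : WeightKernel w ν C) {c₀ : ℝ} (hc₀ : 0 < c₀) {M : ℕ}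
    (hw : ∀ z, c₀ ≤ (1 + ‖z‖) ^ M * w z)
    {m : V → ℂ} (hm : m.HasTemperateGrowth) {c δ : ℝ}
    (hc : 0 < c) (hδ : 0 < δ) (hmc : ∀ x, c * (1 + ‖x‖) ^ δ ≤ ‖m x‖) (v v' : V)
    (η : 𝓢(V, ℂ)) :
    ∃ K, ∀ S : V ≃L[ℝ] V, (∀ x y, inner ℝ (S x) y = inner ℝ x (S y)) →
      ‖(S.symm : V →L[ℝ] V)‖ ≤ 1 → ∀ u : V → ℂ, Integrable (fun z => (w z : ℂ) * u z) →
      IsAverageSol (fourierMultiplierCLM ℂ m) ν u →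
      ‖∫ z, u z * (∂_{v} (∂_{v'} (compCLMOfContinuousLinearEquiv ℂ S η))) z‖ ≤
        K * |LinearMap.det (S : V →ₗ[ℝ] V)|⁻¹ * ∫ z, ‖(w z : ℂ) * u z‖ := by
  have hmc' : ∀ x, c ≤ ‖m x‖ := fun x => le_trans (by
    have : (1 : ℝ) ≤ (1 + ‖x‖) ^ δ := Real.one_le_rpow (by linarith [norm_nonneg x]) hδ.le
    nlinarith) (hmc x)
  obtain ⟨N, B, hB⟩ := exists_resolvent_decay hm hc hδ hmc M v v' η
  obtain ⟨K, hK0, hK⟩ := IsAverageSol.exists_pairing_le h hc₀ hw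
    (P := fourierMultiplierCLM ℂ m) (fun φ a => fourierMultiplierCLM_compSubConstCLM hm φ a)
    (R := fourierMultiplierCLM ℂ (fun x => (m x)⁻¹))
    (fourierMultiplierCLM_inv_rightInverse hm hc hmc') N
  refine ⟨K * B, fun S hS hS1 u hu hs => ?_⟩
  have := hK u hu hs _ _ (hB S hS hS1)
  rwa [← mul_assoc] at this

end Multiplier

section TimeSymbol

lemma norm_one_sub_cexp_neg_le {z : ℂ} (hz : 0 ≤ z.re) :
    ‖1 - Complex.exp (-z)‖ ≤ 2 ∧ ‖1 - Complex.exp (-z)‖ ≤ ‖z‖ := by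
  have he : ∀ z : ℂ, 0 ≤ z.re → ‖Complex.exp (-z)‖ ≤ 1 := fun z hz => by
    rw [Complex.norm_exp]
    exact Real.exp_le_one_iff.2 (by simpa using hz)
  constructor
  · calc _ ≤ ‖(1 : ℂ)‖ + ‖Complex.exp (-z)‖ := norm_sub_le _ _
      _ ≤ 1 + 1 := by rw [norm_one]; gcongr; exact he z hz
      _ = 2 := by norm_num
  · have h := (convex_halfSpace_re_ge 0).norm_image_sub_le_of_norm_hasDerivWithin_le
      (f := fun z : ℂ => Complex.exp (-z)) (f' := fun z => -Complex.exp (-z)) (C := 1)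
      (fun x _ => by
        have := ((hasDerivAt_id x).neg.cexp).hasDerivWithinAt (s := {c : ℂ | 0 ≤ c.re})
        simpa using this)
      (fun x hx => by rw [norm_neg]; exact he x hx) (x := z) (y := 0) hz (by simp)
    simpa using h

variable {α : ℝ}

lemma integrableOn_rpow_mul_min (hα0 : 0 < α) (hα1 : α < 1) :
    IntegrableOn (fun σ : ℝ => σ ^ (-(1 + α)) * min 1 σ) (Ioi 0) := by
  rw [← Ioc_union_Ioi_eq_Ioi zero_le_one]
  refine IntegrableOn.union ?_ ?_
  · have h : IntegrableOn (fun σ : ℝ => σ ^ (-α)) (Ioc 0 1) :=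
      (intervalIntegrable_iff_integrableOn_Ioc_of_le zero_le_one).1
        (intervalIntegral.intervalIntegrable_rpow' (by linarith))
    refine h.congr_fun (fun σ hσ => ?_) measurableSet_Ioc
    simp only
    rw [min_eq_right hσ.2, ← Real.rpow_add_one hσ.1.ne']
    congr 1; ring
  · refine (integrableOn_Ioi_rpow_of_lt (a := -(1 + α)) (by linarith) zero_lt_one).congr_fun
      (fun σ hσ => ?_) measurableSet_Ioi
    simp only
    rw [min_eq_left (le_of_lt hσ), mul_one]

/-- The integrand of the time symbol. -/
noncomputable def timeSymbolIntegrand (α τ σ : ℝ) : ℂ :=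
  ((σ ^ (-(1 + α)) : ℝ) : ℂ) * (1 - Complex.exp (-((2 * Real.pi * σ : ℝ) * (1 - Complex.I * τ))))

/-- The symbol of the tempered Marchaud derivative. -/
noncomputable def timeSymbol (α τ : ℝ) : ℂ := ∫ σ in Ioi 0, timeSymbolIntegrand α τ σ

lemma norm_timeSymbolIntegrand_le {τ σ : ℝ} (hσ : 0 < σ) :
    ‖timeSymbolIntegrand α τ σ‖ ≤ (2 * Real.pi * (1 + |τ|)) * (σ ^ (-(1 + α)) * min 1 σ) := by
  have hσ' := Real.rpow_nonneg hσ.le (-(1 + α))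
  rw [timeSymbolIntegrand, norm_mul, Complex.norm_real, Real.norm_of_nonneg hσ']
  have h := norm_one_sub_cexp_neg_le (z := (2 * Real.pi * σ : ℝ) * (1 - Complex.I * τ)) (by
    simp; positivity)
  have h2 : ‖((2 * Real.pi * σ : ℝ) : ℂ) * (1 - Complex.I * τ)‖ ≤ 2 * Real.pi * σ * (1 + |τ|) := by
    rw [norm_mul, Complex.norm_real, Real.norm_of_nonneg (by positivity)]
    gcongr
    refine (norm_sub_le _ _).trans ?_
    simp
  have h3 : ‖1 - Complex.exp (-((2 * Real.pi * σ : ℝ) * (1 - Complex.I * τ)))‖ ≤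
      (2 * Real.pi * (1 + |τ|)) * min 1 σ := by
    rcases le_total 1 σ with h4 | h4
    · rw [min_eq_left h4, mul_one]
      refine h.1.trans ?_
      nlinarith [Real.pi_gt_three, abs_nonneg τ]
    · rw [min_eq_right h4]
      exact (h.2.trans h2).trans (le_of_eq (by ring))
  calc _ ≤ σ ^ (-(1 + α)) * ((2 * Real.pi * (1 + |τ|)) * min 1 σ) := by gcongr
    _ = _ := by ring

lemma measurable_timeSymbolIntegrand :
    Measurable (fun p : ℝ × ℝ => timeSymbolIntegrand α p.1 p.2) := by
  unfold timeSymbolIntegrand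
  fun_prop

lemma integrableOn_timeSymbolIntegrand (hα0 : 0 < α) (hα1 : α < 1) (τ : ℝ) :
    IntegrableOn (timeSymbolIntegrand α τ) (Ioi 0) := by
  refine Integrable.mono' ((integrableOn_rpow_mul_min hα0 hα1).const_mul (2 * Real.pi * (1 + |τ|)))
    (measurable_timeSymbolIntegrand.comp measurable_prodMk_left).aestronglyMeasurable ?_
  filter_upwards [ae_restrict_mem measurableSet_Ioi] with σ hσ
  exact norm_timeSymbolIntegrand_le hσ

lemma exists_integral_norm_timeSymbolIntegrand_le (hα0 : 0 < α) (hα1 : α < 1) :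
    ∃ K, ∀ τ, ∫ σ in Ioi 0, ‖timeSymbolIntegrand α τ σ‖ ≤ K * (1 + |τ|) := by
  refine ⟨2 * Real.pi * ∫ σ in Ioi 0, σ ^ (-(1 + α)) * min 1 σ, fun τ => ?_⟩
  have : ∫ σ in Ioi 0, ‖timeSymbolIntegrand α τ σ‖ ≤
      ∫ σ in Ioi 0, (2 * Real.pi * (1 + |τ|)) * (σ ^ (-(1 + α)) * min 1 σ) :=
    setIntegral_mono_on (integrableOn_timeSymbolIntegrand hα0 hα1 τ).norm
      ((integrableOn_rpow_mul_min hα0 hα1).const_mul _) measurableSet_Ioi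
      fun σ hσ => norm_timeSymbolIntegrand_le hσ
  rw [integral_const_mul] at this
  exact this.trans (le_of_eq (by ring))

lemma hasTemperateGrowth_fourier_of_moments {h : ℝ → ℂ}
    (hh : ∀ n : ℕ, Integrable (fun v => ‖v‖ ^ n * ‖h v‖)) (hm : AEStronglyMeasurable h) :
    (𝓕 h).HasTemperateGrowth := by
  refine ⟨Real.contDiff_fourier (N := ⊤) (fun n _ => hh n), fun n => ?_⟩
  refine ⟨0, ∫ v : ℝ, ‖((-2 * Real.pi * Complex.I * (v : ℂ)) ^ n • h v)‖, fun x => ?_⟩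
  rw [pow_zero, mul_one, norm_iteratedFDeriv_eq_norm_iteratedDeriv,
    Real.iteratedDeriv_fourier (N := ⊤) (fun n _ => ?_) le_top]
  · rw [Real.fourier_eq]
    refine (norm_integral_le_integral_norm _).trans (le_of_eq ?_)
    refine integral_congr_ae (Filter.Eventually.of_forall fun v => ?_)
    simp
  · refine (hh n).mono ((by fun_prop : Measurable fun x : ℝ => x ^ n).aestronglyMeasurable.smul hm) ?_
    filter_upwards with x
    simp

lemma hasTemperateGrowth_timeSymbol (hα0 : 0 < α) (hα1 : α < 1) :
    (timeSymbol α).HasTemperateGrowth := by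
  set h : ℝ → ℂ := (Ioi 0).indicator
    (fun σ => ((σ ^ (-α) * Real.exp (-(2 * Real.pi) * σ) : ℝ) : ℂ)) with hh
  have hmom : ∀ n : ℕ, IntegrableOn (fun σ : ℝ => σ ^ n * (σ ^ (-α) * Real.exp (-(2 * Real.pi) * σ)))
      (Ioi 0) := by
    intro n
    have := integrableOn_rpow_mul_exp_neg_mul_rpow (s := n - α) (p := 1) (b := 2 * Real.pi)
      (by have : (0 : ℝ) ≤ n := by positivity
          linarith) one_pos (by positivity)
    refine this.congr_fun (fun σ hσ => ?_) measurableSet_Ioi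
    simp only
    rw [Real.rpow_one, ← mul_assoc, sub_eq_add_neg, Real.rpow_add hσ, Real.rpow_natCast]
  have hm : Measurable h := by
    refine Measurable.indicator ?_ measurableSet_Ioi
    fun_prop
  have hmom' : ∀ n : ℕ, Integrable (fun v => ‖v‖ ^ n * ‖h v‖) := by
    intro n
    refine ((integrable_indicator_iff measurableSet_Ioi).2 (hmom n)).congr ?_
    filter_upwards with σ
    by_cases hσ : σ ∈ Ioi (0 : ℝ)
    · have h1 : (0 : ℝ) < σ := hσ
      simp only [hh, indicator_of_mem hσ, Complex.norm_real]
      rw [Real.norm_of_nonneg h1.le, Real.norm_of_nonneg (by positivity)]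
    · simp [hh, indicator_of_notMem hσ]
  have hder : ∀ τ, HasDerivAt (timeSymbol α) (-(2 * Real.pi * Complex.I) * 𝓕 h (-τ)) τ := by
    intro τ
    have hd := hasDerivAt_integral_of_dominated_loc_of_deriv_le
      (μ := volume.restrict (Ioi (0 : ℝ))) (F := timeSymbolIntegrand α)
      (x₀ := τ) (s := univ)
      (F' := fun τ σ => -(2 * Real.pi * Complex.I) * (((σ ^ (-α) : ℝ) : ℂ) *
        Complex.exp (-((2 * Real.pi * σ : ℝ) * (1 - Complex.I * τ)))))
      (bound := fun σ => (2 * Real.pi) * (σ ^ (-α) * Real.exp (-(2 * Real.pi) * σ))) Filter.univ_mem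
      (Filter.Eventually.of_forall fun x =>
        (measurable_timeSymbolIntegrand.comp measurable_prodMk_left).aestronglyMeasurable)
      (integrableOn_timeSymbolIntegrand hα0 hα1 τ)
      (by fun_prop) ?_ ?_ ?_
    · refine hd.2.congr_deriv ?_
      rw [integral_const_mul, Real.fourier_eq, ← integral_indicator measurableSet_Ioi]
      congr 1
      refine integral_congr_ae (Filter.Eventually.of_forall fun σ => ?_)
      by_cases hσ : σ ∈ Ioi (0 : ℝ)
      · simp only [hh, indicator_of_mem hσ, Circle.smul_def, smul_eq_mul, Real.fourierChar_apply]
        push_cast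
        rw [mul_left_comm, ← Complex.exp_add]
        congr 2
        simp
        ring
      · simp [hh, indicator_of_notMem hσ]
    · filter_upwards [ae_restrict_mem measurableSet_Ioi] with σ hσ x _
      have h1 : (0 : ℝ) < σ := hσ
      rw [norm_mul, norm_mul _ (Complex.exp _), Complex.norm_real, Complex.norm_exp,
        Real.norm_of_nonneg (by positivity)]
      simp [abs_of_pos Real.pi_pos]
    · have := (hmom 0).const_mul (2 * Real.pi)
      simpa using this
    · filter_upwards [ae_restrict_mem measurableSet_Ioi] with σ hσ x _
      have h1 : (0 : ℝ) < σ := hσ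
      have h2 : HasDerivAt (fun x : ℝ => -(((2 * Real.pi * σ : ℝ) : ℂ) * (1 - Complex.I * x)))
          (((2 * Real.pi * σ : ℝ) : ℂ) * Complex.I) x := by
        have := (((Complex.ofRealCLM.hasDerivAt (x := x)).const_mul Complex.I).const_sub 1).const_mul
          (((2 * Real.pi * σ : ℝ) : ℂ)) |>.neg
        exact this.congr_deriv (by simp)
      have h3 := (h2.cexp.const_sub 1).const_mul ((σ ^ (-(1 + α)) : ℝ) : ℂ)
      have h4 : σ ^ (-α) = σ ^ (-(1 + α)) * σ := by
        rw [← Real.rpow_add_one h1.ne']; congr 1; ring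
      refine h3.congr_deriv ?_
      rw [h4]
      push_cast
      ring
  have hfd : fderiv ℝ (timeSymbol α) = fun τ =>
      ContinuousLinearMap.toSpanSingleton ℝ (-(2 * Real.pi * Complex.I) * 𝓕 h (-τ)) :=
    funext fun τ => (hder τ).hasFDerivAt.fderiv
  obtain ⟨K, hK⟩ := exists_integral_norm_timeSymbolIntegrand_le hα0 hα1
  refine Function.HasTemperateGrowth.of_fderiv (k := 1) (C := K) ?_
    (fun τ => (hder τ).differentiableAt) (fun τ => ?_)
  · rw [hfd]
    have h1 := hasTemperateGrowth_fourier_of_moments hmom' hm.aestronglyMeasurable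
    have h2 : (fun τ : ℝ => 𝓕 h (-τ)).HasTemperateGrowth :=
      h1.comp (f := fun τ : ℝ => -τ) (by fun_prop)
    have h3 : (fun τ : ℝ => -(2 * Real.pi * Complex.I) * 𝓕 h (-τ)).HasTemperateGrowth :=
      (Function.HasTemperateGrowth.const _).mul h2
    exact ((ContinuousLinearMap.toSpanSingletonCLE (𝕜 := ℝ) (E := ℂ) :
      ℂ →L[ℝ] (ℝ →L[ℝ] ℂ)).hasTemperateGrowth).comp h3
  · rw [pow_one]
    exact (norm_integral_le_integral_norm _).trans (hK τ)

lemma timeSymbolIntegrand_re {τ σ : ℝ} :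
    (timeSymbolIntegrand α τ σ).re = σ ^ (-(1 + α)) *
      (1 - Real.exp (-(2 * Real.pi * σ)) * Real.cos (2 * Real.pi * σ * τ)) := by
  rw [timeSymbolIntegrand, Complex.re_ofReal_mul, Complex.sub_re, Complex.exp_re]
  simp

lemma exists_timeSymbol_re_ge (hα0 : 0 < α) (hα1 : α < 1) :
    ∃ c, 0 < c ∧ ∀ τ, c * (1 + |τ|) ^ α ≤ (timeSymbol α τ).re := by
  set k : ℝ := 1 - Real.exp (-(Real.pi / 2)) with hk
  have hk0 : 0 < k := by
    have : Real.exp (-(Real.pi / 2)) < 1 := Real.exp_lt_one_iff.2 (by linarith [Real.pi_pos])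
    linarith
  have hk1 : k ≤ 1 := by linarith [Real.exp_pos (-(Real.pi / 2))]
  refine ⟨k / 2, by positivity, fun τ => ?_⟩
  set T : ℝ := max |τ| 1 with hT
  have hT1 : 1 ≤ T := le_max_right _ _
  have hT0 : 0 < T := by linarith
  have hre : (timeSymbol α τ).re = ∫ σ in Ioi (0 : ℝ), (timeSymbolIntegrand α τ σ).re :=
    (integral_re (integrableOn_timeSymbolIntegrand hα0 hα1 τ)).symm
  have h_int : IntegrableOn (fun σ => (timeSymbolIntegrand α τ σ).re) (Ioi (0 : ℝ)) :=
    (integrableOn_timeSymbolIntegrand hα0 hα1 τ).re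
  have hpos : ∀ σ ∈ Ioi (0 : ℝ), 0 ≤ (timeSymbolIntegrand α τ σ).re := fun σ hσ => by
    have hσ : (0 : ℝ) < σ := hσ
    rw [timeSymbolIntegrand_re]
    refine mul_nonneg (by positivity) (sub_nonneg.2 ?_)
    have h1 : Real.exp (-(2 * Real.pi * σ)) ≤ 1 :=
      Real.exp_le_one_iff.2 (neg_nonpos.2 (by positivity))
    nlinarith [Real.cos_le_one (2 * Real.pi * σ * τ), Real.exp_pos (-(2 * Real.pi * σ))]
  have hsub : Icc (1 / (4 * T)) (1 / (2 * T)) ⊆ Ioi (0 : ℝ) := fun σ hσ =>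
    lt_of_lt_of_le (by positivity) hσ.1
  have hlow : ∀ σ ∈ Icc (1 / (4 * T)) (1 / (2 * T)),
      k * (2 * T) ^ (1 + α) ≤ (timeSymbolIntegrand α τ σ).re := by
    intro σ hσ
    have hσ0 : (0 : ℝ) < σ := hsub hσ
    obtain ⟨hσ1, hσ2⟩ := hσ
    rw [div_le_iff₀ (by positivity)] at hσ1
    rw [le_div_iff₀ (by positivity)] at hσ2
    rw [timeSymbolIntegrand_re, mul_comm k]
    have h1 : (2 * T) ^ (1 + α) ≤ σ ^ (-(1 + α)) := by
      rw [Real.rpow_neg hσ0.le, ← Real.inv_rpow hσ0.le]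
      refine Real.rpow_le_rpow (by positivity) ?_ (by linarith)
      rw [le_inv_comm₀ (by positivity) hσ0, inv_eq_one_div, le_div_iff₀ (by positivity)]
      linarith
    refine mul_le_mul h1 ?_ hk0.le (by positivity)
    rcases le_total 1 |τ| with h | h
    · have hTτ : T = |τ| := max_eq_left h
      have hcos : Real.cos (2 * Real.pi * σ * τ) ≤ 0 := by
        rw [← Real.cos_abs, abs_mul, abs_of_pos (by positivity : 0 < 2 * Real.pi * σ), ← hTτ]
        refine Real.cos_nonpos_of_pi_div_two_le_of_le ?_ ?_
        · nlinarith [Real.pi_pos]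
        · nlinarith [Real.pi_pos]
      nlinarith [Real.exp_pos (-(2 * Real.pi * σ))]
    · have hTτ : T = 1 := max_eq_right h
      rw [hTτ] at hσ1
      have h2 : Real.exp (-(2 * Real.pi * σ)) ≤ Real.exp (-(Real.pi / 2)) :=
        Real.exp_le_exp.2 (by nlinarith [Real.pi_pos])
      nlinarith [Real.cos_le_one (2 * Real.pi * σ * τ), Real.exp_pos (-(2 * Real.pi * σ))]
  have h1 : k * (2 * T) ^ (1 + α) * (1 / (4 * T)) ≤ (timeSymbol α τ).re := by
    rw [hre]
    refine le_trans ?_ (setIntegral_mono_set h_int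
      ((ae_restrict_iff' measurableSet_Ioi).2 (Filter.Eventually.of_forall hpos))
      hsub.eventuallyLE)
    refine le_trans (le_of_eq ?_) (setIntegral_mono_on (f := fun _ => k * (2 * T) ^ (1 + α))
      (integrableOn_const (by simp)) (h_int.mono_set hsub) measurableSet_Icc hlow)
    rw [setIntegral_const, smul_eq_mul, Measure.real, Real.volume_Icc, ENNReal.toReal_ofReal]
    · field_simp
      norm_num
    · rw [sub_nonneg]
      gcongr
      norm_num
  refine le_trans ?_ h1
  have h2 : (2 * T) ^ (1 + α) * (1 / (4 * T)) = (2 * T) ^ α / 2 := by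
    rw [add_comm, Real.rpow_add_one (by positivity)]
    field_simp
    norm_num
  rw [mul_assoc, h2, div_mul_eq_mul_div, mul_div_assoc]
  gcongr
  have := le_max_left |τ| 1
  rw [← hT] at this
  linarith

end TimeSymbol

section MultiplierKernel

variable {V : Type*} [NormedAddCommGroup V] [InnerProductSpace ℝ V] [FiniteDimensional ℝ V]
  [MeasurableSpace V] [BorelSpace V]

lemma integrable_one_add_norm_pow_mul_schwartz (φ : 𝓢(V, ℂ)) (k : ℕ) :
    Integrable (fun ζ => (1 + ‖ζ‖) ^ k * ‖φ ζ‖) := by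
  have h := φ.integrable_pow_mul volume k
  have h0 := φ.integrable_pow_mul volume 0
  refine ((h0.add h).const_mul (2 ^ k)).mono' (by fun_prop) ?_
  filter_upwards with ζ
  rw [Real.norm_of_nonneg (by positivity)]
  have h1 : (1 + ‖ζ‖) ^ k ≤ 2 ^ k * (1 + ‖ζ‖ ^ k) := by
    have := add_pow_le zero_le_one (norm_nonneg ζ) k
    rw [one_pow] at this
    refine this.trans ?_
    gcongr
    · norm_num
    · exact Nat.sub_le k 1
  calc (1 + ‖ζ‖) ^ k * ‖φ ζ‖ ≤ 2 ^ k * (1 + ‖ζ‖ ^ k) * ‖φ ζ‖ := by gcongr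
    _ = _ := by simp; ring

/-- If a symbol `m` is an average of symbols `G q`, then the corresponding multiplier is the
average of the corresponding operators. -/
lemma integral_fourierInv_kernel {Q : Type*} [MeasurableSpace Q] {μ : Measure Q} [SFinite μ]
    {G : Q → V → ℂ} (hG : Measurable (Function.uncurry G)) {K : ℝ} {k : ℕ}
    (hGi : ∀ ζ, Integrable (fun q => G q ζ) μ)
    (hGn : ∀ ζ, ∫ q, ‖G q ζ‖ ∂μ ≤ K * (1 + ‖ζ‖) ^ k)
    {m : V → ℂ} (hm : m.HasTemperateGrowth) (hGm : ∀ ζ, ∫ q, G q ζ ∂μ = m ζ)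
    (φ : 𝓢(V, ℂ)) (z : V) :
    Integrable (fun q => 𝓕⁻ (fun ζ => G q ζ * 𝓕 (φ : V → ℂ) ζ) z) μ ∧
      ∫ q, 𝓕⁻ (fun ζ => G q ζ * 𝓕 (φ : V → ℂ) ζ) z ∂μ =
        SchwartzMap.fourierMultiplierCLM ℂ m φ z := by
  rw [fourierMultiplierCLM_eq_fourierInv hm]
  rw [← SchwartzMap.fourier_coe]
  simp only [Real.fourierInv_eq, Circle.smul_def, smul_eq_mul]
  generalize 𝓕 φ = ψ
  set F : V → Q → ℂ := fun ζ q =>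
    (Real.fourierChar (inner ℝ ζ z) : ℂ) * (G q ζ * ψ ζ) with hF
  have hFm : Measurable (Function.uncurry F) := by
    have h1 : Measurable fun p : V × Q => G p.2 p.1 := hG.comp measurable_swap
    have h2 : Continuous fun p : V => (Real.fourierChar (inner ℝ p z) : ℂ) := by
      have := Real.continuous_fourierChar
      fun_prop
    have h3 : Continuous fun ζ => ψ ζ := ψ.continuous
    exact (h2.measurable.comp measurable_fst).mul (h1.mul (h3.measurable.comp measurable_fst))
  have hFn : ∀ ζ q, ‖F ζ q‖ = ‖G q ζ‖ * ‖ψ ζ‖ := fun ζ q => by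
    rw [hF, norm_mul, norm_mul, Circle.norm_coe, one_mul]
  have h_int : Integrable (Function.uncurry F) (volume.prod μ) := by
    rw [integrable_prod_iff hFm.aestronglyMeasurable]
    refine ⟨Filter.Eventually.of_forall fun ζ => ?_, ?_⟩
    · exact ((hGi ζ).mul_const (ψ ζ)).const_mul (Real.fourierChar (inner ℝ ζ z) : ℂ)
    · refine ((integrable_one_add_norm_pow_mul_schwartz ψ k).const_mul K).mono'
        hFm.aestronglyMeasurable.norm.integral_prod_right' ?_
      filter_upwards with ζ
      simp only [Function.uncurry_apply_pair, hFn]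
      rw [integral_mul_const, Real.norm_of_nonneg (by positivity), ← mul_assoc]
      gcongr
      exact hGn ζ
  refine ⟨h_int.integral_prod_right, ?_⟩
  rw [integral_integral_swap (f := fun q ζ => F ζ q) h_int.swap]
  refine integral_congr_ae (Filter.Eventually.of_forall fun ζ => ?_)
  simp only [hF]
  rw [integral_const_mul, integral_mul_const, hGm]

lemma fourierInv_char_mul_fourier (φ : 𝓢(V, ℂ)) (z v : V) :
    𝓕⁻ (fun ζ => (Real.fourierChar (inner ℝ ζ v) : ℂ) * 𝓕 (φ : V → ℂ) ζ) z = φ (z + v) := by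
  have h : φ (z + v) = 𝓕⁻ (𝓕 (φ : V → ℂ)) (z + v) := by
    rw [← SchwartzMap.fourier_coe, ← SchwartzMap.fourierInv_coe, FourierTransform.fourierInv_fourier_eq]
  rw [h, Real.fourierInv_eq, Real.fourierInv_eq]
  refine integral_congr_ae (Filter.Eventually.of_forall fun ζ => ?_)
  simp only [Circle.smul_def, smul_eq_mul, inner_add_right, AddChar.map_add_eq_mul, Circle.coe_mul]
  ring

end MultiplierKernel

section SpaceSymbol

variable {s : ℝ}

lemma integrableOn_rpow_mul_one_sub_exp (hs0 : 0 < s) (hs1 : s < 1) {l : ℝ} (hl : 0 < l) :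
    IntegrableOn (fun a : ℝ => a ^ (s - 1) * (1 - Real.exp (-(l / a)))) (Ioi 0) := by
  have hm : Measurable (fun a : ℝ => a ^ (s - 1) * (1 - Real.exp (-(l / a)))) := by fun_prop
  have hn : ∀ a : ℝ, 0 < a → ‖a ^ (s - 1) * (1 - Real.exp (-(l / a)))‖ ≤
      a ^ (s - 1) * min 1 (l / a) := fun a ha => by
    have h1 : Real.exp (-(l / a)) ≤ 1 := Real.exp_le_one_iff.2 (neg_nonpos.2 (by positivity))
    rw [Real.norm_of_nonneg (mul_nonneg (by positivity) (by linarith))]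
    gcongr
    refine le_min ?_ ?_
    · linarith [Real.exp_pos (-(l / a))]
    · linarith [Real.add_one_le_exp (-(l / a))]
  rw [← Ioc_union_Ioi_eq_Ioi zero_le_one]
  refine IntegrableOn.union ?_ ?_
  · have h : IntegrableOn (fun σ : ℝ => σ ^ (s - 1)) (Ioc 0 1) :=
      (intervalIntegrable_iff_integrableOn_Ioc_of_le zero_le_one).1
        (intervalIntegral.intervalIntegrable_rpow' (by linarith))
    refine Integrable.mono' h hm.aestronglyMeasurable ?_
    filter_upwards [ae_restrict_mem measurableSet_Ioc] with a ha
    have := ha.1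
    exact (hn a ha.1).trans (mul_le_of_le_one_right (by positivity) (min_le_left _ _))
  · have h : IntegrableOn (fun σ : ℝ => σ ^ (s - 2)) (Ioi 1) :=
      integrableOn_Ioi_rpow_of_lt (by linarith) one_pos
    refine Integrable.mono' (h.const_mul l) hm.aestronglyMeasurable ?_
    filter_upwards [ae_restrict_mem measurableSet_Ioi] with a ha
    have ha0 : 0 < a := lt_trans one_pos ha
    refine (hn a ha0).trans ?_
    have h2 : a ^ (s - 1) = a ^ (s - 2) * a := by
      rw [← Real.rpow_add_one ha0.ne']; congr 1; ring
    calc a ^ (s - 1) * min 1 (l / a) ≤ a ^ (s - 1) * (l / a) := by gcongr; exact min_le_right _ _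
      _ = l * a ^ (s - 2) := by rw [h2]; field_simp

/-- The constant `∫₀^∞ a^(s-1) (1 - e^(-1/a)) da`. -/
noncomputable def spaceConst (s : ℝ) : ℝ :=
  ∫ a in Ioi (0 : ℝ), a ^ (s - 1) * (1 - Real.exp (-(1 / a)))

lemma spaceConst_pos (hs0 : 0 < s) (hs1 : s < 1) : 0 < spaceConst s := by
  have h : ∀ a ∈ Ioi (0 : ℝ), 0 < a ^ (s - 1) * (1 - Real.exp (-(1 / a))) := fun a ha => by
    have ha : (0 : ℝ) < a := ha
    have : Real.exp (-(1 / a)) < 1 := Real.exp_lt_one_iff.2 (neg_neg_of_pos (by positivity))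
    exact mul_pos (by positivity) (by linarith)
  rw [spaceConst, setIntegral_pos_iff_support_of_nonneg_ae]
  · have h2 : Function.support (fun a : ℝ => a ^ (s - 1) * (1 - Real.exp (-(1 / a)))) ∩ Ioi 0
        = Ioi 0 := inter_eq_right.2 fun a ha => (h a ha).ne'
    rw [h2]; simp
  · filter_upwards [ae_restrict_mem measurableSet_Ioi] with a ha using (h a ha).le
  · exact integrableOn_rpow_mul_one_sub_exp hs0 hs1 one_pos

lemma integral_rpow_mul_one_sub_exp {l : ℝ} (hl : 0 < l) :
    ∫ a in Ioi (0 : ℝ), a ^ (s - 1) * (1 - Real.exp (-(l / a))) = l ^ s * spaceConst s := by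
  have h := integral_comp_mul_left_Ioi
    (fun a : ℝ => a ^ (s - 1) * (1 - Real.exp (-(l / a)))) 0 hl
  rw [mul_zero, smul_eq_mul, eq_inv_mul_iff_mul_eq₀ hl.ne'] at h
  rw [← h, spaceConst, ← integral_const_mul, ← integral_const_mul]
  refine setIntegral_congr_fun measurableSet_Ioi fun a ha => ?_
  have ha : (0 : ℝ) < a := ha
  have h1 : l / (l * a) = 1 / a := by field_simp
  have h2 : l ^ s = l ^ (s - 1) * l := by
    rw [← Real.rpow_add_one hl.ne']; congr 1; ring
  simp only [h1, h2]
  rw [Real.mul_rpow hl.le ha.le]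
  ring

variable {F : Type*} [NormedAddCommGroup F] [InnerProductSpace ℝ F] [FiniteDimensional ℝ F]
  [MeasurableSpace F] [BorelSpace F]

lemma integrable_rexp_neg_mul_sq_norm {a : ℝ} (ha : 0 < a) :
    Integrable (fun y : F => Real.exp (-(a * ‖y‖ ^ 2))) := by
  have := (GaussianFourier.integrable_cexp_neg_mul_sq_norm_add (V := F) (b := (a : ℂ))
    (by simpa using ha) 0 0).re
  refine this.congr (Filter.Eventually.of_forall fun y => ?_)
  have : (-(a : ℂ) * ‖y‖ ^ 2 + 0 * (inner ℝ (0 : F) y : ℝ)) = ((-(a * ‖y‖ ^ 2) : ℝ) : ℂ) := by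
    push_cast; ring
  simp only [this]
  exact Complex.exp_ofReal_re _

lemma integral_rexp_neg_mul_sq_norm_mul_cos {a : ℝ} (ha : 0 < a) (ξ : F) :
    ∫ y : F, Real.exp (-(a * ‖y‖ ^ 2)) * Real.cos (2 * Real.pi * inner ℝ ξ y) =
      (Real.pi / a) ^ (Module.finrank ℝ F / 2 : ℝ) * Real.exp (-(Real.pi ^ 2 * ‖ξ‖ ^ 2 / a)) := by
  have h1 := GaussianFourier.integral_cexp_neg_mul_sq_norm_add (V := F) (b := (a : ℂ))
    (by simpa using ha) (2 * Real.pi * Complex.I) ξ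
  have h2 := GaussianFourier.integrable_cexp_neg_mul_sq_norm_add (V := F) (b := (a : ℂ))
    (by simpa using ha) (2 * Real.pi * Complex.I) ξ
  have h3 := congrArg Complex.re h1
  rw [← Complex.reCLM_apply, ← Complex.reCLM.integral_comp_comm h2] at h3
  have h4 : ((Real.pi : ℂ) / a) ^ (Module.finrank ℝ F / 2 : ℂ) *
      Complex.exp ((2 * Real.pi * Complex.I) ^ 2 * ‖ξ‖ ^ 2 / (4 * a)) =
      (((Real.pi / a) ^ (Module.finrank ℝ F / 2 : ℝ) *
        Real.exp (-(Real.pi ^ 2 * ‖ξ‖ ^ 2 / a)) : ℝ) : ℂ) := by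
    rw [Complex.ofReal_mul, Complex.ofReal_cpow (by positivity)]
    push_cast
    congr 2
    rw [mul_pow, Complex.I_sq]
    field_simp
    ring
  rw [h4, Complex.ofReal_re] at h3
  rw [← h3]
  refine integral_congr_ae (Filter.Eventually.of_forall fun y => ?_)
  simp only [Complex.reCLM_apply, Complex.exp_re]
  have e1 : (-(a : ℂ) * ‖y‖ ^ 2 + 2 * Real.pi * Complex.I * (inner ℝ ξ y : ℝ)) =
    ((-(a * ‖y‖ ^ 2) : ℝ) : ℂ) + ((2 * Real.pi * inner ℝ ξ y : ℝ) : ℂ) * Complex.I := by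
      push_cast; ring
  simp only [e1, Complex.add_re, Complex.add_im, Complex.ofReal_re, Complex.ofReal_im,
    Complex.re_ofReal_mul, Complex.im_ofReal_mul, Complex.I_re, Complex.I_im, mul_zero, mul_one,
    add_zero, zero_add]

/-- The subordination integrand of the symbol `(1 + ‖ξ‖²)^s`. -/
noncomputable def spaceIntegrand (s : ℝ) (ξ : F) (p : ℝ × F) : ℝ :=
  p.1 ^ (Module.finrank ℝ F / 2 + s - 1) * Real.exp (-(p.1 * ‖p.2‖ ^ 2)) *
    (1 - Real.exp (-(Real.pi ^ 2 / p.1)) * Real.cos (2 * Real.pi * inner ℝ ξ p.2))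

/-- The parameter measure of the subordination formula. -/
noncomputable abbrev spaceMeasure (F : Type*) [NormedAddCommGroup F] [InnerProductSpace ℝ F]
    [FiniteDimensional ℝ F] [MeasurableSpace F] [BorelSpace F] : Measure (ℝ × F) :=
  (volume.restrict (Ioi 0)).prod volume

lemma spaceIntegrand_nonneg {ξ : F} {p : ℝ × F} (hp : 0 < p.1) : 0 ≤ spaceIntegrand s ξ p := by
  refine mul_nonneg (by positivity) ?_
  have h1 : Real.exp (-(Real.pi ^ 2 / p.1)) ≤ 1 :=
    Real.exp_le_one_iff.2 (neg_nonpos.2 (by positivity))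
  nlinarith [Real.cos_le_one (2 * Real.pi * inner ℝ ξ p.2), Real.exp_pos (-(Real.pi ^ 2 / p.1))]

lemma measurable_spaceIntegrand :
    Measurable fun p : F × (ℝ × F) => spaceIntegrand s p.1 p.2 := by
  unfold spaceIntegrand
  fun_prop

lemma integrable_spaceIntegrand_snd {ξ : F} {a : ℝ} (ha : 0 < a) :
    Integrable fun y : F => spaceIntegrand s ξ (a, y) := by
  unfold spaceIntegrand
  simp only
  refine ((integrable_rexp_neg_mul_sq_norm (F := F) ha).const_mul _).mul_bdd (c := 2)
    (by fun_prop) (Filter.Eventually.of_forall fun y => ?_)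
  have h1 : Real.exp (-(Real.pi ^ 2 / a)) ≤ 1 :=
    Real.exp_le_one_iff.2 (neg_nonpos.2 (by positivity))
  rw [Real.norm_eq_abs, abs_le]
  constructor <;>
  nlinarith [Real.cos_le_one (2 * Real.pi * inner ℝ ξ y), Real.exp_pos (-(Real.pi ^ 2 / a)),
    Real.neg_one_le_cos (2 * Real.pi * inner ℝ ξ y)]

lemma integral_spaceIntegrand_snd {ξ : F} {a : ℝ} (ha : 0 < a) :
    ∫ y : F, spaceIntegrand s ξ (a, y) = Real.pi ^ (Module.finrank ℝ F / 2 : ℝ) *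
      (a ^ (s - 1) * (1 - Real.exp (-(Real.pi ^ 2 * (1 + ‖ξ‖ ^ 2) / a)))) := by
  have h0 := integrable_rexp_neg_mul_sq_norm (F := F) ha
  have h1 : ∀ y : F, spaceIntegrand s ξ (a, y) = a ^ (Module.finrank ℝ F / 2 + s - 1) *
      (Real.exp (-(a * ‖y‖ ^ 2)) * Real.cos (2 * Real.pi * inner ℝ 0 y) -
        Real.exp (-(Real.pi ^ 2 / a)) *
          (Real.exp (-(a * ‖y‖ ^ 2)) * Real.cos (2 * Real.pi * inner ℝ ξ y))) := fun y => by
    simp only [spaceIntegrand, inner_zero_left, mul_zero, Real.cos_zero]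
    ring
  have h2 : ∀ ξ : F, Integrable fun y : F =>
      Real.exp (-(a * ‖y‖ ^ 2)) * Real.cos (2 * Real.pi * inner ℝ ξ y) := fun ξ =>
    h0.mul_bdd (c := 1) (by fun_prop) (Filter.Eventually.of_forall fun y => Real.abs_cos_le_one _)
  simp only [h1]
  rw [integral_const_mul, integral_sub (h2 0) ((h2 ξ).const_mul _), integral_const_mul,
    integral_rexp_neg_mul_sq_norm_mul_cos ha, integral_rexp_neg_mul_sq_norm_mul_cos ha]
  have h3 : Real.exp (-(Real.pi ^ 2 * (1 + ‖ξ‖ ^ 2) / a)) =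
      Real.exp (-(Real.pi ^ 2 / a)) * Real.exp (-(Real.pi ^ 2 * ‖ξ‖ ^ 2 / a)) := by
    rw [← Real.exp_add]; congr 1; field_simp; ring
  have h4 : a ^ (Module.finrank ℝ F / 2 + s - 1) =
      a ^ (Module.finrank ℝ F / 2 : ℝ) * a ^ (s - 1) := by
    rw [← Real.rpow_add ha]; congr 1; ring
  have h5 : a ^ (Module.finrank ℝ F / 2 : ℝ) ≠ 0 := by positivity
  rw [h3, h4, Real.div_rpow Real.pi_pos.le ha.le]
  field_simp
  simp

lemma integrable_spaceIntegrand (hs0 : 0 < s) (hs1 : s < 1) (ξ : F) :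
    Integrable (spaceIntegrand s ξ) (spaceMeasure F) := by
  have hm : Measurable (spaceIntegrand s ξ) :=
    measurable_spaceIntegrand.comp (measurable_const.prodMk measurable_id)
  rw [integrable_prod_iff hm.aestronglyMeasurable]
  have hmem := ae_restrict_mem (μ := volume) (measurableSet_Ioi (a := (0 : ℝ)))
  refine ⟨by filter_upwards [hmem] with a ha using integrable_spaceIntegrand_snd ha, ?_⟩
  refine ((integrableOn_rpow_mul_one_sub_exp hs0 hs1 (l := Real.pi ^ 2 * (1 + ‖ξ‖ ^ 2))
    (by positivity)).const_mul (Real.pi ^ (Module.finrank ℝ F / 2 : ℝ))).congr ?_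
  filter_upwards [hmem] with a ha
  rw [← integral_spaceIntegrand_snd ha]
  exact integral_congr_ae (Filter.Eventually.of_forall fun y =>
    (Real.norm_of_nonneg (spaceIntegrand_nonneg (p := (a, y)) ha)).symm)

/-- The constant in front of the symbol `(1 + ‖ξ‖²)^s`. -/
noncomputable def symbolConst (F : Type*) [NormedAddCommGroup F] [InnerProductSpace ℝ F]
    (s : ℝ) : ℝ :=
  Real.pi ^ (Module.finrank ℝ F / 2 : ℝ) * ((Real.pi ^ 2) ^ s * spaceConst s)

lemma symbolConst_pos (hs0 : 0 < s) (hs1 : s < 1) : 0 < symbolConst F s := by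
  have := spaceConst_pos hs0 hs1
  unfold symbolConst
  positivity

lemma integral_spaceIntegrand (hs0 : 0 < s) (hs1 : s < 1) (ξ : F) :
    ∫ p, spaceIntegrand s ξ p ∂(spaceMeasure F) = symbolConst F s * (1 + ‖ξ‖ ^ 2) ^ s := by
  rw [integral_prod _ (integrable_spaceIntegrand hs0 hs1 ξ)]
  rw [setIntegral_congr_fun measurableSet_Ioi fun a ha => integral_spaceIntegrand_snd ha,
    integral_const_mul, integral_rpow_mul_one_sub_exp (by positivity),
    Real.mul_rpow (by positivity) (by positivity), symbolConst]
  ring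

/-- The integrable part of the kernel `‖y‖^(-n-2s)`. -/
noncomputable def spaceKernel (s : ℝ) (y : F) : ℝ :=
  ∫ a in Ioi (0 : ℝ), spaceIntegrand s 0 (a, y)

lemma spaceKernel_nonneg (y : F) : 0 ≤ spaceKernel s y :=
  setIntegral_nonneg measurableSet_Ioi fun _ ha => spaceIntegrand_nonneg ha

lemma spaceKernel_neg (y : F) : spaceKernel s (-y) = spaceKernel s y := by
  simp [spaceKernel, spaceIntegrand]

lemma integrable_spaceKernel (hs0 : 0 < s) (hs1 : s < 1) :
    Integrable (spaceKernel s : F → ℝ) :=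
  (integrable_spaceIntegrand hs0 hs1 0).integral_prod_right

lemma integrableOn_rpow_mul_exp_neg_mul {p r : ℝ} (hp : 0 < p) (hr : 0 < r) :
    IntegrableOn (fun a : ℝ => a ^ (p - 1) * Real.exp (-(r * a))) (Ioi 0) := by
  have h : (∫ a in Ioi (0 : ℝ), a ^ (p - 1) * Real.exp (-(r * a))) ≠ 0 := by
    rw [Real.integral_rpow_mul_exp_neg_mul_Ioi hp hr]
    have := Real.Gamma_pos_of_pos hp
    positivity
  exact not_imp_comm.1 integral_undef h

lemma inv_norm_sq_rpow {y : F} (p : ℝ) :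
    (1 / ‖y‖ ^ 2) ^ (p / 2) = ‖y‖ ^ (-p) := by
  rw [Real.rpow_neg (norm_nonneg y), one_div, Real.inv_rpow (by positivity),
    ← Real.rpow_natCast ‖y‖ 2, ← Real.rpow_mul (norm_nonneg y)]
  congr 2
  push_cast
  ring

lemma integrableOn_spaceDensity (hs0 : 0 < s) {y : F} (hy : y ≠ 0) :
    IntegrableOn (fun a : ℝ => a ^ (Module.finrank ℝ F / 2 + s - 1) *
      Real.exp (-(a * ‖y‖ ^ 2))) (Ioi 0) := by
  have h := integrableOn_rpow_mul_exp_neg_mul (p := Module.finrank ℝ F / 2 + s) (by positivity)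
    (r := ‖y‖ ^ 2) (by positivity)
  simpa only [mul_comm (‖y‖ ^ 2)] using h

lemma integral_spaceDensity (hs0 : 0 < s) {y : F} (hy : y ≠ 0) :
    ∫ a in Ioi (0 : ℝ), a ^ (Module.finrank ℝ F / 2 + s - 1) * Real.exp (-(a * ‖y‖ ^ 2)) =
      Real.Gamma (Module.finrank ℝ F / 2 + s) * ‖y‖ ^ (-(Module.finrank ℝ F + 2 * s)) := by
  have h := Real.integral_rpow_mul_exp_neg_mul_Ioi (a := Module.finrank ℝ F / 2 + s)
    (by positivity) (r := ‖y‖ ^ 2) (by positivity)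
  simp only [mul_comm (‖y‖ ^ 2)] at h
  rw [h, mul_comm, ← inv_norm_sq_rpow]
  congr 2
  ring

lemma integrableOn_spaceIntegrand_fst (hs0 : 0 < s) {y : F} (hy : y ≠ 0) :
    IntegrableOn (fun a => spaceIntegrand s 0 (a, y)) (Ioi 0) := by
  refine (integrableOn_spaceDensity hs0 hy).mono' ?_ ?_
  · exact (measurable_spaceIntegrand.comp
      (measurable_const.prodMk (measurable_id.prodMk measurable_const))).aestronglyMeasurable
  · filter_upwards [ae_restrict_mem measurableSet_Ioi] with a ha
    have ha : (0 : ℝ) < a := ha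
    rw [Real.norm_of_nonneg (spaceIntegrand_nonneg ha)]
    refine mul_le_of_le_one_right (by positivity) ?_
    simp [Real.exp_nonneg]

lemma spaceKernel_le (hs0 : 0 < s) {y : F} (hy : y ≠ 0) :
    spaceKernel s y ≤ Real.Gamma (Module.finrank ℝ F / 2 + s) *
      ‖y‖ ^ (-(Module.finrank ℝ F + 2 * s)) := by
  rw [← integral_spaceDensity hs0 hy]
  refine setIntegral_mono_on (integrableOn_spaceIntegrand_fst hs0 hy)
    (integrableOn_spaceDensity hs0 hy) measurableSet_Ioi fun a ha => ?_
  have ha : (0 : ℝ) < a := ha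
  refine mul_le_of_le_one_right (by positivity) ?_
  simp [Real.exp_nonneg]

end SpaceSymbol

section Representation

variable {V : Type*} [NormedAddCommGroup V] [InnerProductSpace ℝ V] [FiniteDimensional ℝ V]
  [MeasurableSpace V] [BorelSpace V]

lemma integrable_fourier_mul (φ : 𝓢(V, ℂ)) (z v : V) :
    Integrable fun ζ => (Real.fourierChar (inner ℝ ζ z) : ℂ) *
      ((Real.fourierChar (inner ℝ ζ v) : ℂ) * 𝓕 (φ : V → ℂ) ζ) := by
  rw [← SchwartzMap.fourier_coe]
  generalize 𝓕 φ = ψ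
  have h2 : ∀ z : V, Continuous fun p : V => (Real.fourierChar (inner ℝ p z) : ℂ) := fun z => by
    have := Real.continuous_fourierChar
    fun_prop
  refine (ψ.integrable (μ := volume)).norm.mono'
    (((h2 z).mul ((h2 v).mul ψ.continuous)).aestronglyMeasurable) ?_
  filter_upwards with ζ
  rw [norm_mul, norm_mul, Circle.norm_coe, Circle.norm_coe, one_mul, one_mul]

lemma fourierInv_sub_char_mul (φ : 𝓢(V, ℂ)) (z v₁ v₂ : V) (c₀ c₁ c₂ : ℂ) :
    𝓕⁻ (fun ζ => (c₀ - c₁ * (Real.fourierChar (inner ℝ ζ v₁) : ℂ) -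
      c₂ * (Real.fourierChar (inner ℝ ζ v₂) : ℂ)) * 𝓕 (φ : V → ℂ) ζ) z =
      c₀ * φ z - c₁ * φ (z + v₁) - c₂ * φ (z + v₂) := by
  have h0 : φ z = φ (z + 0) := by rw [add_zero]
  rw [h0, ← fourierInv_char_mul_fourier φ z 0, ← fourierInv_char_mul_fourier φ z v₁,
    ← fourierInv_char_mul_fourier φ z v₂]
  simp only [Real.fourierInv_eq, Circle.smul_def, smul_eq_mul]
  have i0 := integrable_fourier_mul φ z 0
  have i1 := integrable_fourier_mul φ z v₁
  have i2 := integrable_fourier_mul φ z v₂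
  have i3 : Integrable fun ζ => c₀ * ((Real.fourierChar (inner ℝ ζ z) : ℂ) *
      ((Real.fourierChar (inner ℝ ζ 0) : ℂ) * 𝓕 (φ : V → ℂ) ζ)) -
      c₁ * ((Real.fourierChar (inner ℝ ζ z) : ℂ) *
      ((Real.fourierChar (inner ℝ ζ v₁) : ℂ) * 𝓕 (φ : V → ℂ) ζ)) :=
    (i0.const_mul c₀).sub (i1.const_mul c₁)
  rw [← integral_const_mul, ← integral_const_mul, ← integral_const_mul,
    ← integral_sub (i0.const_mul _) (i1.const_mul _),
    ← integral_sub i3 (i2.const_mul _)]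
  refine integral_congr_ae (Filter.Eventually.of_forall fun ζ => ?_)
  simp only [inner_zero_right, AddChar.map_zero_eq_one, Circle.coe_one]
  ring

/-- Decomposition of the one-sided fractional derivative in a direction `e` into a Fourier
multiplier and an average. -/
lemma time_representation {α : ℝ} (hα0 : 0 < α) (hα1 : α < 1) (e : V) (φ : 𝓢(V, ℂ)) (z : V) :
    ∫ σ in Ioi (0 : ℝ), (σ ^ (-(1 + α)) : ℝ) * (φ z - φ (z + σ • e)) =
      SchwartzMap.fourierMultiplierCLM ℂ (fun ζ => timeSymbol α (inner ℝ ζ e)) φ z -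
      ∫ σ in Ioi (0 : ℝ), ((σ ^ (-(1 + α)) * (1 - Real.exp (-(2 * Real.pi * σ))) : ℝ) : ℂ) *
        φ (z + σ • e) := by
  obtain ⟨K, hK⟩ := exists_integral_norm_timeSymbolIntegrand_le hα0 hα1
  have hK0 : 0 ≤ K := by
    have := hK 0
    simp only [abs_zero, add_zero, mul_one] at this
    exact le_trans (by positivity) this
  have hm : (fun ζ : V => timeSymbol α (inner ℝ ζ e)).HasTemperateGrowth :=
    (hasTemperateGrowth_timeSymbol hα0 hα1).comp (f := fun ζ : V => inner ℝ ζ e) (by fun_prop)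
  have hmeas : Measurable (Function.uncurry fun (σ : ℝ) (ζ : V) =>
      timeSymbolIntegrand α (inner ℝ ζ e) σ) :=
    (measurable_timeSymbolIntegrand (α := α)).comp
      (by fun_prop : Measurable fun p : ℝ × V => ((inner ℝ p.2 e : ℝ), p.1))
  obtain ⟨h1, h2⟩ := integral_fourierInv_kernel (μ := volume.restrict (Ioi (0 : ℝ)))
    (G := fun σ ζ => timeSymbolIntegrand α (inner ℝ ζ e) σ) hmeas (K := K * (1 + ‖e‖)) (k := 1)
    (fun ζ => integrableOn_timeSymbolIntegrand hα0 hα1 _)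
    (fun ζ => (hK _).trans (by
      rw [mul_assoc, pow_one]
      gcongr
      have := abs_real_inner_le_norm ζ e
      nlinarith [norm_nonneg ζ, norm_nonneg e])) hm (fun ζ => rfl) φ z
  have h3 : ∀ σ : ℝ, 𝓕⁻ (fun ζ => timeSymbolIntegrand α (inner ℝ ζ e) σ * 𝓕 (φ : V → ℂ) ζ) z =
      ((σ ^ (-(1 + α)) : ℝ) : ℂ) * φ z -
      ((σ ^ (-(1 + α)) * Real.exp (-(2 * Real.pi * σ)) : ℝ) : ℂ) * φ (z + σ • e) := by
    intro σ
    have := fourierInv_sub_char_mul φ z (σ • e) 0 ((σ ^ (-(1 + α)) : ℝ) : ℂ)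
      ((σ ^ (-(1 + α)) * Real.exp (-(2 * Real.pi * σ)) : ℝ) : ℂ) 0
    rw [zero_mul, sub_zero] at this
    rw [← this]
    refine congrArg (fun f : V → ℂ => 𝓕⁻ f z) (funext fun ζ => congrArg (· * 𝓕 (φ : V → ℂ) ζ) ?_)
    simp only [zero_mul, sub_zero, timeSymbolIntegrand, Real.fourierChar_apply, inner_smul_right]
    push_cast
    rw [mul_assoc (((σ ^ (-(1 + α)) : ℝ) : ℂ)), ← Complex.exp_add, mul_sub, mul_one]
    congr 3
    ring
  simp only [h3] at h1 h2
  rw [← h2]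
  have h4 : IntegrableOn (fun σ : ℝ => ((σ ^ (-(1 + α)) *
      (1 - Real.exp (-(2 * Real.pi * σ))) : ℝ) : ℂ) * φ (z + σ • e)) (Ioi 0) := by
    have h5 := (integrableOn_timeSymbolIntegrand hα0 hα1 0).re
    simp only [RCLike.re_eq_complex_re, timeSymbolIntegrand_re, mul_zero, Real.cos_zero,
      mul_one] at h5
    obtain ⟨B, hB⟩ : ∃ B, ∀ z, ‖φ z‖ ≤ B := by
      obtain ⟨C, hC⟩ := φ.decay 0 0
      exact ⟨C, fun z => by simpa using hC.2 z⟩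
    exact (h5.ofReal (𝕜 := ℂ)).mul_bdd (c := B)
      (by have := φ.continuous; exact (by fun_prop : Continuous fun σ : ℝ =>
            φ (z + σ • e)).aestronglyMeasurable)
      (Filter.Eventually.of_forall fun σ => hB _)
  rw [← integral_sub h1 h4]
  refine integral_congr_ae (Filter.Eventually.of_forall fun σ => ?_)
  push_cast
  ring

variable {F : Type*} [NormedAddCommGroup F] [InnerProductSpace ℝ F] [FiniteDimensional ℝ F]
  [MeasurableSpace F] [BorelSpace F]

/-- Decomposition of the fractional Laplacian in the directions of `J` into a Fourier
multiplier and an average. -/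
lemma space_representation {s : ℝ} (hs0 : 0 < s) (hs1 : s < 1) [Nontrivial F]
    (J : F →L[ℝ] V) (p : V →L[ℝ] F)
    (hJ : ∀ ζ y, inner ℝ ζ (J y) = inner ℝ (p ζ) y) (φ : 𝓢(V, ℂ)) (z : V) :
    Real.Gamma (Module.finrank ℝ F / 2 + s) / 2 *
      ∫ y : F, ((‖y‖ ^ (-(Module.finrank ℝ F + 2 * s)) : ℝ) : ℂ) *
        (2 * φ z - φ (z + J y) - φ (z - J y)) =
      SchwartzMap.fourierMultiplierCLM ℂ
        (fun ζ => ((symbolConst F s * (1 + ‖p ζ‖ ^ 2) ^ s : ℝ) : ℂ)) φ z -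
      ∫ y : F, (spaceKernel s y : ℂ) * φ (z + J y) := by
  have hm0 : (fun ζ : F => ((symbolConst F s * (1 + ‖ζ‖ ^ 2) ^ s : ℝ) : ℂ)).HasTemperateGrowth := by
    have h1 : (fun ζ : F => (1 + ‖ζ‖ ^ 2) ^ s).HasTemperateGrowth := by
      exact Function.hasTemperateGrowth_one_add_norm_sq_rpow F s
    exact (Complex.ofRealCLM.hasTemperateGrowth).comp
      ((Function.HasTemperateGrowth.const (symbolConst F s)).mul h1)
  have hm : (fun ζ : V =>
      ((symbolConst F s * (1 + ‖p ζ‖ ^ 2) ^ s : ℝ) : ℂ)).HasTemperateGrowth :=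
    hm0.comp (f := fun ζ : V => p ζ) p.hasTemperateGrowth
  have hmeas : Measurable (Function.uncurry fun (q : ℝ × F) (ζ : V) =>
      (spaceIntegrand s (p ζ) q : ℂ)) := by
    refine Complex.measurable_ofReal.comp (measurable_spaceIntegrand.comp
      (by fun_prop : Measurable fun r : (ℝ × F) × V => (p r.2, r.1)))
  have hmem : ∀ᵐ q : ℝ × F ∂(spaceMeasure F), 0 < q.1 := by
    have := Measure.quasiMeasurePreserving_fst (μ := volume.restrict (Ioi (0 : ℝ)))
      (ν := (volume : Measure F)) |>.ae (ae_restrict_mem measurableSet_Ioi)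
    exact this
  obtain ⟨h1, h2⟩ := integral_fourierInv_kernel (μ := spaceMeasure F)
    (G := fun q ζ => (spaceIntegrand s (p ζ) q : ℂ)) hmeas
    (K := symbolConst F s * (1 + ‖p‖ ) ^ 2) (k := 2)
    (fun ζ => (integrable_spaceIntegrand hs0 hs1 (p ζ)).ofReal)
    (fun ζ => by
      have : ∫ q, ‖(spaceIntegrand s (p ζ) q : ℂ)‖ ∂(spaceMeasure F) =
          ∫ q, spaceIntegrand s (p ζ) q ∂(spaceMeasure F) := by
        refine integral_congr_ae ?_
        filter_upwards [hmem] with q hq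
        rw [Complex.norm_real, Real.norm_of_nonneg (spaceIntegrand_nonneg hq)]
      rw [this, integral_spaceIntegrand hs0 hs1, mul_assoc]
      have := symbolConst_pos (F := F) hs0 hs1
      gcongr
      calc (1 + ‖p ζ‖ ^ 2) ^ s ≤ (1 + ‖p ζ‖ ^ 2) ^ (1 : ℝ) :=
            Real.rpow_le_rpow_of_exponent_le (by nlinarith [norm_nonneg (p ζ)]) hs1.le
        _ = 1 + ‖p ζ‖ ^ 2 := Real.rpow_one _
        _ ≤ (1 + ‖p ζ‖) ^ 2 := by nlinarith [norm_nonneg (p ζ)]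
        _ ≤ ((1 + ‖p‖) * (1 + ‖ζ‖)) ^ 2 := by
          gcongr
          nlinarith [p.le_opNorm ζ, norm_nonneg ζ, norm_nonneg p]
        _ = _ := by ring)
    hm (fun ζ => by rw [integral_complex_ofReal, integral_spaceIntegrand hs0 hs1]) φ z
  set d : ℝ × F → ℝ := fun q => q.1 ^ (Module.finrank ℝ F / 2 + s - 1) *
    Real.exp (-(q.1 * ‖q.2‖ ^ 2)) with hd
  have h3 : ∀ q : ℝ × F, 𝓕⁻ (fun ζ => (spaceIntegrand s (p ζ) q : ℂ) * 𝓕 (φ : V → ℂ) ζ) z =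
      (d q : ℂ) / 2 * (2 * φ z - φ (z + J q.2) - φ (z - J q.2)) +
      (spaceIntegrand s 0 q : ℂ) * ((φ (z + J q.2) + φ (z - J q.2)) / 2) := by
    intro q
    set r : ℂ := (d q : ℂ) * (Real.exp (-(Real.pi ^ 2 / q.1)) : ℂ) / 2 with hr
    have := fourierInv_sub_char_mul φ z (J q.2) (-J q.2) (d q : ℂ) r r
    have h4 : (spaceIntegrand s 0 q : ℂ) = d q - 2 * r := by
      simp only [spaceIntegrand, inner_zero_left, mul_zero, Real.cos_zero, mul_one, hr, hd]
      push_cast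
      ring
    rw [h4]
    refine Eq.trans ?_ (this.trans (by rw [← sub_eq_add_neg]; ring))
    refine congrArg (fun f : V → ℂ => 𝓕⁻ f z) (funext fun ζ => congrArg (· * 𝓕 (φ : V → ℂ) ζ) ?_)
    simp only [spaceIntegrand, hr, hd, inner_neg_right, hJ, Real.fourierChar_apply]
    push_cast
    rw [Complex.cos]
    have e1 : (2 : ℂ) * Real.pi * -(inner ℝ (p ζ) q.2 : ℝ) * Complex.I =
      -(2 * Real.pi * (inner ℝ (p ζ) q.2 : ℝ)) * Complex.I := by ring
    rw [e1]
    ring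
  simp only [h3] at h1 h2
  rw [← h2, integral_prod_symm _ h1]
  have hφc := φ.continuous
  obtain ⟨B, hB⟩ : ∃ B, ∀ z, ‖φ z‖ ≤ B := by
    obtain ⟨C, hC⟩ := φ.decay 0 0
    exact ⟨C, fun z => by simpa using hC.2 z⟩
  have hk := integrable_spaceKernel (F := F) hs0 hs1
  have hk1 : Integrable fun y : F => (spaceKernel s y : ℂ) * φ (z + J y) :=
    (hk.ofReal (𝕜 := ℂ)).mul_bdd (c := B) (by fun_prop) (Filter.Eventually.of_forall fun y => hB _)
  have hk2 : Integrable fun y : F => (spaceKernel s y : ℂ) * φ (z - J y) :=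
    (hk.ofReal (𝕜 := ℂ)).mul_bdd (c := B) (by fun_prop) (Filter.Eventually.of_forall fun y => hB _)
  have hk3 : ∫ y : F, (spaceKernel s y : ℂ) * φ (z - J y) =
      ∫ y : F, (spaceKernel s y : ℂ) * φ (z + J y) := by
    rw [← integral_neg_eq_self]
    simp [spaceKernel_neg]
  have h5 : ∀ᵐ y : F, ∫ a in Ioi (0 : ℝ),
      ((d (a, y) : ℂ) / 2 * (2 * φ z - φ (z + J y) - φ (z - J y)) +
      (spaceIntegrand s 0 (a, y) : ℂ) * ((φ (z + J y) + φ (z - J y)) / 2)) =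
      (Real.Gamma (Module.finrank ℝ F / 2 + s) / 2 : ℂ) *
        (((‖y‖ ^ (-(Module.finrank ℝ F + 2 * s)) : ℝ) : ℂ) *
        (2 * φ z - φ (z + J y) - φ (z - J y))) +
      (1 / 2 : ℂ) * ((spaceKernel s y : ℂ) * φ (z + J y) + (spaceKernel s y : ℂ) * φ (z - J y)) := by
    filter_upwards [Measure.ae_ne volume (0 : F)] with y hy
    have i1 : IntegrableOn (fun a => (d (a, y) : ℂ)) (Ioi 0) :=
      (integrableOn_spaceDensity hs0 hy).ofReal
    have i2 : IntegrableOn (fun a => (spaceIntegrand s 0 (a, y) : ℂ)) (Ioi 0) :=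
      (integrableOn_spaceIntegrand_fst hs0 hy).ofReal
    have e1 : ∫ a in Ioi (0 : ℝ), d (a, y) = _ := integral_spaceDensity hs0 hy
    rw [integral_add ((i1.div_const 2).mul_const _) (i2.mul_const _), integral_mul_const,
      integral_mul_const, integral_div, integral_complex_ofReal, integral_complex_ofReal, e1, spaceKernel]
    push_cast
    ring
  have h6 := h1.integral_prod_right
  have h7 : Integrable fun y : F => (Real.Gamma (Module.finrank ℝ F / 2 + s) / 2 : ℂ) *
        (((‖y‖ ^ (-(Module.finrank ℝ F + 2 * s)) : ℝ) : ℂ) *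
        (2 * φ z - φ (z + J y) - φ (z - J y))) := by
    refine ((h6.congr h5).sub ((hk1.add hk2).const_mul (1 / 2))).congr ?_
    filter_upwards with y
    simp
  have hk4 : Integrable fun y : F => (1 / 2 : ℂ) *
      ((spaceKernel s y : ℂ) * φ (z + J y) + (spaceKernel s y : ℂ) * φ (z - J y)) :=
    (hk1.add hk2).const_mul _
  rw [integral_congr_ae h5, integral_add h7 hk4, integral_const_mul,
    integral_const_mul, integral_add hk1 hk2, hk3]
  ring

end Representation

section PolynomialWeight

variable {F : Type*} [NormedAddCommGroup F]

lemma rpow_neg_mul_kernel_le {p B : ℝ} (hp : 0 < p) (hB : 0 ≤ B) {k : F → ℝ}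
    (hk0 : ∀ y, 0 ≤ k y) (hk : ∀ y, y ≠ 0 → k y ≤ B * ‖y‖ ^ (-p)) (x y : F) :
    (1 + ‖x + y‖) ^ (-p) * k y ≤
      ((2 ^ p + B * 4 ^ p) * (1 + ‖x‖) ^ (-p)) * (k y + (1 + ‖x + y‖) ^ (-p)) := by
  have hx := norm_nonneg x
  have hxy := norm_nonneg (x + y)
  have hX : 0 < (1 + ‖x‖) ^ (-p) := by positivity
  have hXY : 0 < (1 + ‖x + y‖) ^ (-p) := by positivity
  have hscale : ∀ {c r : ℝ}, 0 < c → (1 + ‖x‖) / c ≤ r →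
      r ^ (-p) ≤ c ^ p * (1 + ‖x‖) ^ (-p) := by
    intro c r hc hr
    calc r ^ (-p) ≤ ((1 + ‖x‖) / c) ^ (-p) :=
          Real.rpow_le_rpow_of_nonpos (by positivity) hr (by linarith)
      _ = _ := by
          rw [Real.div_rpow (by positivity) hc.le, Real.rpow_neg hc.le, div_inv_eq_mul, mul_comm]
  have hk0y := hk0 y
  have e2 : (0:ℝ) < 2 ^ p := by positivity
  have e4 : (0:ℝ) < 4 ^ p := by positivity
  by_cases h1 : (1 + ‖x‖) / 2 ≤ 1 + ‖x + y‖
  · calc (1 + ‖x + y‖) ^ (-p) * k y ≤ (2 ^ p * (1 + ‖x‖) ^ (-p)) * k y := by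
          gcongr; exact hscale two_pos h1
      _ ≤ _ := by
          gcongr
          · exact le_add_of_nonneg_right (by positivity)
          · exact le_add_of_nonneg_right hXY.le
  · have h2 : (1 + ‖x‖) / 4 ≤ ‖y‖ := by
      have := norm_sub_le (x + y) y
      rw [add_sub_cancel_right] at this
      linarith
    have hy : y ≠ 0 := by
      rintro rfl
      simp only [norm_zero] at h2
      linarith
    calc (1 + ‖x + y‖) ^ (-p) * k y ≤ (1 + ‖x + y‖) ^ (-p) * (B * (4 ^ p * (1 + ‖x‖) ^ (-p))) := by
          gcongr
          exact (hk y hy).trans (by gcongr; exact hscale four_pos h2)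
      _ = (B * 4 ^ p * (1 + ‖x‖) ^ (-p)) * (1 + ‖x + y‖) ^ (-p) := by ring
      _ ≤ _ := by
          gcongr
          · exact le_add_of_nonneg_left e2.le
          · exact le_add_of_nonneg_left hk0y

variable [NormedSpace ℝ F] [FiniteDimensional ℝ F] [MeasureSpace F] [BorelSpace F]
  [(volume : Measure F).IsAddHaarMeasure]

lemma exists_integral_rpow_neg_mul_kernel_le {p B : ℝ} (hp : (Module.finrank ℝ F : ℝ) < p)
    (hB : 0 ≤ B) {k : F → ℝ} (hk0 : ∀ y, 0 ≤ k y) (hki : Integrable k)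
    (hk : ∀ y, y ≠ 0 → k y ≤ B * ‖y‖ ^ (-p)) :
    ∃ C, 0 ≤ C ∧ ∀ x, Integrable (fun y => (1 + ‖x + y‖) ^ (-p) * k y) ∧
      ∫ y, (1 + ‖x + y‖) ^ (-p) * k y ≤ C * (1 + ‖x‖) ^ (-p) := by
  have hp0 : 0 < p := lt_of_le_of_lt (Nat.cast_nonneg _) hp
  have hw : Integrable (fun y : F => (1 + ‖y‖) ^ (-p)) := integrable_one_add_norm hp
  have hwx : ∀ x, Integrable (fun y : F => (1 + ‖x + y‖) ^ (-p)) := fun x => hw.comp_add_left x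
  have hdom : ∀ x, Integrable (fun y => ((2 ^ p + B * 4 ^ p) * (1 + ‖x‖) ^ (-p)) *
      (k y + (1 + ‖x + y‖) ^ (-p))) := fun x => (hki.add (hwx x)).const_mul _
  have h_int : ∀ x, Integrable (fun y => (1 + ‖x + y‖) ^ (-p) * k y) := by
    intro x
    refine (hdom x).mono' ((hwx x).aestronglyMeasurable.mul hki.aestronglyMeasurable) ?_
    filter_upwards with y
    rw [Real.norm_of_nonneg (mul_nonneg (by positivity) (hk0 y))]
    exact rpow_neg_mul_kernel_le hp0 hB hk0 hk x y
  refine ⟨(2 ^ p + B * 4 ^ p) * ((∫ y, k y) + ∫ y : F, (1 + ‖y‖) ^ (-p)), ?_, fun x =>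
    ⟨h_int x, ?_⟩⟩
  · have : 0 ≤ ∫ y, k y := integral_nonneg fun y => hk0 y
    have h2 : 0 ≤ ∫ y : F, (1 + ‖y‖) ^ (-p) := integral_nonneg fun y => by positivity
    positivity
  · refine (integral_mono (h_int x) (hdom x)
      fun y => rpow_neg_mul_kernel_le hp0 hB hk0 hk x y).trans (le_of_eq ?_)
    rw [integral_const_mul, integral_add hki (hwx x),
      integral_add_left_eq_self (fun y : F => (1 + ‖y‖) ^ (-p)) x]
    ring

end PolynomialWeight

section PushKernel

variable {F V : Type*} [NormedAddCommGroup F] [NormedSpace ℝ F]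
  [MeasureSpace F] [BorelSpace F]
  [NormedAddCommGroup V] [NormedSpace ℝ V] [MeasurableSpace V] [BorelSpace V]

/-- The measure with density `k`, pushed forward by `J`. -/
noncomputable def pushKernel (k : F → ℝ) (J : F →L[ℝ] V) : Measure V :=
  ((volume : Measure F).withDensity fun y => ENNReal.ofReal (k y)).map J

variable {k : F → ℝ} {J : F →L[ℝ] V}

lemma isFiniteMeasure_pushKernel (hk : Integrable k) : IsFiniteMeasure (pushKernel k J) := by
  have := isFiniteMeasure_withDensity_ofReal hk.2
  exact Measure.isFiniteMeasure_map _ _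

lemma integrable_pushKernel_iff {G : Type*} [NormedAddCommGroup G] [NormedSpace ℝ G]
    [SecondCountableTopology G]
    (hk0 : ∀ y, 0 ≤ k y) (hk : Integrable k) {f : V → G} (hf : Continuous f) :
    Integrable f (pushKernel k J) ↔ Integrable (fun y => k y • f (J y)) := by
  rw [pushKernel, integrable_map_measure (hf.aestronglyMeasurable) J.continuous.aemeasurable,
    integrable_withDensity_iff_integrable_smul₀' hk.aemeasurable.ennreal_ofReal
      (Filter.Eventually.of_forall fun _ => ENNReal.ofReal_lt_top)]
  simp only [ENNReal.toReal_ofReal (hk0 _), Function.comp_def]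

lemma integral_pushKernel {G : Type*} [NormedAddCommGroup G] [NormedSpace ℝ G]
    [SecondCountableTopology G]
    (hk0 : ∀ y, 0 ≤ k y) (hk : Integrable k) {f : V → G} (hf : Continuous f) :
    ∫ z, f z ∂(pushKernel k J) = ∫ y, k y • f (J y) := by
  rw [pushKernel, integral_map J.continuous.aemeasurable hf.aestronglyMeasurable,
    integral_withDensity_eq_integral_toReal_smul₀ hk.aemeasurable.ennreal_ofReal
      (Filter.Eventually.of_forall fun _ => ENNReal.ofReal_lt_top)]
  simp only [ENNReal.toReal_ofReal (hk0 _)]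

end PushKernel

section TimeKernel

variable {α : ℝ}

/-- The integrable part of the Marchaud kernel. -/
noncomputable def timeKernel (α : ℝ) : ℝ → ℝ :=
  (Ioi (0 : ℝ)).indicator fun σ => σ ^ (-(1 + α)) * (1 - Real.exp (-(2 * Real.pi * σ)))

lemma one_sub_exp_nonneg {σ : ℝ} (hσ : 0 ≤ σ) : 0 ≤ 1 - Real.exp (-(2 * Real.pi * σ)) := by
  have := Real.pi_pos
  have : Real.exp (-(2 * Real.pi * σ)) ≤ 1 := Real.exp_le_one_iff.2 (by
    have : 0 ≤ 2 * Real.pi * σ := by positivity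
    linarith)
  linarith

lemma timeKernel_nonneg (σ : ℝ) : 0 ≤ timeKernel α σ :=
  indicator_nonneg (fun σ (hσ : 0 < σ) => mul_nonneg (by positivity) (one_sub_exp_nonneg hσ.le)) σ

lemma timeKernel_le (σ : ℝ) : timeKernel α σ ≤ 1 * ‖σ‖ ^ (-(1 + α)) := by
  unfold timeKernel
  by_cases hσ : 0 < σ
  · rw [indicator_of_mem (mem_Ioi.2 hσ), Real.norm_of_nonneg hσ.le, one_mul]
    have := Real.exp_pos (-(2 * Real.pi * σ))
    exact mul_le_of_le_one_right (by positivity) (by linarith)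
  · rw [indicator_of_notMem (by simpa using hσ)]
    positivity

lemma integrable_timeKernel (hα0 : 0 < α) (hα1 : α < 1) : Integrable (timeKernel α) := by
  rw [timeKernel, integrable_indicator_iff measurableSet_Ioi]
  refine ((integrableOn_rpow_mul_min hα0 hα1).const_mul (2 * Real.pi)).mono' ?_ ?_
  · exact (by fun_prop : Measurable fun σ : ℝ =>
      σ ^ (-(1 + α)) * (1 - Real.exp (-(2 * Real.pi * σ)))).aestronglyMeasurable
  · filter_upwards [ae_restrict_mem measurableSet_Ioi] with σ hσ
    have hσ : 0 < σ := hσ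
    have hpi := Real.pi_gt_three
    rw [Real.norm_of_nonneg (mul_nonneg (by positivity) (one_sub_exp_nonneg hσ.le)),
      mul_left_comm]
    have h1 : 1 - Real.exp (-(2 * Real.pi * σ)) ≤ 2 * Real.pi * min 1 σ := by
      rw [mul_min_of_nonneg _ _ (by positivity)]
      refine le_min ?_ ?_
      · linarith [Real.exp_pos (-(2 * Real.pi * σ))]
      · linarith [Real.add_one_le_exp (-(2 * Real.pi * σ))]
    gcongr

lemma integral_timeKernel_mul (f : ℝ → ℂ) :
    ∫ σ, timeKernel α σ • f σ =
      ∫ σ in Ioi (0 : ℝ), ((σ ^ (-(1 + α)) * (1 - Real.exp (-(2 * Real.pi * σ))) : ℝ) : ℂ) * f σ := by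
  rw [← integral_indicator measurableSet_Ioi]
  refine integral_congr_ae (Filter.Eventually.of_forall fun σ => ?_)
  by_cases hσ : σ ∈ Ioi (0 : ℝ)
  · simp [timeKernel, hσ]
  · simp [timeKernel, hσ]

end TimeKernel

section SpaceTime

variable {F : Type*} [NormedAddCommGroup F] [InnerProductSpace ℝ F] [FiniteDimensional ℝ F]
  [MeasurableSpace F] [BorelSpace F]

/-- Space-time `F × ℝ` with its Euclidean structure. -/
abbrev SpaceTime (F : Type*) := WithLp 2 (F × ℝ)

/-- The inclusion of space in space-time. -/
noncomputable def spaceIncl (F : Type*) [NormedAddCommGroup F] [InnerProductSpace ℝ F] :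
    F →L[ℝ] SpaceTime F :=
  ((WithLp.prodContinuousLinearEquiv 2 ℝ F ℝ).symm : F × ℝ →L[ℝ] SpaceTime F) ∘L
    ContinuousLinearMap.inl ℝ F ℝ

/-- The unit time vector. -/
def timeVec (F : Type*) [NormedAddCommGroup F] : SpaceTime F := WithLp.toLp 2 (0, 1)

@[simp] lemma spaceIncl_fst (y : F) : (spaceIncl F y).fst = y := rfl
@[simp] lemma spaceIncl_snd (y : F) : (spaceIncl F y).snd = 0 := rfl
@[simp] lemma timeVec_fst : (timeVec F).fst = 0 := rfl
@[simp] lemma timeVec_snd : (timeVec F).snd = 1 := rfl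

/-- The product weight on space-time. -/
noncomputable def prodWeight (p q : ℝ) (z : SpaceTime F) : ℝ :=
  (1 + ‖z.fst‖) ^ (-p) * (1 + ‖z.snd‖) ^ (-q)

/-- The jump measure of the integrable part of the operator. -/
noncomputable def jumpMeasure (F : Type*) [NormedAddCommGroup F] [InnerProductSpace ℝ F]
    [FiniteDimensional ℝ F] [MeasurableSpace F] [BorelSpace F] (α s a b : ℝ) :
    Measure (SpaceTime F) :=
  pushKernel (fun y => a * spaceKernel s y) (spaceIncl F) +
    pushKernel (fun σ => b * timeKernel α σ) (ContinuousLinearMap.toSpanSingleton ℝ (timeVec F))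

/-- The Fourier symbol of the elliptic part of the operator. -/
noncomputable def jumpSymbol (α s a b : ℝ) (ζ : SpaceTime F) : ℂ :=
  a * ((symbolConst F s * (1 + ‖ζ.fst‖ ^ 2) ^ s : ℝ) : ℂ) + b * timeSymbol α ζ.snd

variable {α s a b : ℝ}

lemma isFiniteMeasure_jumpMeasure (hα0 : 0 < α) (hα1 : α < 1) (hs0 : 0 < s) (hs1 : s < 1) :
    IsFiniteMeasure (jumpMeasure F α s a b) := by
  have := isFiniteMeasure_pushKernel (J := spaceIncl F)
    ((integrable_spaceKernel (F := F) hs0 hs1).const_mul a)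
  have := isFiniteMeasure_pushKernel (J := ContinuousLinearMap.toSpanSingleton ℝ (timeVec F))
    ((integrable_timeKernel hα0 hα1).const_mul b)
  unfold jumpMeasure
  infer_instance

lemma continuous_prodWeight (p q : ℝ) : Continuous (prodWeight p q : SpaceTime F → ℝ) := by
  unfold prodWeight
  have h1 : Continuous fun z : SpaceTime F => z.fst := by fun_prop
  have h2 : Continuous fun z : SpaceTime F => z.snd := by fun_prop
  refine Continuous.mul (Continuous.rpow_const (by fun_prop) fun z => ?_)
    (Continuous.rpow_const (by fun_prop) fun z => ?_) <;> left <;> positivity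

lemma prodWeight_pos (p q : ℝ) (z : SpaceTime F) : 0 < prodWeight p q z := by
  unfold prodWeight; positivity

lemma exists_weightKernel_jumpMeasure (hα0 : 0 < α) (hα1 : α < 1) (hs0 : 0 < s) (hs1 : s < 1)
    (ha : 0 ≤ a) (hb : 0 ≤ b) :
    ∃ C, WeightKernel (prodWeight (Module.finrank ℝ F + 2 * s) (1 + α))
      (jumpMeasure F α s a b) C := by
  set p : ℝ := Module.finrank ℝ F + 2 * s
  have hka : Integrable fun y : F => a * spaceKernel s y :=
    (integrable_spaceKernel hs0 hs1).const_mul a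
  have hkb : Integrable fun σ => b * timeKernel α σ := (integrable_timeKernel hα0 hα1).const_mul b
  have hka0 : ∀ y : F, 0 ≤ a * spaceKernel s y := fun y => mul_nonneg ha (spaceKernel_nonneg y)
  have hkb0 : ∀ σ, 0 ≤ b * timeKernel α σ := fun σ => mul_nonneg hb (timeKernel_nonneg σ)
  have hG : 0 < Real.Gamma (Module.finrank ℝ F / 2 + s) := Real.Gamma_pos_of_pos (by positivity)
  obtain ⟨C₁, hC₁, h₁⟩ := exists_integral_rpow_neg_mul_kernel_le (F := F) (p := p)
    (B := a * Real.Gamma (Module.finrank ℝ F / 2 + s)) (by simp only [p]; linarith) (by positivity)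
    hka0 hka (fun y hy => by
      rw [mul_assoc]; exact mul_le_mul_of_nonneg_left (spaceKernel_le hs0 hy) ha)
  obtain ⟨C₂, hC₂, h₂⟩ := exists_integral_rpow_neg_mul_kernel_le (F := ℝ) (p := 1 + α)
    (B := b * 1) (by simp only [Module.finrank_self]; push_cast; linarith) (by positivity)
    hkb0 hkb (fun y hy => by
      rw [mul_assoc]; exact mul_le_mul_of_nonneg_left (timeKernel_le y) hb)
  have hc : ∀ z : SpaceTime F, Continuous fun y => prodWeight p (1 + α) (z + y) := fun z =>
    (continuous_prodWeight _ _).comp (by fun_prop)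
  have e₁ : ∀ (z : SpaceTime F) y, (a * spaceKernel s y) • prodWeight p (1 + α) (z + spaceIncl F y)
      = (1 + ‖z.snd‖) ^ (-(1 + α)) * ((1 + ‖z.fst + y‖) ^ (-p) * (a * spaceKernel s y)) := by
    intro z y
    simp only [prodWeight, WithLp.add_fst, WithLp.add_snd, spaceIncl_fst, spaceIncl_snd, add_zero,
      smul_eq_mul]
    ring
  have e₂ : ∀ (z : SpaceTime F) σ, (b * timeKernel α σ) • prodWeight p (1 + α)
      (z + ContinuousLinearMap.toSpanSingleton ℝ (timeVec F) σ)
      = (1 + ‖z.fst‖) ^ (-p) * ((1 + ‖z.snd + σ‖) ^ (-(1 + α)) * (b * timeKernel α σ)) := by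
    intro z σ
    simp only [prodWeight, WithLp.add_fst, WithLp.add_snd, smul_eq_mul,
      ContinuousLinearMap.toSpanSingleton_apply, WithLp.smul_fst, WithLp.smul_snd, timeVec_fst,
      timeVec_snd, smul_zero, add_zero, mul_one]
    ring
  have i₁ : ∀ z : SpaceTime F, Integrable (fun y => prodWeight p (1 + α) (z + y))
      (pushKernel (fun y => a * spaceKernel s y) (spaceIncl F)) := fun z => by
    rw [integrable_pushKernel_iff hka0 hka (hc z)]
    simp only [e₁]
    exact (h₁ z.fst).1.const_mul _
  have i₂ : ∀ z : SpaceTime F, Integrable (fun y => prodWeight p (1 + α) (z + y))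
      (pushKernel (fun σ => b * timeKernel α σ)
        (ContinuousLinearMap.toSpanSingleton ℝ (timeVec F))) := fun z => by
    rw [integrable_pushKernel_iff hkb0 hkb (hc z)]
    simp only [e₂]
    exact (h₂ z.snd).1.const_mul _
  refine ⟨C₁ + C₂, prodWeight_pos _ _, continuous_prodWeight _ _,
    fun z => (i₁ z).add_measure (i₂ z), fun z => ?_⟩
  rw [jumpMeasure, integral_add_measure (i₁ z) (i₂ z), integral_pushKernel hka0 hka (hc z),
    integral_pushKernel hkb0 hkb (hc z)]
  simp only [e₁, e₂, integral_const_mul]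
  rw [add_mul]
  refine add_le_add ?_ ?_
  · calc _ ≤ (1 + ‖z.snd‖) ^ (-(1 + α)) * (C₁ * (1 + ‖z.fst‖) ^ (-p)) := by
          gcongr; exact (h₁ z.fst).2
      _ = _ := by unfold prodWeight; ring
  · calc _ ≤ (1 + ‖z.fst‖) ^ (-p) * (C₂ * (1 + ‖z.snd‖) ^ (-(1 + α))) := by
          gcongr; exact (h₂ z.snd).2
      _ = _ := by unfold prodWeight; ring

lemma one_le_pow_mul_prodWeight {p q : ℝ} (hp : 0 ≤ p) (hq : 0 ≤ q) :
    ∃ M : ℕ, ∀ z : SpaceTime F, 1 ≤ (1 + ‖z‖) ^ M * prodWeight p q z := by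
  obtain ⟨M, hM⟩ := exists_nat_ge (p + q)
  refine ⟨M, fun z => ?_⟩
  have hz := norm_nonneg z
  calc (1 : ℝ) = (1 + ‖z‖) ^ (p + q) * ((1 + ‖z‖) ^ (-p) * (1 + ‖z‖) ^ (-q)) := by
        rw [← Real.rpow_add (by positivity), ← Real.rpow_add (by positivity)]
        ring_nf
        simp
    _ ≤ (1 + ‖z‖) ^ (M : ℝ) * ((1 + ‖z.fst‖) ^ (-p) * (1 + ‖z.snd‖) ^ (-q)) := by
        gcongr ?_ * (?_ * ?_)
        · exact Real.rpow_le_rpow_of_exponent_le (by linarith) hM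
        · exact Real.rpow_le_rpow_of_nonpos (by positivity)
            (by gcongr; exact WithLp.norm_fst_le F z) (by linarith)
        · exact Real.rpow_le_rpow_of_nonpos (by positivity)
            (by gcongr; exact WithLp.norm_snd_le F z) (by linarith)
    _ = _ := by rw [Real.rpow_natCast, prodWeight]

lemma hasTemperateGrowth_jumpSymbol_space (s : ℝ) : (fun ζ : SpaceTime F =>
    ((symbolConst F s * (1 + ‖ζ.fst‖ ^ 2) ^ s : ℝ) : ℂ)).HasTemperateGrowth := by
  have hm0 : (fun ζ : F => ((symbolConst F s * (1 + ‖ζ‖ ^ 2) ^ s : ℝ) : ℂ)).HasTemperateGrowth :=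
    Complex.ofRealCLM.hasTemperateGrowth.comp ((Function.HasTemperateGrowth.const (symbolConst F s)).mul
      (Function.hasTemperateGrowth_one_add_norm_sq_rpow F s))
  exact hm0.comp (f := fun ζ : SpaceTime F => WithLp.fstL 2 ℝ F ℝ ζ)
    (WithLp.fstL 2 ℝ F ℝ).hasTemperateGrowth

lemma hasTemperateGrowth_jumpSymbol_time (hα0 : 0 < α) (hα1 : α < 1) :
    (fun ζ : SpaceTime F => timeSymbol α ζ.snd).HasTemperateGrowth :=
  (hasTemperateGrowth_timeSymbol hα0 hα1).comp (f := fun ζ : SpaceTime F => WithLp.sndL 2 ℝ F ℝ ζ)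
    (WithLp.sndL 2 ℝ F ℝ).hasTemperateGrowth

lemma hasTemperateGrowth_jumpSymbol (hα0 : 0 < α) (hα1 : α < 1) :
    (jumpSymbol α s a b : SpaceTime F → ℂ).HasTemperateGrowth :=
  ((Function.HasTemperateGrowth.const (a : ℂ)).mul (hasTemperateGrowth_jumpSymbol_space s)).add
    ((Function.HasTemperateGrowth.const (b : ℂ)).mul (hasTemperateGrowth_jumpSymbol_time hα0 hα1))

end SpaceTime

section SpaceTimeOperator

variable {F : Type*} [NormedAddCommGroup F] [InnerProductSpace ℝ F] [FiniteDimensional ℝ F]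
  [MeasurableSpace F] [BorelSpace F]

variable {α s a b : ℝ}

lemma exists_jumpSymbol_ge (hα0 : 0 < α) (hα1 : α < 1) (hs0 : 0 < s) (hs1 : s < 1)
    (ha : 0 < a) (hb : 0 < b) :
    ∃ c δ : ℝ, 0 < c ∧ 0 < δ ∧ ∀ ζ : SpaceTime F, c * (1 + ‖ζ‖) ^ δ ≤ ‖jumpSymbol α s a b ζ‖ := by
  obtain ⟨c₀, hc₀, h₀⟩ := exists_timeSymbol_re_ge hα0 hα1
  have hS := symbolConst_pos (F := F) hs0 hs1
  set δ := min (2 * s) α with hδ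
  have hδ0 : 0 < δ := lt_min (by positivity) hα0
  set A := a * symbolConst F s
  have hA : 0 < A := by positivity
  set B := b * c₀
  have hB : 0 < B := by positivity
  refine ⟨min A B * 2⁻¹ ^ δ, δ, by positivity, hδ0, fun ζ => ?_⟩
  refine le_trans ?_ (Complex.re_le_norm _)
  have hre : (jumpSymbol α s a b ζ).re =
      A * (1 + ‖ζ.fst‖ ^ 2) ^ s + b * (timeSymbol α ζ.snd).re := by
    simp only [jumpSymbol, Complex.add_re, Complex.re_ofReal_mul, Complex.ofReal_re, A]
    ring
  rw [hre]
  have ht : B * (1 + |ζ.snd|) ^ α ≤ b * (timeSymbol α ζ.snd).re := by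
    rw [mul_assoc]; exact mul_le_mul_of_nonneg_left (h₀ _) hb.le
  have hn := WithLp.prod_norm_sq_eq_of_L2 ζ
  have hz := norm_nonneg ζ
  have hx := norm_nonneg ζ.fst
  have ht0 := norm_nonneg ζ.snd
  rw [mul_assoc, ← Real.mul_rpow (by positivity) (by positivity)]
  rw [Real.norm_eq_abs] at hn ht0
  have key : 2⁻¹ * (1 + ‖ζ‖) ≤ Real.sqrt (1 + ‖ζ.fst‖ ^ 2) ∨ 2⁻¹ * (1 + ‖ζ‖) ≤ 1 + |ζ.snd| := by
    by_contra! hcon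
    obtain ⟨h1, h2⟩ := hcon
    rw [Real.sqrt_lt' (by positivity)] at h1
    nlinarith
  rcases key with h | h
  · have h1 : (2⁻¹ * (1 + ‖ζ‖)) ^ δ ≤ (1 + ‖ζ.fst‖ ^ 2) ^ s := by
      calc (2⁻¹ * (1 + ‖ζ‖)) ^ δ ≤ Real.sqrt (1 + ‖ζ.fst‖ ^ 2) ^ δ := by gcongr
        _ ≤ Real.sqrt (1 + ‖ζ.fst‖ ^ 2) ^ (2 * s) := by
            refine Real.rpow_le_rpow_of_exponent_le ?_ (min_le_left _ _)
            rw [Real.one_le_sqrt]; nlinarith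
        _ = _ := by
            rw [Real.rpow_mul (by positivity), Real.rpow_two, Real.sq_sqrt (by positivity)]
    have : 0 ≤ B * (1 + |ζ.snd|) ^ α := by positivity
    calc _ ≤ A * (1 + ‖ζ.fst‖ ^ 2) ^ s := by gcongr; exact min_le_left _ _
      _ ≤ _ := by linarith
  · have h1 : (2⁻¹ * (1 + ‖ζ‖)) ^ δ ≤ (1 + |ζ.snd|) ^ α := by
      calc (2⁻¹ * (1 + ‖ζ‖)) ^ δ ≤ (1 + |ζ.snd|) ^ δ := by gcongr
        _ ≤ _ := Real.rpow_le_rpow_of_exponent_le (by linarith) (min_le_right _ _)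
    have : 0 ≤ A * (1 + ‖ζ.fst‖ ^ 2) ^ s := by positivity
    calc _ ≤ B * (1 + |ζ.snd|) ^ α := by gcongr; exact min_le_right _ _
      _ ≤ _ := by linarith

/-- The nonlocal space-time operator with jump intensities `a` and `b`. -/
noncomputable def jumpOperator (α s a b : ℝ) (φ : SpaceTime F → ℂ) (z : SpaceTime F) : ℂ :=
  a * (Real.Gamma (Module.finrank ℝ F / 2 + s) / 2 *
    ∫ y : F, ((‖y‖ ^ (-(Module.finrank ℝ F + 2 * s)) : ℝ) : ℂ) *
      (2 * φ z - φ (z + spaceIncl F y) - φ (z - spaceIncl F y))) +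
  b * ∫ σ in Ioi (0 : ℝ), ((σ ^ (-(1 + α)) : ℝ) : ℂ) * (φ z - φ (z + σ • timeVec F))

lemma integral_add_jumpMeasure (hα0 : 0 < α) (hα1 : α < 1) (hs0 : 0 < s) (hs1 : s < 1)
    (ha : 0 ≤ a) (hb : 0 ≤ b) (φ : 𝓢(SpaceTime F, ℂ)) (z : SpaceTime F) :
    ∫ y, φ (z + y) ∂(jumpMeasure F α s a b) =
      a * (∫ y : F, (spaceKernel s y : ℂ) * φ (z + spaceIncl F y)) +
      b * ∫ σ in Ioi (0 : ℝ), ((σ ^ (-(1 + α)) * (1 - Real.exp (-(2 * Real.pi * σ))) : ℝ) : ℂ) *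
        φ (z + σ • timeVec F) := by
  have hka : Integrable fun y : F => a * spaceKernel s y :=
    (integrable_spaceKernel hs0 hs1).const_mul a
  have hkb : Integrable fun σ => b * timeKernel α σ := (integrable_timeKernel hα0 hα1).const_mul b
  have hka0 : ∀ y : F, 0 ≤ a * spaceKernel s y := fun y => mul_nonneg ha (spaceKernel_nonneg y)
  have hkb0 : ∀ σ, 0 ≤ b * timeKernel α σ := fun σ => mul_nonneg hb (timeKernel_nonneg σ)
  have hc : Continuous fun y => φ (z + y) := φ.continuous.comp (by fun_prop)
  have hb' : ∀ y, ‖φ (z + y)‖ ≤ ‖φ.toBoundedContinuousFunction‖ := fun y =>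
    φ.toBoundedContinuousFunction.norm_coe_le_norm (z + y)
  have := isFiniteMeasure_pushKernel (J := spaceIncl F) hka
  have := isFiniteMeasure_pushKernel (J := ContinuousLinearMap.toSpanSingleton ℝ (timeVec F)) hkb
  have i : ∀ μ : Measure (SpaceTime F), IsFiniteMeasure μ → Integrable (fun y => φ (z + y)) μ :=
    fun μ hμ => (integrable_const ‖φ.toBoundedContinuousFunction‖).mono' hc.aestronglyMeasurable
      (Filter.Eventually.of_forall hb')
  rw [jumpMeasure, integral_add_measure (i _ inferInstance) (i _ inferInstance),
    integral_pushKernel hka0 hka hc, integral_pushKernel hkb0 hkb hc,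
    ← integral_timeKernel_mul, ← integral_const_mul, ← integral_const_mul]
  congr 1
  · refine integral_congr_ae (Filter.Eventually.of_forall fun y => ?_)
    simp only [Complex.real_smul]
    push_cast
    ring
  · refine integral_congr_ae (Filter.Eventually.of_forall fun y => ?_)
    simp only [Complex.real_smul, ContinuousLinearMap.toSpanSingleton_apply]
    push_cast
    ring

open SchwartzMap in
lemma fourierMultiplierCLM_jumpSymbol (hα0 : 0 < α) (hα1 : α < 1) (φ : 𝓢(SpaceTime F, ℂ)) :
    fourierMultiplierCLM ℂ (jumpSymbol α s a b) φ =
      (a : ℂ) • fourierMultiplierCLM ℂ (fun ζ : SpaceTime F =>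
        ((symbolConst F s * (1 + ‖ζ.fst‖ ^ 2) ^ s : ℝ) : ℂ)) φ +
      (b : ℂ) • fourierMultiplierCLM ℂ (fun ζ : SpaceTime F => timeSymbol α ζ.snd) φ := by
  have h1 := hasTemperateGrowth_jumpSymbol_space (F := F) s
  have h2 := hasTemperateGrowth_jumpSymbol_time (F := F) hα0 hα1
  rw [fourierMultiplierCLM_apply, fourierMultiplierCLM_apply, fourierMultiplierCLM_apply,
    ← FourierTransform.fourierInv_smul, ← FourierTransform.fourierInv_smul,
    ← FourierTransform.fourierInv_add]
  congr 1
  ext ζ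
  rw [smulLeftCLM_apply_apply (hasTemperateGrowth_jumpSymbol hα0 hα1)]
  simp only [add_apply, smul_apply, smulLeftCLM_apply_apply h1, smulLeftCLM_apply_apply h2,
    jumpSymbol, smul_eq_mul]
  ring

lemma jumpOperator_eq [Nontrivial F] (hα0 : 0 < α) (hα1 : α < 1) (hs0 : 0 < s) (hs1 : s < 1)
    (ha : 0 ≤ a) (hb : 0 ≤ b) (φ : 𝓢(SpaceTime F, ℂ)) (z : SpaceTime F) :
    jumpOperator α s a b φ z = SchwartzMap.fourierMultiplierCLM ℂ (jumpSymbol α s a b) φ z -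
      ∫ y, φ (z + y) ∂(jumpMeasure F α s a b) := by
  have hJ : ∀ (ζ : SpaceTime F) (y : F),
      inner ℝ ζ (spaceIncl F y) = inner ℝ (WithLp.fstL 2 ℝ F ℝ ζ) y := fun ζ y => by
    simp [WithLp.prod_inner_apply, spaceIncl]
  have h1 := space_representation hs0 hs1 (spaceIncl F) (WithLp.fstL 2 ℝ F ℝ) hJ φ z
  have h2 := time_representation hα0 hα1 (timeVec F) φ z
  have e2 : (fun ζ : SpaceTime F => timeSymbol α (inner ℝ ζ (timeVec F))) =
      fun ζ => timeSymbol α ζ.snd := by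
    ext ζ
    simp [WithLp.prod_inner_apply, timeVec]
  rw [e2] at h2
  rw [jumpOperator, h1, h2, integral_add_jumpMeasure hα0 hα1 hs0 hs1 ha hb,
    fourierMultiplierCLM_jumpSymbol hα0 hα1]
  simp only [add_apply, smul_apply, smul_eq_mul, WithLp.fstL_apply]
  ring

end SpaceTimeOperator

section ChangeOfVariables

variable {V : Type*} [NormedAddCommGroup V] [InnerProductSpace ℝ V] [FiniteDimensional ℝ V]
  [MeasurableSpace V] [BorelSpace V]

lemma map_volume_continuousLinearEquiv (S : V ≃L[ℝ] V) :
    (volume : Measure V).map S = ENNReal.ofReal |LinearMap.det (S : V →ₗ[ℝ] V)|⁻¹ • volume := by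
  have h : LinearMap.det (S : V →ₗ[ℝ] V) ≠ 0 := (LinearEquiv.isUnit_det' S.toLinearEquiv).ne_zero
  rw [← abs_inv]
  exact Measure.map_linearMap_addHaar_eq_smul_addHaar volume h

lemma integral_comp_continuousLinearEquiv {G : Type*} [NormedAddCommGroup G] [NormedSpace ℝ G]
    (S : V ≃L[ℝ] V) (f : V → G) :
    ∫ z, f (S z) = |LinearMap.det (S : V →ₗ[ℝ] V)|⁻¹ • ∫ z, f z := by
  refine (S.toHomeomorph.measurableEmbedding.integral_map (μ := volume) f).symm.trans ?_
  change ∫ y, f y ∂(Measure.map S volume) = _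
  rw [map_volume_continuousLinearEquiv, integral_smul_measure,
    ENNReal.toReal_ofReal (by positivity)]

lemma integrable_comp_continuousLinearEquiv {G : Type*} [NormedAddCommGroup G]
    (S : V ≃L[ℝ] V) {f : V → G} (hf : Integrable f) : Integrable fun z => f (S z) := by
  have h := S.toHomeomorph.measurableEmbedding.integrable_map_iff (μ := volume) (g := f)
  refine h.1 ?_
  change Integrable f (Measure.map S volume)
  rw [map_volume_continuousLinearEquiv]
  exact hf.smul_measure ENNReal.ofReal_ne_top

end ChangeOfVariables

section Dilation

variable {F : Type*} [NormedAddCommGroup F] [InnerProductSpace ℝ F] [FiniteDimensional ℝ F]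
  [MeasurableSpace F] [BorelSpace F]

/-- The anisotropic dilation `(x, t) ↦ (l x, m t)`. -/
noncomputable def dilation (F : Type*) [NormedAddCommGroup F] [InnerProductSpace ℝ F] (l m : ℝˣ) :
    SpaceTime F ≃L[ℝ] SpaceTime F :=
  ((WithLp.prodContinuousLinearEquiv 2 ℝ F ℝ).trans
    ((ContinuousLinearEquiv.smulLeft l).prodCongr (ContinuousLinearEquiv.smulLeft m))).trans
    (WithLp.prodContinuousLinearEquiv 2 ℝ F ℝ).symm

lemma SpaceTime.ext_fst_snd {z z' : SpaceTime F} (h₁ : z.fst = z'.fst) (h₂ : z.snd = z'.snd) :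
    z = z' :=
  WithLp.ofLp_injective 2 (Prod.ext h₁ h₂)

variable (l m : ℝˣ) (z : SpaceTime F)

@[simp] lemma dilation_fst : (dilation F l m z).fst = (l : ℝ) • z.fst := rfl
@[simp] lemma dilation_snd : (dilation F l m z).snd = (m : ℝ) * z.snd := rfl
@[simp] lemma dilation_symm_fst : ((dilation F l m).symm z).fst = (l : ℝ)⁻¹ • z.fst := by
  rw [← Units.val_inv_eq_inv_val]; rfl
@[simp] lemma dilation_symm_snd : ((dilation F l m).symm z).snd = (m : ℝ)⁻¹ * z.snd := by
  rw [← Units.val_inv_eq_inv_val]; rfl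

lemma dilation_symmetric (x y : SpaceTime F) :
    inner ℝ (dilation F l m x) y = inner ℝ x (dilation F l m y) := by
  change inner ℝ ((l : ℝ) • x.fst) y.fst + inner ℝ ((m : ℝ) • x.snd) y.snd =
    inner ℝ x.fst ((l : ℝ) • y.fst) + inner ℝ x.snd ((m : ℝ) • y.snd)
  simp only [real_inner_smul_left, real_inner_smul_right]

lemma norm_dilation_symm_le (hl : 1 ≤ (l : ℝ)) (hm : 1 ≤ (m : ℝ)) :
    ‖((dilation F l m).symm : SpaceTime F →L[ℝ] SpaceTime F)‖ ≤ 1 := by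
  refine ContinuousLinearMap.opNorm_le_bound _ zero_le_one fun z => ?_
  rw [one_mul]
  refine le_of_sq_le_sq ?_ (norm_nonneg _)
  rw [ContinuousLinearEquiv.coe_coe, WithLp.prod_norm_sq_eq_of_L2, WithLp.prod_norm_sq_eq_of_L2,
    dilation_symm_fst, dilation_symm_snd, norm_smul, norm_mul]
  have h : ∀ {r : ℝ}, 1 ≤ r → ‖r⁻¹‖ ≤ 1 := fun hr => by
    rw [norm_inv, Real.norm_of_nonneg (by linarith)]
    exact inv_le_one_of_one_le₀ hr
  gcongr
  · exact mul_le_of_le_one_left (norm_nonneg _) (h hl)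
  · exact mul_le_of_le_one_left (norm_nonneg _) (h hm)

lemma det_dilation : LinearMap.det (dilation F l m : SpaceTime F →ₗ[ℝ] SpaceTime F) =
    (l : ℝ) ^ Module.finrank ℝ F * m := by
  have : (dilation F l m : SpaceTime F →ₗ[ℝ] SpaceTime F) =
      (WithLp.linearEquiv 2 ℝ (F × ℝ)).symm ∘ₗ
        (LinearMap.prodMap ((l : ℝ) • LinearMap.id) ((m : ℝ) • LinearMap.id)) ∘ₗ
        ((WithLp.linearEquiv 2 ℝ (F × ℝ)).symm.symm : WithLp 2 (F × ℝ) →ₗ[ℝ] F × ℝ) := by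
    ext z; rfl
  rw [this, LinearMap.det_conj, LinearMap.det_prodMap]
  simp

variable {l m} {α s a b : ℝ}

lemma jumpOperator_comp_dilation (hl : 0 < (l : ℝ)) (hm : 0 < (m : ℝ))
    (hlm : (l : ℝ) ^ (2 * s) = (m : ℝ) ^ α) (φ : SpaceTime F → ℂ) (z : SpaceTime F) :
    jumpOperator α s a b (fun z => φ (dilation F l m z)) z =
      (((l : ℝ) ^ (2 * s) : ℝ) : ℂ) * jumpOperator α s a b φ (dilation F l m z) := by
  set S := dilation F l m
  have hS₁ : ∀ y, S (spaceIncl F y) = spaceIncl F ((l : ℝ) • y) := fun y => by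
    apply SpaceTime.ext_fst_snd <;> simp [S]
  have hS₂ : ∀ σ : ℝ, S (σ • timeVec F) = ((m : ℝ) * σ) • timeVec F := fun σ => by
    apply SpaceTime.ext_fst_snd <;> simp [S, mul_comm]
  have e₁ : ∫ y : F, ((‖y‖ ^ (-(Module.finrank ℝ F + 2 * s)) : ℝ) : ℂ) *
      (2 * φ (S z) - φ (S (z + spaceIncl F y)) - φ (S (z - spaceIncl F y))) =
      (((l : ℝ) ^ (2 * s) : ℝ) : ℂ) * ∫ y : F, ((‖y‖ ^ (-(Module.finrank ℝ F + 2 * s)) : ℝ) : ℂ) *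
      (2 * φ (S z) - φ (S z + spaceIncl F y) - φ (S z - spaceIncl F y)) := by
    have h := Measure.integral_comp_smul (volume : Measure F) (fun y : F =>
      ((‖y‖ ^ (-(Module.finrank ℝ F + 2 * s)) : ℝ) : ℂ) *
      (2 * φ (S z) - φ (S z + spaceIncl F y) - φ (S z - spaceIncl F y))) (l : ℝ)
    set I := ∫ y : F, ((‖y‖ ^ (-(Module.finrank ℝ F + 2 * s)) : ℝ) : ℂ) *
      (2 * φ (S z) - φ (S z + spaceIncl F y) - φ (S z - spaceIncl F y))
    calc _ = ∫ y : F, (((l : ℝ) ^ (Module.finrank ℝ F + 2 * s) : ℝ) : ℂ) *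
          (((‖(l : ℝ) • y‖ ^ (-(Module.finrank ℝ F + 2 * s)) : ℝ) : ℂ) *
          (2 * φ (S z) - φ (S z + spaceIncl F ((l : ℝ) • y)) -
            φ (S z - spaceIncl F ((l : ℝ) • y)))) := by
          refine integral_congr_ae (Filter.Eventually.of_forall fun y => ?_)
          dsimp only
          rw [map_add, map_sub, hS₁, ← mul_assoc, norm_smul, Real.norm_of_nonneg hl.le,
            Real.mul_rpow hl.le (norm_nonneg _), ← Complex.ofReal_mul, ← mul_assoc,
            ← Real.rpow_add hl, add_neg_cancel, Real.rpow_zero, one_mul]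
      _ = _ := by
          rw [integral_const_mul, h, Complex.real_smul, ← mul_assoc, ← Complex.ofReal_mul,
            abs_of_pos (by positivity), ← Real.rpow_natCast, ← Real.rpow_neg hl.le,
            ← Real.rpow_add hl]
          congr 4
          ring
  have e₂ : ∫ σ in Ioi (0 : ℝ), ((σ ^ (-(1 + α)) : ℝ) : ℂ) *
      (φ (S z) - φ (S (z + σ • timeVec F))) =
      (((m : ℝ) ^ α : ℝ) : ℂ) * ∫ σ in Ioi (0 : ℝ), ((σ ^ (-(1 + α)) : ℝ) : ℂ) *
      (φ (S z) - φ (S z + σ • timeVec F)) := by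
    have h := integral_comp_mul_left_Ioi (fun σ : ℝ => ((σ ^ (-(1 + α)) : ℝ) : ℂ) *
      (φ (S z) - φ (S z + σ • timeVec F))) 0 hm
    rw [mul_zero] at h
    set I := ∫ σ in Ioi (0 : ℝ), ((σ ^ (-(1 + α)) : ℝ) : ℂ) *
      (φ (S z) - φ (S z + σ • timeVec F))
    calc _ = ∫ σ in Ioi (0 : ℝ), (((m : ℝ) ^ (1 + α) : ℝ) : ℂ) *
          (((((m : ℝ) * σ) ^ (-(1 + α)) : ℝ) : ℂ) *
          (φ (S z) - φ (S z + ((m : ℝ) * σ) • timeVec F))) := by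
          refine setIntegral_congr_fun measurableSet_Ioi fun σ (hσ : 0 < σ) => ?_
          rw [map_add, hS₂, ← mul_assoc, Real.mul_rpow hm.le hσ.le, ← Complex.ofReal_mul,
            ← mul_assoc, ← Real.rpow_add hm, add_neg_cancel, Real.rpow_zero, one_mul]
      _ = _ := by
          rw [integral_const_mul, h, Complex.real_smul, ← mul_assoc, ← Complex.ofReal_mul,
            ← Real.rpow_neg_one, ← Real.rpow_add hm]
          congr 4
          ring
  unfold jumpOperator
  rw [e₁, e₂, ← hlm]
  ring

/-- Very weak solutions of the homogeneous equation for the adjoint of `jumpOperator`. -/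
def IsJumpSol (α s a b : ℝ) (u : SpaceTime F → ℂ) : Prop :=
  ∀ φ : 𝓢(SpaceTime F, ℂ), ∫ z, u z * jumpOperator α s a b φ z = 0

lemma IsJumpSol.comp_dilation {u : SpaceTime F → ℂ} (hu : IsJumpSol α s a b u)
    (hl : 0 < (l : ℝ)) (hm : 0 < (m : ℝ)) (hlm : (l : ℝ) ^ (2 * s) = (m : ℝ) ^ α) :
    IsJumpSol α s a b fun z => u (dilation F l m z) := by
  intro φ
  have h := hu (SchwartzMap.compCLMOfContinuousLinearEquiv ℂ (dilation F l m).symm φ)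
  have e : ∀ z, u (dilation F l m z) * jumpOperator α s a b φ z = (((l : ℝ) ^ (2 * s) : ℝ) : ℂ) *
      (u (dilation F l m z) * jumpOperator α s a b
        (SchwartzMap.compCLMOfContinuousLinearEquiv ℂ (dilation F l m).symm φ)
        (dilation F l m z)) := by
    intro z
    have h1 := jumpOperator_comp_dilation (a := a) (b := b) hl hm hlm
      (SchwartzMap.compCLMOfContinuousLinearEquiv ℂ (dilation F l m).symm φ) z
    have h2 : (fun z => SchwartzMap.compCLMOfContinuousLinearEquiv ℂ (dilation F l m).symm φ
        (dilation F l m z)) = φ := by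
      ext z
      simp
    rw [h2] at h1
    rw [h1]
    ring
  simp only [e]
  rw [integral_const_mul, integral_comp_continuousLinearEquiv (dilation F l m)
    (fun z => u z * jumpOperator α s a b
        (SchwartzMap.compCLMOfContinuousLinearEquiv ℂ (dilation F l m).symm φ) z), h]
  simp

lemma prodWeight_dilation_symm_le {p q : ℝ} (hp : 0 ≤ p) (hq : 0 ≤ q) (hl : 1 ≤ (l : ℝ))
    (hm : 1 ≤ (m : ℝ)) (z : SpaceTime F) :
    prodWeight p q ((dilation F l m).symm z) ≤ (l : ℝ) ^ p * (m : ℝ) ^ q * prodWeight p q z := by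
  have key : ∀ {r N p : ℝ}, 1 ≤ r → 0 ≤ N → 0 ≤ p →
      (1 + r⁻¹ * N) ^ (-p) ≤ r ^ p * (1 + N) ^ (-p) := by
    intro r N p hr hN hp
    have hr0 : 0 < r := by linarith
    calc (1 + r⁻¹ * N) ^ (-p) ≤ (r⁻¹ * (1 + N)) ^ (-p) := by
          refine Real.rpow_le_rpow_of_nonpos (by positivity) ?_ (by linarith)
          have := inv_le_one_of_one_le₀ hr
          linarith
      _ = _ := by
          rw [Real.mul_rpow (by positivity) (by positivity), Real.inv_rpow hr0.le,
            Real.rpow_neg hr0.le, inv_inv]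
  unfold prodWeight
  rw [dilation_symm_fst, dilation_symm_snd, norm_smul, norm_mul, norm_inv, norm_inv,
    Real.norm_of_nonneg (by linarith : (0 : ℝ) ≤ l), Real.norm_of_nonneg (by linarith : (0 : ℝ) ≤ m)]
  calc _ ≤ ((l : ℝ) ^ p * (1 + ‖z.fst‖) ^ (-p)) * ((m : ℝ) ^ q * (1 + ‖z.snd‖) ^ (-q)) := by
        gcongr
        · exact key hl (norm_nonneg _) hp
        · exact key hm (norm_nonneg _) hq
    _ = _ := by ring

lemma integrable_prodWeight_comp_dilation {p q : ℝ} (hp : 0 ≤ p) (hq : 0 ≤ q)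
    (hl : 1 ≤ (l : ℝ)) (hm : 1 ≤ (m : ℝ)) {u : SpaceTime F → ℂ}
    (hum : AEStronglyMeasurable u)
    (hu : Integrable fun z => (prodWeight p q z : ℂ) * u z) :
    Integrable (fun z => (prodWeight p q z : ℂ) * u (dilation F l m z)) ∧
      ∫ z, ‖(prodWeight p q z : ℂ) * u (dilation F l m z)‖ ≤
        |LinearMap.det (dilation F l m : SpaceTime F →ₗ[ℝ] SpaceTime F)|⁻¹ *
          ((l : ℝ) ^ p * (m : ℝ) ^ q) * ∫ z, ‖(prodWeight p q z : ℂ) * u z‖ := by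
  set S := dilation F l m
  have hle : ∀ z, ‖(prodWeight p q (S.symm z) : ℂ) * u z‖ ≤
      (l : ℝ) ^ p * (m : ℝ) ^ q * ‖(prodWeight p q z : ℂ) * u z‖ := fun z => by
    rw [norm_mul, norm_mul, Complex.norm_real, Complex.norm_real,
      Real.norm_of_nonneg (prodWeight_pos _ _ _).le, Real.norm_of_nonneg (prodWeight_pos _ _ _).le,
      ← mul_assoc]
    gcongr
    exact prodWeight_dilation_symm_le hp hq hl hm z
  have hi : Integrable fun z => (prodWeight p q (S.symm z) : ℂ) * u z := by
    refine (hu.norm.const_mul _).mono' (AEStronglyMeasurable.mul ?_ hum)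
      (Filter.Eventually.of_forall hle)
    have := (continuous_prodWeight (F := F) p q).comp S.symm.continuous
    exact (Complex.continuous_ofReal.comp this).aestronglyMeasurable
  have e : ∀ z, (prodWeight p q z : ℂ) * u (S z) = (prodWeight p q (S.symm (S z)) : ℂ) * u (S z) :=
    fun z => by rw [S.symm_apply_apply]
  simp only [e]
  refine ⟨integrable_comp_continuousLinearEquiv S hi, ?_⟩
  rw [integral_comp_continuousLinearEquiv S
    (fun z => ‖(prodWeight p q (S.symm z) : ℂ) * u z‖), smul_eq_mul, mul_assoc]
  gcongr
  rw [← integral_const_mul]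
  exact integral_mono hi.norm (hu.norm.const_mul _) hle

end Dilation

open Filter

section SecondDerivatives

variable {F : Type*} [NormedAddCommGroup F] [InnerProductSpace ℝ F] [FiniteDimensional ℝ F]
  [MeasurableSpace F] [BorelSpace F]

variable {α s a b : ℝ} {u : SpaceTime F → ℂ}

/-- Membership in the weighted space `L¹((1+|x|)^{-(d+2s)} (1+|t|)^{-(1+α)})`. -/
def WeightedIntegrable (α s : ℝ) (u : SpaceTime F → ℂ) : Prop :=
  Integrable fun z => (prodWeight (Module.finrank ℝ F + 2 * s) (1 + α) z : ℂ) * u z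

lemma WeightedIntegrable.aestronglyMeasurable (hu : WeightedIntegrable α s u) :
    AEStronglyMeasurable u := by
  have h1 : u = fun z => (((prodWeight (Module.finrank ℝ F + 2 * s) (1 + α) z)⁻¹ : ℝ) : ℂ) *
      ((prodWeight (Module.finrank ℝ F + 2 * s) (1 + α) z : ℂ) * u z) := by
    ext z
    have : (prodWeight (Module.finrank ℝ F + 2 * s) (1 + α) z : ℂ) ≠ 0 := by
      exact_mod_cast (prodWeight_pos _ _ z).ne'
    push_cast
    field_simp
  rw [h1]
  refine AEStronglyMeasurable.mul ?_ (Integrable.aestronglyMeasurable hu)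
  have := (continuous_prodWeight (F := F) (Module.finrank ℝ F + 2 * s) (1 + α)).measurable
  exact (by fun_prop : Measurable fun z : SpaceTime F =>
    (((prodWeight (Module.finrank ℝ F + 2 * s) (1 + α) z)⁻¹ : ℝ) : ℂ)).aestronglyMeasurable

lemma WeightedIntegrable.integrable_mul_average (hα0 : 0 < α) (hα1 : α < 1) (hs0 : 0 < s)
    (hs1 : s < 1) (ha : 0 ≤ a) (hb : 0 ≤ b) (hu : WeightedIntegrable α s u)
    (φ : 𝓢(SpaceTime F, ℂ)) :
    Integrable fun z => u z * ∫ y, φ (z + y) ∂(jumpMeasure F α s a b) := by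
  have := isFiniteMeasure_jumpMeasure (F := F) (a := a) (b := b) hα0 hα1 hs0 hs1
  obtain ⟨C, hW⟩ := exists_weightKernel_jumpMeasure (F := F) hα0 hα1 hs0 hs1 ha hb
  obtain ⟨M, hM⟩ := one_le_pow_mul_prodWeight (F := F) (p := Module.finrank ℝ F + 2 * s)
    (q := 1 + α) (by positivity) (by positivity)
  obtain ⟨B, hB⟩ := hW.schwartz_le one_pos hM φ
  have hB0 : 0 ≤ B := by
    have h0 := (norm_nonneg _).trans (hB 0)
    exact nonneg_of_mul_nonneg_left h0 (hW.pos 0)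
  refine hW.integrable_mul_of_le hu (B := B * C) ?_ fun z => ?_
  · have : StronglyMeasurable fun p : SpaceTime F × SpaceTime F => φ (p.1 + p.2) :=
      (φ.continuous.comp (continuous_fst.add continuous_snd)).stronglyMeasurable
    exact this.integral_prod_right'.aestronglyMeasurable
  · calc _ ≤ ∫ y, B * prodWeight (Module.finrank ℝ F + 2 * s) (1 + α) (z + y)
          ∂(jumpMeasure F α s a b) :=
        norm_integral_le_of_norm_le ((hW.integrable z).const_mul B)
          (Eventually.of_forall fun y => hB _)
      _ ≤ _ := by
        rw [integral_const_mul, mul_assoc]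
        exact mul_le_mul_of_nonneg_left (hW.le z) hB0

lemma WeightedIntegrable.integrable_mul_schwartz (hα0 : 0 < α) (hα1 : α < 1) (hs0 : 0 < s)
    (hs1 : s < 1) (hu : WeightedIntegrable α s u) (φ : 𝓢(SpaceTime F, ℂ)) :
    Integrable fun z => u z * φ z := by
  have := isFiniteMeasure_jumpMeasure (F := F) (a := 1) (b := 1) hα0 hα1 hs0 hs1
  obtain ⟨C, hW⟩ := exists_weightKernel_jumpMeasure (F := F) hα0 hα1 hs0 hs1 zero_le_one
    zero_le_one
  obtain ⟨M, hM⟩ := one_le_pow_mul_prodWeight (F := F) (p := Module.finrank ℝ F + 2 * s)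
    (q := 1 + α) (by positivity) (by positivity)
  obtain ⟨B, hB⟩ := hW.schwartz_le one_pos hM φ
  exact hW.integrable_mul_of_le hu φ.continuous.aestronglyMeasurable hB

lemma WeightedIntegrable.integrable_mul_jumpOperator [Nontrivial F] (hα0 : 0 < α) (hα1 : α < 1)
    (hs0 : 0 < s) (hs1 : s < 1) (ha : 0 ≤ a) (hb : 0 ≤ b) (hu : WeightedIntegrable α s u)
    (φ : 𝓢(SpaceTime F, ℂ)) : Integrable fun z => u z * jumpOperator α s a b φ z := by
  simp only [jumpOperator_eq hα0 hα1 hs0 hs1 ha hb, mul_sub]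
  exact (hu.integrable_mul_schwartz hα0 hα1 hs0 hs1 _).sub
    (hu.integrable_mul_average hα0 hα1 hs0 hs1 ha hb φ)

lemma jumpOperator_add_smul [Nontrivial F] (hα0 : 0 < α) (hα1 : α < 1)
    (hs0 : 0 < s) (hs1 : s < 1) (ha : 0 ≤ a) (hb : 0 ≤ b) (φ χ : 𝓢(SpaceTime F, ℂ)) (c : ℂ)
    (z : SpaceTime F) : jumpOperator α s a b (φ + c • χ) z =
      jumpOperator α s a b φ z + c * jumpOperator α s a b χ z := by
  have := isFiniteMeasure_jumpMeasure (F := F) (a := a) (b := b) hα0 hα1 hs0 hs1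
  have i : ∀ φ : 𝓢(SpaceTime F, ℂ), Integrable (fun y => φ (z + y)) (jumpMeasure F α s a b) :=
    fun φ => (integrable_const ‖φ.toBoundedContinuousFunction‖).mono'
      (φ.continuous.comp (continuous_const.add continuous_id)).aestronglyMeasurable
      (Eventually.of_forall fun y => φ.toBoundedContinuousFunction.norm_coe_le_norm (z + y))
  simp only [jumpOperator_eq hα0 hα1 hs0 hs1 ha hb, map_add, map_smul, add_apply, smul_apply,
    smul_eq_mul]
  rw [integral_add (i φ) ((i χ).const_mul c), integral_const_mul]
  ring

/-- It suffices to test the equation against real-valued functions. -/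
lemma WeightedIntegrable.isJumpSol_of_real [Nontrivial F] (hα0 : 0 < α) (hα1 : α < 1)
    (hs0 : 0 < s) (hs1 : s < 1) (ha : 0 ≤ a) (hb : 0 ≤ b) (hu : WeightedIntegrable α s u)
    (h : ∀ g : 𝓢(SpaceTime F, ℝ), ∫ z, u z * jumpOperator α s a b (fun z => (g z : ℂ)) z = 0) :
    IsJumpSol α s a b u := by
  intro φ
  let g := SchwartzMap.postcompCLM Complex.reCLM φ
  let k := SchwartzMap.postcompCLM Complex.imCLM φ
  let g' := SchwartzMap.postcompCLM Complex.ofRealCLM g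
  let k' := SchwartzMap.postcompCLM Complex.ofRealCLM k
  have hφ : φ = g' + Complex.I • k' := by
    ext z
    exact (by rw [mul_comm]; exact (Complex.re_add_im (φ z)).symm :
      φ z = ((φ z).re : ℂ) + Complex.I * ((φ z).im : ℂ))
  have e : ∀ z, u z * jumpOperator α s a b φ z = u z * jumpOperator α s a b g' z +
      Complex.I * (u z * jumpOperator α s a b k' z) := fun z => by
    conv_lhs => rw [hφ]
    rw [jumpOperator_add_smul hα0 hα1 hs0 hs1 ha hb]
    ring
  simp only [e]
  have i := hu.integrable_mul_jumpOperator hα0 hα1 hs0 hs1 ha hb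
  rw [integral_add (i g') ((i k').const_mul _), integral_const_mul]
  have h1 : ∫ z, u z * jumpOperator α s a b g' z = 0 := h g
  have h2 : ∫ z, u z * jumpOperator α s a b k' z = 0 := h k
  rw [h1, h2, mul_zero, add_zero]

lemma IsJumpSol.isAverageSol [Nontrivial F] (hα0 : 0 < α) (hα1 : α < 1) (hs0 : 0 < s)
    (hs1 : s < 1) (ha : 0 ≤ a) (hb : 0 ≤ b) (hu : WeightedIntegrable α s u)
    (h : IsJumpSol α s a b u) :
    IsAverageSol (SchwartzMap.fourierMultiplierCLM ℂ (jumpSymbol α s a b))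
      (jumpMeasure F α s a b) u := by
  have := isFiniteMeasure_jumpMeasure (F := F) (a := a) (b := b) hα0 hα1 hs0 hs1
  obtain ⟨C, hW⟩ := exists_weightKernel_jumpMeasure (F := F) hα0 hα1 hs0 hs1 ha hb
  obtain ⟨M, hM⟩ := one_le_pow_mul_prodWeight (F := F) (p := Module.finrank ℝ F + 2 * s)
    (q := 1 + α) (by positivity) (by positivity)
  intro φ
  obtain ⟨B, hB⟩ := hW.schwartz_le one_pos hM φ
  have h0 := h φ
  simp only [jumpOperator_eq hα0 hα1 hs0 hs1 ha hb, mul_sub] at h0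
  rw [integral_sub (hu.integrable_mul_schwartz hα0 hα1 hs0 hs1 _)
    (hu.integrable_mul_average hα0 hα1 hs0 hs1 ha hb φ), sub_eq_zero] at h0
  rw [h0, hW.integral_backAverage_mul' hu φ.continuous hB]

open SchwartzMap in
lemma IsJumpSol.exists_pairing_dilation_le [Nontrivial F] (hα0 : 0 < α) (hα1 : α < 1) (hs0 : 0 < s)
    (hs1 : s < 1) (ha : 0 < a) (hb : 0 < b) (hu : WeightedIntegrable α s u)
    (h : IsJumpSol α s a b u) (v v' : SpaceTime F) (η : 𝓢(SpaceTime F, ℂ)) :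
    ∃ K, 0 ≤ K ∧ ∀ l m : ℝˣ, 1 ≤ (l : ℝ) → 1 ≤ (m : ℝ) → (l : ℝ) ^ (2 * s) = (m : ℝ) ^ α → ∀ r : ℝ,
      dilation F l m v = r • v → dilation F l m v' = r • v' →
      r ^ 2 * ‖∫ z, u z * (∂_{v} (∂_{v'} η)) z‖ ≤
        K * ∫ z, ‖(prodWeight (Module.finrank ℝ F + 2 * s) (1 + α) z : ℂ) *
          u (dilation F l m z)‖ := by
  have := isFiniteMeasure_jumpMeasure (F := F) (a := a) (b := b) hα0 hα1 hs0 hs1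
  obtain ⟨C, hW⟩ := exists_weightKernel_jumpMeasure (F := F) hα0 hα1 hs0 hs1 ha.le hb.le
  obtain ⟨M, hM⟩ := one_le_pow_mul_prodWeight (F := F) (p := Module.finrank ℝ F + 2 * s)
    (q := 1 + α) (by positivity) (by positivity)
  obtain ⟨c, δ, hc, hδ, hmc⟩ := exists_jumpSymbol_ge (F := F) hα0 hα1 hs0 hs1 ha hb
  obtain ⟨K, hK⟩ := exists_scaled_pairing_le hW one_pos hM
    (hasTemperateGrowth_jumpSymbol hα0 hα1) hc hδ hmc v v' η
  refine ⟨|K|, abs_nonneg K, fun l m hl hm hlm r hv hv' => ?_⟩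
  set S := dilation F l m with hS
  have hSu := integrable_prodWeight_comp_dilation (p := Module.finrank ℝ F + 2 * s)
    (q := 1 + α) (by positivity) (by positivity) hl hm hu.aestronglyMeasurable hu
  have hsol := (h.comp_dilation (by linarith) (by linarith) hlm).isAverageSol hα0 hα1 hs0 hs1
    ha.le hb.le hSu.1
  have h1 := hK S (dilation_symmetric l m) (norm_dilation_symm_le l m hl hm)
    (fun z => u (S z)) hSu.1 hsol
  have hD : 0 < |LinearMap.det (S : SpaceTime F →ₗ[ℝ] SpaceTime F)|⁻¹ := by
    rw [inv_pos, abs_pos]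
    exact (LinearEquiv.isUnit_det' S.toLinearEquiv).ne_zero
  set D := |LinearMap.det (S : SpaceTime F →ₗ[ℝ] SpaceTime F)|⁻¹
  let g : SpaceTime F → ℂ := fun z => u z * (∂_{v} (∂_{v'} η)) z
  have e : ∀ z, u (S z) * (∂_{v} (∂_{v'} (compCLMOfContinuousLinearEquiv ℂ S η))) z =
      ((r ^ 2 : ℝ) : ℂ) * g (S z) := by
    intro z
    change _ = _ * (u (S z) * (∂_{v} (∂_{v'} η)) (S z))
    rw [lineDerivOp_compCLMOfContinuousLinearEquiv, lineDerivOp_compCLMOfContinuousLinearEquiv,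
      hv, hv', LineDeriv.lineDerivOp_left_smul, LineDeriv.lineDerivOp_left_smul,
      LineDeriv.lineDerivOp_smul]
    simp only [compCLMOfContinuousLinearEquiv_apply, Function.comp_apply, smul_apply,
      Complex.real_smul]
    push_cast
    ring
  simp only [e] at h1
  rw [integral_const_mul, integral_comp_continuousLinearEquiv S g, norm_mul, norm_smul, Complex.norm_real,
    Real.norm_of_nonneg (sq_nonneg r), Real.norm_of_nonneg hD.le] at h1
  have h2 : D * (r ^ 2 * ‖∫ z, g z‖) ≤
      D * (K * ∫ z, ‖(prodWeight (Module.finrank ℝ F + 2 * s) (1 + α) z : ℂ) * u (S z)‖) := by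
    linarith
  refine (le_of_mul_le_mul_left h2 hD).trans ?_
  gcongr
  exact le_abs_self K

lemma eq_zero_of_forall_rpow_le {x C β : ℝ} (hx : 0 ≤ x) (hβ : β < 0)
    (h : ∀ r : ℝ, 1 ≤ r → x ≤ C * r ^ β) : x = 0 := by
  refine le_antisymm ?_ hx
  have ht : Tendsto (fun r : ℝ => C * r ^ β) atTop (𝓝 (C * 0)) := by
    have := tendsto_rpow_neg_atTop (y := -β) (by linarith)
    rw [neg_neg] at this
    exact this.const_mul C
  rw [mul_zero] at ht
  exact ge_of_tendsto ht ((eventually_ge_atTop 1).mono h)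

open SchwartzMap in
lemma IsJumpSol.integral_mul_time_deriv_eq_zero [Nontrivial F] (hα0 : 0 < α) (hα1 : α < 1)
    (hs0 : 0 < s) (hs1 : s < 1) (ha : 0 < a) (hb : 0 < b) (hu : WeightedIntegrable α s u)
    (h : IsJumpSol α s a b u) (η : 𝓢(SpaceTime F, ℂ)) :
    ∫ z, u z * (∂_{timeVec F} (∂_{timeVec F} η)) z = 0 := by
  obtain ⟨K, hK0, hK⟩ := h.exists_pairing_dilation_le hα0 hα1 hs0 hs1 ha hb hu
    (timeVec F) (timeVec F) η
  set N := ∫ z, ‖(prodWeight (Module.finrank ℝ F + 2 * s) (1 + α) z : ℂ) * u z‖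
  rw [← norm_eq_zero]
  refine eq_zero_of_forall_rpow_le (C := K * N) (β := 2 * α - 2) (norm_nonneg _) (by linarith)
    fun r hr => ?_
  have hr0 : 0 < r := by linarith
  have hl0 : 0 < r ^ (α / (2 * s)) := by positivity
  have hl : 1 ≤ r ^ (α / (2 * s)) := Real.one_le_rpow hr (by positivity)
  have hlm : (r ^ (α / (2 * s))) ^ (2 * s) = r ^ α := by
    rw [← Real.rpow_mul hr0.le]; congr 1; field_simp
  set l := r ^ (α / (2 * s))
  have h1 := hK (Units.mk0 l hl0.ne') (Units.mk0 r hr0.ne') hl hr hlm r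
    (by apply SpaceTime.ext_fst_snd <;> simp) (by apply SpaceTime.ext_fst_snd <;> simp)
  have h2 := (integrable_prodWeight_comp_dilation (p := Module.finrank ℝ F + 2 * s)
    (q := 1 + α) (l := Units.mk0 l hl0.ne') (m := Units.mk0 r hr0.ne') (by positivity)
    (by positivity) hl hr hu.aestronglyMeasurable hu).2
  rw [det_dilation, Units.val_mk0, Units.val_mk0, abs_of_pos (by positivity)] at h2
  have e : (l ^ Module.finrank ℝ F * r)⁻¹ * (l ^ (Module.finrank ℝ F + 2 * s) * r ^ (1 + α)) =
      r ^ (2 * α) := by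
    rw [Real.rpow_add hl0, Real.rpow_natCast, hlm, Real.rpow_add hr0, Real.rpow_one, two_mul,
      Real.rpow_add hr0]
    field_simp
  rw [e] at h2
  have h3 := h1.trans (mul_le_mul_of_nonneg_left h2 hK0)
  rw [Real.rpow_sub hr0, Real.rpow_two, ← mul_div_assoc, le_div_iff₀ (by positivity)]
  linarith

open SchwartzMap in
lemma IsJumpSol.integral_mul_space_deriv_eq_zero [Nontrivial F] (hα0 : 0 < α) (hα1 : α < 1)
    (hs0 : 0 < s) (hs1 : s < 1) (ha : 0 < a) (hb : 0 < b) (hu : WeightedIntegrable α s u)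
    (h : IsJumpSol α s a b u) {u₀ : F → ℂ} (hu₀ : ∀ᵐ z, u z = u₀ z.fst) (y y' : F)
    (η : 𝓢(SpaceTime F, ℂ)) :
    ∫ z, u z * (∂_{spaceIncl F y} (∂_{spaceIncl F y'} η)) z = 0 := by
  obtain ⟨K, hK0, hK⟩ := h.exists_pairing_dilation_le hα0 hα1 hs0 hs1 ha hb hu
    (spaceIncl F y) (spaceIncl F y') η
  set N := ∫ z, ‖(prodWeight (Module.finrank ℝ F + 2 * s) (1 + α) z : ℂ) * u z‖
  rw [← norm_eq_zero]
  refine eq_zero_of_forall_rpow_le (C := K * N) (β := 2 * s - 2) (norm_nonneg _) (by linarith)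
    fun l hl => ?_
  have hl0 : 0 < l := by linarith
  have hr0 : 0 < l ^ (2 * s / α) := by positivity
  have hr : 1 ≤ l ^ (2 * s / α) := Real.one_le_rpow hl (by positivity)
  have hlm : l ^ (2 * s) = (l ^ (2 * s / α)) ^ α := by
    rw [← Real.rpow_mul hl0.le]; congr 1; field_simp
  set r := l ^ (2 * s / α)
  have h1 := hK (Units.mk0 l hl0.ne') (Units.mk0 r hr0.ne') hl hr hlm l
    (by apply SpaceTime.ext_fst_snd <;> simp) (by apply SpaceTime.ext_fst_snd <;> simp)
  have h2 := (integrable_prodWeight_comp_dilation (p := Module.finrank ℝ F + 2 * s)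
    (q := 1 + α) (l := Units.mk0 l hl0.ne') (m := 1) (by positivity)
    (by positivity) hl (by simp) hu.aestronglyMeasurable hu).2
  rw [det_dilation, Units.val_mk0, Units.val_one, abs_of_pos (by positivity)] at h2
  have e : (l ^ Module.finrank ℝ F * 1)⁻¹ * (l ^ (Module.finrank ℝ F + 2 * s) *
      (1 : ℝ) ^ (1 + α)) = l ^ (2 * s) := by
    rw [Real.rpow_add hl0, Real.rpow_natCast, Real.one_rpow]
    field_simp
  rw [e] at h2
  have hae : ∀ m : ℝˣ, ∀ᵐ z, u (dilation F (Units.mk0 l hl0.ne') m z) = u₀ (l • z.fst) := by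
    intro m
    have hq : Measure.QuasiMeasurePreserving (dilation F (Units.mk0 l hl0.ne') m) volume volume :=
      ⟨(dilation F (Units.mk0 l hl0.ne') m).continuous.measurable, by
        rw [map_volume_continuousLinearEquiv]
        exact Measure.smul_absolutelyContinuous⟩
    filter_upwards [hq.ae hu₀] with z hz
    simpa using hz
  have e2 : ∫ z, ‖(prodWeight (Module.finrank ℝ F + 2 * s) (1 + α) z : ℂ) *
      u (dilation F (Units.mk0 l hl0.ne') (Units.mk0 r hr0.ne') z)‖ =
      ∫ z, ‖(prodWeight (Module.finrank ℝ F + 2 * s) (1 + α) z : ℂ) *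
      u (dilation F (Units.mk0 l hl0.ne') 1 z)‖ := by
    refine integral_congr_ae ?_
    filter_upwards [hae (Units.mk0 r hr0.ne'), hae 1] with z h1 h2
    rw [h1, h2]
  rw [e2] at h1
  have h3 := h1.trans (mul_le_mul_of_nonneg_left h2 hK0)
  rw [Real.rpow_sub hl0, Real.rpow_two, ← mul_div_assoc, le_div_iff₀ (by positivity)]
  linarith

end SecondDerivatives

section TranslatePairing

variable {V : Type*} [NormedAddCommGroup V] [InnerProductSpace ℝ V] [FiniteDimensional ℝ V]
  [MeasurableSpace V] [BorelSpace V]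

/-- Integrability against the polynomially decaying weight `(1 + ‖z‖)^{-M}`. -/
def TemperateIntegrable (M : ℕ) (u : V → ℂ) : Prop :=
  Integrable fun z => ((((1 + ‖z‖) ^ M)⁻¹ : ℝ) : ℂ) * u z

variable {M : ℕ} {u : V → ℂ}

lemma TemperateIntegrable.aestronglyMeasurable (hu : TemperateIntegrable M u) :
    AEStronglyMeasurable u := by
  have h1 : u = fun z => (((1 + ‖z‖) ^ M : ℝ) : ℂ) * (((((1 + ‖z‖) ^ M)⁻¹ : ℝ) : ℂ) * u z) := by
    ext z
    have : (((1 + ‖z‖) ^ M : ℝ) : ℂ) ≠ 0 := by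
      have := norm_nonneg z
      exact_mod_cast (by positivity : (1 + ‖z‖) ^ M ≠ 0)
    rw [Complex.ofReal_inv, mul_inv_cancel_left₀ this]
  rw [h1]
  refine AEStronglyMeasurable.mul ?_ (Integrable.aestronglyMeasurable hu)
  exact (by fun_prop : Continuous fun z : V => (((1 + ‖z‖) ^ M : ℝ) : ℂ)).aestronglyMeasurable

lemma TemperateIntegrable.locallyIntegrable (hu : TemperateIntegrable M u) :
    LocallyIntegrable u := by
  have h1 : u = fun z => (((1 + ‖z‖) ^ M : ℝ) : ℂ) * (((((1 + ‖z‖) ^ M)⁻¹ : ℝ) : ℂ) * u z) := by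
    ext z
    have : (((1 + ‖z‖) ^ M : ℝ) : ℂ) ≠ 0 := by
      have := norm_nonneg z
      exact_mod_cast (by positivity : (1 + ‖z‖) ^ M ≠ 0)
    rw [Complex.ofReal_inv, mul_inv_cancel_left₀ this]
  rw [h1]
  exact (Integrable.locallyIntegrable hu).continuous_mul (by fun_prop)

lemma SchwartzMap.exists_norm_comp_sub_le (ψ : 𝓢(V, ℂ)) (M : ℕ) (R : ℝ) :
    ∃ B, 0 ≤ B ∧ ∀ y, ‖y‖ ≤ R → ∀ z, ‖ψ (z - y)‖ ≤ B * ((1 + ‖z‖) ^ M)⁻¹ := by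
  have h1 := fun z => SchwartzMap.one_add_le_sup_seminorm_apply (𝕜 := ℂ) (m := (M, 0)) (k := M)
    (n := 0) le_rfl le_rfl ψ z
  set K := 2 ^ M * ((Finset.Iic (M, 0)).sup fun m => SchwartzMap.seminorm ℂ m.1 m.2) ψ
  refine ⟨|K| * (1 + |R|) ^ M, by positivity, fun y hy z => ?_⟩
  have h2 := h1 (z - y)
  rw [norm_iteratedFDeriv_zero] at h2
  have hz := norm_nonneg z
  rw [← div_eq_mul_inv, le_div_iff₀ (by positivity)]
  have h3 : 1 + ‖z‖ ≤ (1 + ‖z - y‖) * (1 + |R|) := by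
    have := norm_add_le (z - y) y
    rw [sub_add_cancel] at this
    nlinarith [norm_nonneg (z - y), abs_nonneg R, le_abs_self R]
  calc ‖ψ (z - y)‖ * (1 + ‖z‖) ^ M ≤ ‖ψ (z - y)‖ * ((1 + ‖z - y‖) * (1 + |R|)) ^ M := by gcongr
    _ = ((1 + ‖z - y‖) ^ M * ‖ψ (z - y)‖) * (1 + |R|) ^ M := by rw [mul_pow]; ring
    _ ≤ _ := by gcongr; exact h2.trans (le_abs_self K)

/-- The pairing of `u` with the translate of `ψ` by `y`. -/
noncomputable def translatePairing (u : V → ℂ) (ψ : 𝓢(V, ℂ)) (y : V) : ℂ := ∫ z, u z * ψ (z - y)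

lemma TemperateIntegrable.integrable_mul (hu : TemperateIntegrable M u) (ψ : 𝓢(V, ℂ)) (y : V) :
    Integrable fun z => u z * ψ (z - y) := by
  obtain ⟨B, hB0, hB⟩ := ψ.exists_norm_comp_sub_le M ‖y‖
  refine ((Integrable.norm hu).const_mul B).mono'
    (hu.aestronglyMeasurable.mul (by fun_prop : Continuous fun z => ψ (z - y)).aestronglyMeasurable) ?_
  filter_upwards with z
  have := norm_nonneg z
  rw [norm_mul, norm_mul, Complex.norm_real, Real.norm_of_nonneg (by positivity)]
  calc _ ≤ ‖u z‖ * (B * ((1 + ‖z‖) ^ M)⁻¹) := by gcongr; exact hB y le_rfl z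
    _ = _ := by ring

lemma TemperateIntegrable.hasDerivAt_translatePairing (hu : TemperateIntegrable M u)
    (ψ : 𝓢(V, ℂ)) (y v : V) (r : ℝ) :
    HasDerivAt (fun r : ℝ => translatePairing u ψ (y + r • v))
      (-translatePairing u (∂_{v} ψ) (y + r • v)) r := by
  obtain ⟨χ, hχ⟩ : ∃ χ : 𝓢(V, ℂ), χ = ∂_{v} ψ := ⟨_, rfl⟩
  rw [← hχ]
  obtain ⟨B, hB0, hB⟩ := χ.exists_norm_comp_sub_le M (‖y‖ + (|r| + 1) * ‖v‖)
  have key := hasDerivAt_integral_of_dominated_loc_of_deriv_le (μ := (volume : Measure V))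
    (F := fun (r : ℝ) z => u z * ψ (z - (y + r • v)))
    (F' := fun (r : ℝ) z => -(u z * χ (z - (y + r • v))))
    (bound := fun z => B * ‖((((1 + ‖z‖) ^ M)⁻¹ : ℝ) : ℂ) * u z‖)
    (Metric.ball_mem_nhds r one_pos)
    (Eventually.of_forall fun r => (hu.integrable_mul ψ _).aestronglyMeasurable)
    (hu.integrable_mul ψ _) (hu.integrable_mul χ _).neg.aestronglyMeasurable
    ?_ ((Integrable.norm hu).const_mul B) ?_
  · refine key.2.congr_deriv ?_
    rw [integral_neg, translatePairing]
  · filter_upwards with z r' hr'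
    have := norm_nonneg z
    rw [norm_neg, norm_mul, norm_mul, Complex.norm_real, Real.norm_of_nonneg (by positivity)]
    have hr1 : ‖y + r' • v‖ ≤ ‖y‖ + (|r| + 1) * ‖v‖ := by
      refine (norm_add_le _ _).trans ?_
      rw [norm_smul, Real.norm_eq_abs]
      gcongr
      rw [Metric.mem_ball, Real.dist_eq] at hr'
      have := abs_sub_abs_le_abs_sub r' r
      linarith
    calc _ ≤ ‖u z‖ * (B * ((1 + ‖z‖) ^ M)⁻¹) := by gcongr; exact hB _ hr1 z
      _ = _ := by ring
  · filter_upwards with z r' _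
    rw [← mul_neg]
    refine HasDerivAt.const_mul (u z) ?_
    have h1 : HasDerivAt (fun r : ℝ => z - (y + r • v)) (-v) r' := by
      simpa using (((hasDerivAt_id r').smul_const v).const_add y).const_sub z
    have h2 := (ψ.differentiableAt (x := z - (y + r' • v))).hasFDerivAt.comp_hasDerivAt r' h1
    rw [hχ, SchwartzMap.lineDerivOp_apply_eq_fderiv, ← map_neg]
    exact h2

lemma TemperateIntegrable.continuous_translatePairing (hu : TemperateIntegrable M u)
    (ψ : 𝓢(V, ℂ)) : Continuous (translatePairing u ψ) := by
  rw [continuous_iff_continuousAt]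
  intro y
  obtain ⟨B, hB0, hB⟩ := ψ.exists_norm_comp_sub_le M (‖y‖ + 1)
  refine continuousAt_of_dominated (F := fun y z => u z * ψ (z - y))
    (bound := fun z => B * ‖((((1 + ‖z‖) ^ M)⁻¹ : ℝ) : ℂ) * u z‖)
    (Eventually.of_forall fun r => (hu.integrable_mul ψ _).aestronglyMeasurable)
    ?_ ((Integrable.norm hu).const_mul B) ?_
  · filter_upwards [Metric.ball_mem_nhds y one_pos] with y' hy'
    filter_upwards with z
    have := norm_nonneg z
    rw [norm_mul, norm_mul, Complex.norm_real, Real.norm_of_nonneg (by positivity)]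
    have hr1 : ‖y'‖ ≤ ‖y‖ + 1 := by
      rw [Metric.mem_ball, dist_eq_norm] at hy'
      have := norm_sub_norm_le y' y
      linarith
    calc _ ≤ ‖u z‖ * (B * ((1 + ‖z‖) ^ M)⁻¹) := by gcongr; exact hB _ hr1 z
      _ = _ := by ring
  · filter_upwards with z
    exact (by fun_prop : Continuous fun y => u z * ψ (z - y)).continuousAt

lemma lineDerivOp_compSubConstCLM (ψ : 𝓢(V, ℂ)) (v a : V) :
    ∂_{v} (ψ.compSubConstCLM ℂ a) = (∂_{v} ψ).compSubConstCLM ℂ a := by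
  ext z
  rw [SchwartzMap.compSubConstCLM_apply, SchwartzMap.lineDerivOp_apply_eq_fderiv,
    SchwartzMap.lineDerivOp_apply_eq_fderiv]
  have : (⇑(ψ.compSubConstCLM ℂ a)) = fun z => ψ (z - a) := rfl
  rw [this, fderiv_comp_sub]

lemma TemperateIntegrable.translatePairing_lineDeriv_eq (hu : TemperateIntegrable M u)
    {v v' : V} (h : ∀ φ : 𝓢(V, ℂ), ∫ z, u z * (∂_{v} (∂_{v'} φ)) z = 0) (ψ : 𝓢(V, ℂ)) (y : V)
    (r : ℝ) : translatePairing u (∂_{v'} ψ) (y + r • v) = translatePairing u (∂_{v'} ψ) y := by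
  have h1 : ∀ y, translatePairing u (∂_{v} (∂_{v'} ψ)) y = 0 := fun y => by
    have := h (ψ.compSubConstCLM ℂ y)
    rwa [lineDerivOp_compSubConstCLM, lineDerivOp_compSubConstCLM] at this
  have h2 : ∀ r : ℝ, HasDerivAt (fun r : ℝ => translatePairing u (∂_{v'} ψ) (y + r • v)) 0 r :=
    fun r => by simpa [h1] using hu.hasDerivAt_translatePairing (∂_{v'} ψ) y v r
  have := is_const_of_deriv_eq_zero (fun r => (h2 r).differentiableAt) (fun r => (h2 r).deriv) r 0
  simpa using this

lemma TemperateIntegrable.translatePairing_smul_eq (hu : TemperateIntegrable M u)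
    {v : V} (h : ∀ φ : 𝓢(V, ℂ), ∫ z, u z * (∂_{v} (∂_{v} φ)) z = 0) (ψ : 𝓢(V, ℂ)) (r : ℝ) :
    translatePairing u ψ (r • v) =
      translatePairing u ψ 0 - r * translatePairing u (∂_{v} ψ) 0 := by
  have h1 : ∀ r : ℝ, HasDerivAt (fun r : ℝ => translatePairing u ψ (0 + r • v) +
      r * translatePairing u (∂_{v} ψ) 0) 0 r := fun r => by
    have h2 := (hu.hasDerivAt_translatePairing ψ 0 v r).add
      ((Complex.ofRealCLM.hasDerivAt (x := r)).mul_const (translatePairing u (∂_{v} ψ) 0))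
    rw [hu.translatePairing_lineDeriv_eq h] at h2
    exact h2.congr_deriv (by simp)
  have := is_const_of_deriv_eq_zero (fun r => (h1 r).differentiableAt) (fun r => (h1 r).deriv) r 0
  simp only [zero_add, zero_smul, Complex.ofReal_zero, zero_mul, add_zero] at this
  rw [← this, add_sub_cancel_right]

lemma TemperateIntegrable.translatePairing_add_sub (hu : TemperateIntegrable M u)
    {v v' : V} (h : ∀ φ : 𝓢(V, ℂ), ∫ z, u z * (∂_{v} (∂_{v'} φ)) z = 0) (ψ : 𝓢(V, ℂ)) :
    translatePairing u ψ (v + v') - translatePairing u ψ v' =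
      translatePairing u ψ v - translatePairing u ψ 0 := by
  have h1 : ∀ r : ℝ, HasDerivAt (fun r : ℝ => translatePairing u ψ (v + r • v') -
      translatePairing u ψ (0 + r • v')) 0 r := fun r => by
    have h2 := (hu.hasDerivAt_translatePairing ψ v v' r).sub
      (hu.hasDerivAt_translatePairing ψ 0 v' r)
    have h3 := hu.translatePairing_lineDeriv_eq h ψ (0 + r • v') 1
    rw [show 0 + r • v' + (1 : ℝ) • v = v + r • v' by simp [add_comm]] at h3
    rw [h3, sub_self] at h2
    exact h2
  have := is_const_of_deriv_eq_zero (fun r => (h1 r).differentiableAt) (fun r => (h1 r).deriv) 1 0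
  simpa using this

lemma LocallyIntegrable.ae_eq_zero_of_schwartz (hu : LocallyIntegrable u)
    (h : ∀ ψ : 𝓢(V, ℂ), HasCompactSupport ψ → ∫ z, u z * ψ z = 0) : ∀ᵐ z, u z = 0 := by
  refine ae_eq_zero_of_integral_contDiff_smul_eq_zero hu fun g hg hgs => ?_
  have h1 : HasCompactSupport fun z => (g z : ℂ) := hgs.comp_left (g := Complex.ofReal) rfl
  have := h (h1.toSchwartzMap (Complex.ofRealCLM.contDiff.comp hg)) h1
  rw [← this]
  refine integral_congr_ae (Eventually.of_forall fun z => ?_)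
  change g z • u z = u z * (g z : ℂ)
  rw [Complex.real_smul, mul_comm]

end TranslatePairing

section Affine

variable {V : Type*} [NormedAddCommGroup V] [InnerProductSpace ℝ V] [FiniteDimensional ℝ V]
  [MeasurableSpace V] [BorelSpace V]

variable {M : ℕ} {u : V → ℂ}

lemma TemperateIntegrable.integral_translatePairing_mul (hu : TemperateIntegrable M u)
    (ψ χ : 𝓢(V, ℂ)) (hχ : HasCompactSupport χ) :
    ∫ y, translatePairing u ψ y * χ y = ∫ z, u z * ∫ y, ψ (z - y) * χ y := by
  obtain ⟨R, hR⟩ := hχ.isCompact.isBounded.exists_norm_le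
  obtain ⟨B, hB0, hB⟩ := ψ.exists_norm_comp_sub_le M R
  have hi : Integrable (fun p : V × V => u p.1 * (ψ (p.1 - p.2) * χ p.2))
      (volume.prod volume) := by
    refine ((Integrable.norm hu).mul_prod ((χ.integrable (μ := volume)).norm.const_mul B)).mono'
      (hu.aestronglyMeasurable.comp_fst.mul (by fun_prop :
        Continuous fun p : V × V => ψ (p.1 - p.2) * χ p.2).aestronglyMeasurable) ?_
    filter_upwards with p
    have := norm_nonneg p.1
    rw [norm_mul, norm_mul, norm_mul, Complex.norm_real, Real.norm_of_nonneg (by positivity)]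
    by_cases hp : p.2 ∈ tsupport χ
    · calc _ ≤ ‖u p.1‖ * ((B * ((1 + ‖p.1‖) ^ M)⁻¹) * ‖χ p.2‖) := by
            gcongr; exact hB _ (hR _ hp) _
        _ = _ := by ring
    · rw [image_eq_zero_of_notMem_tsupport hp]
      simp
  have h1 := integral_integral_swap (f := fun z y => u z * (ψ (z - y) * χ y)) hi
  simp only [integral_const_mul] at h1
  rw [h1]
  refine integral_congr_ae (Eventually.of_forall fun y => ?_)
  simp only [translatePairing, ← mul_assoc, integral_mul_const]

lemma TemperateIntegrable.integral_translatePairing_mul_comm (hu : TemperateIntegrable M u)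
    (ψ χ : 𝓢(V, ℂ)) (hψ : HasCompactSupport ψ) (hχ : HasCompactSupport χ) :
    ∫ y, translatePairing u ψ y * χ y = ∫ y, translatePairing u χ y * ψ y := by
  rw [hu.integral_translatePairing_mul ψ χ hχ, hu.integral_translatePairing_mul χ ψ hψ]
  refine integral_congr_ae (Eventually.of_forall fun z => ?_)
  dsimp only
  congr 1
  rw [← integral_sub_left_eq_self _ volume z]
  simp [mul_comm]

/-- A locally integrable function of tempered growth whose second distributional derivatives all
vanish is affine. -/
theorem TemperateIntegrable.exists_affine (hu : TemperateIntegrable M u)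
    (h : ∀ (v v' : V) (φ : 𝓢(V, ℂ)), ∫ z, u z * (∂_{v} (∂_{v'} φ)) z = 0) :
    ∃ (c : ℂ) (l : V →L[ℝ] ℂ), ∀ᵐ z, u z = c + l z := by
  let f : ContDiffBump (0 : V) := ⟨1, 2, one_pos, one_lt_two⟩
  have hχs : HasCompactSupport fun z => (f.normed volume z : ℂ) :=
    f.hasCompactSupport_normed.comp_left (g := Complex.ofReal) rfl
  obtain ⟨χ, hχ⟩ : ∃ χ : 𝓢(V, ℂ), ∀ z, χ z = (f.normed volume z : ℂ) :=
    ⟨hχs.toSchwartzMap (Complex.ofRealCLM.contDiff.comp f.contDiff_normed), fun _ => rfl⟩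
  have hχs' : HasCompactSupport χ := by rwa [show (χ : V → ℂ) = _ from funext hχ]
  have hχ1 : ∫ z, χ z = 1 := by
    simp only [hχ, integral_complex_ofReal, f.integral_normed, Complex.ofReal_one]
  have hχe : ∀ z, χ (-z) = χ z := fun z => by rw [hχ, hχ, f.normed_neg]
  have hadd : ∀ (ψ : 𝓢(V, ℂ)) v v', translatePairing u ψ (v + v') - translatePairing u ψ 0 =
      (translatePairing u ψ v - translatePairing u ψ 0) +
        (translatePairing u ψ v' - translatePairing u ψ 0) := fun ψ v v' => by
    rw [← hu.translatePairing_add_sub (h v v') ψ]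
    ring
  let l : V →L[ℝ] ℂ := AddMonoidHom.toRealLinearMap
    (AddMonoidHom.mk' (fun y => translatePairing u χ y - translatePairing u χ 0) (hadd χ))
    ((hu.continuous_translatePairing χ).sub continuous_const)
  have hl : ∀ y, l y = translatePairing u χ y - translatePairing u χ 0 := fun _ => rfl
  refine ⟨translatePairing u χ 0, l, ?_⟩
  have hT : Continuous fun z => translatePairing u χ 0 + l z := by fun_prop
  have h0 := LocallyIntegrable.ae_eq_zero_of_schwartz
    (u := fun z => u z - (translatePairing u χ 0 + l z))
    (hu.locallyIntegrable.sub hT.locallyIntegrable) fun ψ hψ => ?_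
  · filter_upwards [h0] with z hz
    exact sub_eq_zero.1 hz
  · have i1 : Integrable fun z => u z * ψ z := by simpa using hu.integrable_mul ψ 0
    have i2 : Integrable fun z => (translatePairing u χ 0 + l z) * ψ z :=
      (hT.mul ψ.continuous).integrable_of_hasCompactSupport hψ.mul_left
    simp only [sub_mul]
    rw [integral_sub i1 i2, sub_eq_zero]
    have e1 : ∫ z, (translatePairing u χ 0 + l z) * ψ z = ∫ y, translatePairing u ψ y * χ y := by
      rw [hu.integral_translatePairing_mul_comm ψ χ hψ hχs']
      simp [hl]
    have hTψ := hu.continuous_translatePairing ψ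
    have i3 : Integrable fun y => translatePairing u ψ y * χ y :=
      (hTψ.mul χ.continuous).integrable_of_hasCompactSupport hχs'.mul_left
    have e2 : ∫ y, translatePairing u ψ y * χ y = ∫ y, translatePairing u ψ (-y) * χ y := by
      rw [← integral_neg_eq_self]
      simp [hχe]
    have i4 : Integrable fun y => translatePairing u ψ (-y) * χ y :=
      ((hTψ.comp continuous_neg).mul χ.continuous).integrable_of_hasCompactSupport hχs'.mul_left
    have e3 : ∫ y, translatePairing u ψ y * χ y + translatePairing u ψ (-y) * χ y =
        2 * translatePairing u ψ 0 := by
      rw [← mul_one (2 * translatePairing u ψ 0), ← hχ1, ← integral_const_mul]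
      refine integral_congr_ae (Eventually.of_forall fun y => ?_)
      have := hadd ψ y (-y)
      rw [add_neg_cancel, sub_self] at this
      linear_combination (-χ y) * this
    rw [integral_add i3 i4, ← e2] at e3
    have e4 : translatePairing u ψ 0 = ∫ z, u z * ψ z := by simp [translatePairing]
    rw [e1, ← e4]
    linear_combination (-1 / 2) * e3

end Affine

section Liouville

variable {F : Type*} [NormedAddCommGroup F] [InnerProductSpace ℝ F] [FiniteDimensional ℝ F]
  [MeasurableSpace F] [BorelSpace F]

variable {α s a b : ℝ} {u : SpaceTime F → ℂ}

lemma WeightedIntegrable.exists_temperateIntegrable (hα0 : 0 < α) (hs0 : 0 < s)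
    (hu : WeightedIntegrable α s u) : ∃ M, TemperateIntegrable M u := by
  obtain ⟨M, hM⟩ := one_le_pow_mul_prodWeight (F := F) (p := Module.finrank ℝ F + 2 * s)
    (q := 1 + α) (by positivity) (by positivity)
  refine ⟨M, (Integrable.norm hu).mono' (AEStronglyMeasurable.mul ?_ hu.aestronglyMeasurable) ?_⟩
  · refine Continuous.aestronglyMeasurable ?_
    refine Complex.continuous_ofReal.comp (Continuous.inv₀ (by fun_prop) fun z => ?_)
    have := norm_nonneg z
    positivity
  · filter_upwards with z
    have := norm_nonneg z
    rw [norm_mul, norm_mul, Complex.norm_real, Complex.norm_real,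
      Real.norm_of_nonneg (by positivity), Real.norm_of_nonneg (prodWeight_pos _ _ z).le]
    gcongr
    rw [inv_le_iff_one_le_mul₀ (by positivity), mul_comm]
    exact hM z

lemma not_integrable_timeKernel_mul (hα1 : α < 1) :
    ¬ Integrable fun σ => timeKernel α σ * σ := by
  intro h
  have h1 : IntegrableOn (fun σ : ℝ => σ ^ (-α)) (Ioi 1) := by
    have hc : 0 < 1 - Real.exp (-(2 * Real.pi)) := by
      have : Real.exp (-(2 * Real.pi)) < 1 := by
        rw [Real.exp_lt_one_iff]
        have := Real.pi_pos
        linarith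
      linarith
    refine ((h.integrableOn (s := Ioi 1)).const_mul
      (1 - Real.exp (-(2 * Real.pi)))⁻¹).mono' ?_ ?_
    · exact (measurable_id.pow_const _).aestronglyMeasurable
    · refine (ae_restrict_iff' measurableSet_Ioi).2 (Eventually.of_forall fun σ hσ => ?_)
      have hσ1 : 1 < σ := hσ
      have hσ0 : 0 < σ := by linarith
      rw [Real.norm_of_nonneg (by positivity), timeKernel, indicator_of_mem (mem_Ioi.2 hσ0),
        ← div_eq_inv_mul, le_div_iff₀ hc]
      have e : σ ^ (-α) = σ ^ (-(1 + α)) * σ := by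
        nth_rewrite 3 [← Real.rpow_one σ]
        rw [← Real.rpow_add hσ0]
        ring_nf
      have h2 : Real.exp (-(2 * Real.pi * σ)) ≤ Real.exp (-(2 * Real.pi)) := by
        rw [Real.exp_le_exp]
        nlinarith [Real.pi_pos]
      calc σ ^ (-α) * (1 - Real.exp (-(2 * Real.pi)))
          ≤ σ ^ (-α) * (1 - Real.exp (-(2 * Real.pi * σ))) := by gcongr
        _ = _ := by rw [e]; ring
  rw [integrableOn_Ioi_rpow_iff one_pos] at h1
  linarith

lemma WeightedIntegrable.integral_mul_time_deriv_eq_zero [Nontrivial F] (hα0 : 0 < α)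
    (hα1 : α < 1) (hs0 : 0 < s) (hs1 : s < 1) (hu : WeightedIntegrable α s u)
    (h : ∀ φ : 𝓢(SpaceTime F, ℂ), ∫ z, u z * (∂_{timeVec F} (∂_{timeVec F} φ)) z = 0)
    (ψ : 𝓢(SpaceTime F, ℂ)) : ∫ z, u z * (∂_{timeVec F} ψ) z = 0 := by
  obtain ⟨M, hM⟩ := hu.exists_temperateIntegrable hα0 hs0
  obtain ⟨N, hN⟩ := one_le_pow_mul_prodWeight (F := F) (p := Module.finrank ℝ F + 2 * s)
    (q := 1 + α) (by positivity) (by positivity)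
  have := isFiniteMeasure_jumpMeasure (F := F) (a := 1) (b := 1) hα0 hα1 hs0 hs1
  obtain ⟨C, hW⟩ := exists_weightKernel_jumpMeasure (F := F) hα0 hα1 hs0 hs1 zero_le_one
    zero_le_one
  obtain ⟨B, hB⟩ := hW.schwartz_le one_pos hN ψ
  have i1 := (hW.integrable_unshear_mul hu ψ.continuous hB).integral_prod_right
  have e1 : ∀ y, ∫ z, u (z - y) * ψ z = translatePairing u ψ (-y) := fun y => by
    rw [← integral_add_right_eq_self _ y, translatePairing]
    simp
  simp only [e1] at i1
  have i2 := Integrable.mono_measure i1 (Measure.le_add_left le_rfl :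
    pushKernel (fun σ => 1 * timeKernel α σ)
      (ContinuousLinearMap.toSpanSingleton ℝ (timeVec F)) ≤ jumpMeasure F α s 1 1)
  simp only [one_mul] at i2
  have hk := integrable_timeKernel hα0 hα1
  have hc : Continuous fun y => translatePairing u ψ (-y) :=
    (hM.continuous_translatePairing ψ).comp continuous_neg
  rw [integrable_pushKernel_iff timeKernel_nonneg hk hc] at i2
  have e2 : translatePairing u (∂_{timeVec F} ψ) 0 = ∫ z, u z * (∂_{timeVec F} ψ) z := by
    simp [translatePairing]
  rw [← e2]
  have e3 : ∀ σ : ℝ, translatePairing u ψ (-ContinuousLinearMap.toSpanSingleton ℝ (timeVec F) σ) =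
      translatePairing u ψ 0 + σ * translatePairing u (∂_{timeVec F} ψ) 0 := fun σ => by
    have := hM.translatePairing_smul_eq h ψ (-σ)
    rw [neg_smul] at this
    rw [ContinuousLinearMap.toSpanSingleton_apply, this]
    push_cast
    ring
  simp only [e3] at i2
  by_contra hne
  set A := translatePairing u ψ 0
  set D := translatePairing u (∂_{timeVec F} ψ) 0
  have i3 : Integrable fun σ => timeKernel α σ • A := hk.smul_const A
  have i4 := ((i2.sub i3).mul_const D⁻¹).norm
  refine not_integrable_timeKernel_mul hα1 (i4.mono' ?_ ?_)
  · exact hk.aestronglyMeasurable.mul measurable_id.aestronglyMeasurable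
  · filter_upwards with σ
    refine le_of_eq ?_
    rw [← Complex.norm_real]
    congr 1
    simp only [Pi.sub_apply, Complex.real_smul]
    push_cast
    field_simp
    ring

lemma TemperateIntegrable.ae_eq_add_right {M : ℕ} (hu : TemperateIntegrable M u)
    {v : SpaceTime F} (h : ∀ φ : 𝓢(SpaceTime F, ℂ), ∫ z, u z * (∂_{v} φ) z = 0) (r : ℝ) :
    ∀ᵐ z, u (z + r • v) = u z := by
  have hm : (volume : Measure (SpaceTime F)).map (Homeomorph.addRight (r • v)) = volume :=
    map_add_right_eq_self volume (r • v)
  have h1 : LocallyIntegrable (fun z => u (z + r • v)) := by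
    have := hu.locallyIntegrable
    rw [← hm, locallyIntegrable_map_homeomorph] at this
    exact this
  have h2 := LocallyIntegrable.ae_eq_zero_of_schwartz (u := fun z => u (z + r • v) - u z)
    (h1.sub hu.locallyIntegrable) fun ψ _ => ?_
  · filter_upwards [h2] with z hz
    exact sub_eq_zero.1 hz
  have h0 : ∀ y, translatePairing u (∂_{v} ψ) y = 0 := fun y => by
    have := h (ψ.compSubConstCLM ℂ y)
    rwa [lineDerivOp_compSubConstCLM] at this
  have h3 : ∀ r : ℝ, HasDerivAt (fun r : ℝ => translatePairing u ψ (0 + r • v)) 0 r :=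
    fun r => by simpa [h0] using hu.hasDerivAt_translatePairing ψ 0 v r
  have h4 := is_const_of_deriv_eq_zero (fun r => (h3 r).differentiableAt) (fun r => (h3 r).deriv) r 0
  have i1 : Integrable fun z => u z * ψ z := by simpa using hu.integrable_mul ψ 0
  have i2 : Integrable fun z => u (z + r • v) * ψ z := by
    have := (hu.integrable_mul ψ (r • v)).comp_add_right (r • v)
    simpa using this
  simp only [sub_mul]
  rw [integral_sub i2 i1, sub_eq_zero]
  simp only [zero_add, zero_smul, translatePairing, sub_zero] at h4
  have h5 := integral_add_right_eq_self (μ := volume) (fun z => u z * ψ (z - r • v)) (r • v)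
  rw [← h4, ← h5]
  simp

lemma exists_ae_eq_comp_fst (hu : AEStronglyMeasurable u)
    (h : ∀ r : ℝ, ∀ᵐ z, u (z + r • timeVec F) = u z) :
    ∃ u₀ : F → ℂ, ∀ᵐ z : SpaceTime F, u z = u₀ z.fst := by
  obtain ⟨w, hw, huw⟩ := hu
  have hw' := hw.measurable
  have h1 : ∀ r : ℝ, ∀ᵐ z, w (z + r • timeVec F) = w z := fun r => by
    filter_upwards [h r, huw, (measurePreserving_add_right volume
      (r • timeVec F)).quasiMeasurePreserving.ae huw] with z e1 e2 e3
    rw [← e3, e1, e2]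
  have h2 : ∀ᵐ z : SpaceTime F, ∀ᵐ r : ℝ, w (z + r • timeVec F) = w z := by
    rw [Measure.ae_ae_comm (p := fun (z : SpaceTime F) (r : ℝ) => w (z + r • timeVec F) = w z)]
    · exact Eventually.of_forall h1
    · refine measurableSet_eq_fun ?_ ?_
      · exact hw'.comp (by fun_prop :
          Continuous fun p : SpaceTime F × ℝ => p.1 + p.2 • timeVec F).measurable
      · exact hw'.comp measurable_fst
  refine ⟨fun x => ∫ r in Ioc (0 : ℝ) 1, w (WithLp.toLp 2 (x, r)), ?_⟩
  filter_upwards [h2, huw] with z hz e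
  have h3 : ∀ᵐ r : ℝ, w (WithLp.toLp 2 (z.fst, r)) = w z := by
    filter_upwards [(measurePreserving_sub_right volume
      z.snd).quasiMeasurePreserving.ae hz] with r hr
    rw [← hr]
    congr 1
    apply SpaceTime.ext_fst_snd <;> simp
  rw [integral_congr_ae (ae_restrict_of_ae h3), e]
  simp

/-- Solutions of the jump equation in the weighted space are affine in space and independent of
time. -/
theorem IsJumpSol.exists_affine [Nontrivial F] (hα0 : 0 < α) (hα1 : α < 1) (hs0 : 0 < s)
    (hs1 : s < 1) (ha : 0 < a) (hb : 0 < b) (hu : WeightedIntegrable α s u)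
    (h : IsJumpSol α s a b u) :
    ∃ (c : ℂ) (l : F →L[ℝ] ℂ), ∀ᵐ z, u z = c + l z.fst := by
  obtain ⟨M, hM⟩ := hu.exists_temperateIntegrable hα0 hs0
  have h1 := hu.integral_mul_time_deriv_eq_zero hα0 hα1 hs0 hs1
    (h.integral_mul_time_deriv_eq_zero hα0 hα1 hs0 hs1 ha hb hu)
  have h2 := hM.ae_eq_add_right h1
  obtain ⟨u₀, hu₀⟩ := exists_ae_eq_comp_fst hM.aestronglyMeasurable h2
  have h3 := h.integral_mul_space_deriv_eq_zero hα0 hα1 hs0 hs1 ha hb hu hu₀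
  have h4 : ∀ (v : SpaceTime F) (φ : 𝓢(SpaceTime F, ℂ)),
      ∫ z, u z * (∂_{v} (∂_{timeVec F} φ)) z = 0 := fun v φ => by
    have h0 : ∀ y, translatePairing u (∂_{timeVec F} φ) y = 0 := fun y => by
      have := h1 (φ.compSubConstCLM ℂ y)
      rwa [lineDerivOp_compSubConstCLM] at this
    have h5 := hM.hasDerivAt_translatePairing (∂_{timeVec F} φ) 0 v 0
    simp only [h0] at h5
    have h6 := h5.unique (hasDerivAt_const 0 0)
    simpa [translatePairing] using h6
  have hdec : ∀ v : SpaceTime F, v = spaceIncl F v.fst + v.snd • timeVec F := fun v => by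
    apply SpaceTime.ext_fst_snd <;> simp
  have hi : ∀ φ : 𝓢(SpaceTime F, ℂ), Integrable fun z => u z * φ z := fun φ => by
    simpa using hM.integrable_mul φ 0
  have hlin : ∀ (x : F) (r : ℝ) (φ : 𝓢(SpaceTime F, ℂ)),
      ∂_{spaceIncl F x + r • timeVec F} φ = ∂_{spaceIncl F x} φ + r • ∂_{timeVec F} φ :=
    fun x r φ => by
      rw [LineDeriv.lineDerivOp_left_add, LineDeriv.lineDerivOp_left_smul]
  have hpair : ∀ (r : ℝ) (φ χ : 𝓢(SpaceTime F, ℂ)), ∫ z, u z * (φ + r • χ) z =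
      (∫ z, u z * φ z) + r * ∫ z, u z * χ z := fun r φ χ => by
    rw [← integral_const_mul, ← integral_add (hi φ) ((hi χ).const_mul _)]
    refine integral_congr_ae (Eventually.of_forall fun z => ?_)
    simp only [add_apply, smul_apply, Complex.real_smul]
    ring
  obtain ⟨c, l, hl⟩ := hM.exists_affine fun v v' φ => by
    rw [hdec v, hlin, hpair, h1, mul_zero, add_zero, hdec v', hlin, LineDeriv.lineDerivOp_add,
      LineDeriv.lineDerivOp_smul, hpair, h3, h4]
    simp
  have hle : l (timeVec F) = 0 := by
    obtain ⟨z, e1, e2, e3⟩ := ((h2 1).and (hl.and ((measurePreserving_add_right volume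
      ((1 : ℝ) • timeVec F)).quasiMeasurePreserving.ae hl))).exists
    rw [e1, e2, one_smul, map_add, ← add_assoc] at e3
    exact (left_eq_add.1 e3)
  refine ⟨c, l ∘L spaceIncl F, ?_⟩
  filter_upwards [hl] with z hz
  rw [hz, ContinuousLinearMap.comp_apply]
  congr 1
  conv_lhs => rw [hdec z]
  rw [map_add, map_smul, hle, smul_zero, add_zero]

end Liouville

section FractionalOperators

variable {n : ℕ} {α s : ℝ}

lemma Gamma_neg_ne_zero (hα0 : 0 < α) (hα1 : α < 1) : Real.Gamma (-α) ≠ 0 :=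
  Real.Gamma_ne_zero fun m hm => by
    rcases m with _ | m
    · simp at hm; linarith
    · push_cast at hm
      have : (0 : ℝ) ≤ m := Nat.cast_nonneg m
      linarith

lemma Calpha_pos (hα0 : 0 < α) (hα1 : α < 1) : 0 < Calpha α := by
  have := Gamma_neg_ne_zero hα0 hα1
  unfold Calpha
  positivity

lemma Cns_pos (hs0 : 0 < s) (hs1 : s < 1) : 0 < Cns n s := by
  have := Gamma_neg_ne_zero hs0 hs1
  have hG : 0 < Real.Gamma ((n : ℝ) / 2 + s) := Real.Gamma_pos_of_pos (by positivity)
  have := Real.pi_pos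
  unfold Cns
  positivity

lemma marchaudRight_eq (φ : EuclideanSpace ℝ (Fin n) × ℝ → ℝ) (x : EuclideanSpace ℝ (Fin n))
    (t : ℝ) : marchaudRight α φ x t =
      Calpha α * ∫ σ in Ioi (0 : ℝ), σ ^ (-(1 + α)) * (φ (x, t) - φ (x, t + σ)) := by
  have h := (measurePreserving_add_right volume t).setIntegral_preimage_emb
    (measurableEmbedding_addRight t)
    (fun τ => (φ (x, t) - φ (x, τ)) / (τ - t) ^ (1 + α)) (Ioi t)
  rw [marchaudRight, ← h, preimage_add_const_Ioi, sub_self]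
  congr 1
  refine setIntegral_congr_fun measurableSet_Ioi fun σ hσ => ?_
  simp only [add_sub_cancel_right]
  rw [Real.rpow_neg (le_of_lt hσ), div_eq_inv_mul, add_comm t σ]

lemma fracLap_eq (φ : EuclideanSpace ℝ (Fin n) × ℝ → ℝ) (x : EuclideanSpace ℝ (Fin n))
    (t : ℝ) : fracLap s φ x t = Cns n s / 2 * ∫ y : EuclideanSpace ℝ (Fin n),
      ‖y‖ ^ (-((n : ℝ) + 2 * s)) * (2 * φ (x, t) - φ (x + y, t) - φ (x - y, t)) := by
  rw [fracLap]
  congr 1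
  refine integral_congr_ae (Eventually.of_forall fun y => ?_)
  dsimp only
  rw [Real.rpow_neg (norm_nonneg y), div_eq_inv_mul]

/-- The operator `D_right^α + (-Δ)^s` is a jump operator. -/
lemma jumpOperator_ofReal (hs0 : 0 < s) (φ : EuclideanSpace ℝ (Fin n) × ℝ → ℝ)
    (z : SpaceTime (EuclideanSpace ℝ (Fin n))) :
    jumpOperator α s (Cns n s / Real.Gamma ((n : ℝ) / 2 + s)) (Calpha α)
      (fun z => (φ (z.fst, z.snd) : ℂ)) z =
      ((marchaudRight α φ z.fst z.snd + fracLap s φ z.fst z.snd : ℝ) : ℂ) := by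
  have hG : Real.Gamma ((n : ℝ) / 2 + s) ≠ 0 := (Real.Gamma_pos_of_pos (by positivity)).ne'
  have hG' : (Real.Gamma ((n : ℝ) / 2 + s) : ℂ) ≠ 0 := by exact_mod_cast hG
  rw [marchaudRight_eq, fracLap_eq, jumpOperator, finrank_euclideanSpace_fin]
  push_cast
  rw [← integral_complex_ofReal, ← integral_complex_ofReal, add_comm]
  simp only [WithLp.add_fst, WithLp.add_snd, WithLp.sub_fst, WithLp.sub_snd, WithLp.smul_fst,
    WithLp.smul_snd, timeVec_fst, timeVec_snd, spaceIncl_fst, spaceIncl_snd, smul_zero, add_zero,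
    sub_zero, smul_eq_mul, mul_one]
  push_cast
  congr 1
  generalize (Real.Gamma ((n : ℝ) / 2 + s) : ℂ) = G at hG'
  field_simp

lemma one_add_rpow_neg_le {r p : ℝ} (hr : 0 ≤ r) (hp : 1 ≤ p) :
    (1 + r) ^ (-p) ≤ (1 + r ^ p)⁻¹ := by
  rw [Real.rpow_neg (by positivity)]
  gcongr
  simpa using Real.add_rpow_le_rpow_add zero_le_one hr hp

lemma weightedIntegrable_ofReal (hn : 1 ≤ n) (hα0 : 0 < α) (hs0 : 0 < s)
    {u : EuclideanSpace ℝ (Fin n) × ℝ → ℝ} (hu : AEStronglyMeasurable u)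
    (hi : Integrable (fun p : EuclideanSpace ℝ (Fin n) × ℝ =>
      |u p| / ((1 + ‖p.1‖ ^ ((n : ℝ) + 2 * s)) * (1 + |p.2| ^ (1 + α))))) :
    WeightedIntegrable α s
      (fun z : SpaceTime (EuclideanSpace ℝ (Fin n)) => (u (z.fst, z.snd) : ℂ)) := by
  have hmp := WithLp.volume_preserving_ofLp (U := EuclideanSpace ℝ (Fin n)) (V := ℝ)
  have h1 := hmp.integrable_comp_of_integrable hi
  refine h1.mono' (AEStronglyMeasurable.mul ?_ ?_) ?_
  · exact (Complex.continuous_ofReal.comp (continuous_prodWeight _ _)).aestronglyMeasurable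
  · exact Complex.continuous_ofReal.comp_aestronglyMeasurable
      (hu.comp_quasiMeasurePreserving hmp.quasiMeasurePreserving)
  · filter_upwards with z
    have hn' : (1 : ℝ) ≤ n := by exact_mod_cast hn
    rw [norm_mul, Complex.norm_real, Complex.norm_real, Real.norm_eq_abs (u _),
      Real.norm_of_nonneg (prodWeight_pos _ _ z).le, prodWeight, finrank_euclideanSpace_fin]
    change _ ≤ |u (z.fst, z.snd)| / ((1 + ‖z.fst‖ ^ ((n : ℝ) + 2 * s)) * (1 + |z.snd| ^ (1 + α)))
    rw [div_eq_mul_inv, mul_comm, mul_inv]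
    gcongr
    · exact one_add_rpow_neg_le (norm_nonneg _) (by linarith)
    · exact one_add_rpow_neg_le (norm_nonneg _) (by linarith)

end FractionalOperators

/-- every distributional solution `u ∈ 𝓛_{2s,α}(ℝⁿ×ℝ)` of
`∂_t^α u + (-Δ)^s u = 0` in `ℝⁿ × ℝ` is (a.e.) affine in `x` and independent of `t`:
`u(x,t) = C₀ + Σᵢ Cᵢ xᵢ`. -/
theorem dual_fractional_solutions_are_affine
    (n : ℕ) (hn : 2 ≤ n) (α s : ℝ) (hα0 : 0 < α) (hα1 : α < 1)
    (hs0 : 0 < s) (hs1 : s < 1)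
    (u : EuclideanSpace ℝ (Fin n) × ℝ → ℝ)
    (hu_loc : LocallyIntegrable u)
    (hu_space : Integrable (fun p : EuclideanSpace ℝ (Fin n) × ℝ =>
      |u p| / ((1 + ‖p.1‖ ^ ((n : ℝ) + 2 * s)) * (1 + |p.2| ^ (1 + α)))))
    (hu_sol : ∀ φ : SchwartzMap (EuclideanSpace ℝ (Fin n) × ℝ) ℝ,
      ∫ t : ℝ, ∫ x : EuclideanSpace ℝ (Fin n),
        u (x, t) * (marchaudRight α (⇑φ) x t + fracLap s (⇑φ) x t) = 0) :
    ∃ (C₀ : ℝ) (C : Fin n → ℝ), ∀ᵐ p : EuclideanSpace ℝ (Fin n) × ℝ ∂volume,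
      u p = C₀ + ∑ i : Fin n, C i * p.1 i := by
  have : Nontrivial (EuclideanSpace ℝ (Fin n)) :=
    Module.nontrivial_of_finrank_pos (R := ℝ) (by rw [finrank_euclideanSpace_fin]; omega)
  have hmp := WithLp.volume_preserving_ofLp (U := EuclideanSpace ℝ (Fin n)) (V := ℝ)
  have hmp' := WithLp.volume_preserving_toLp (U := EuclideanSpace ℝ (Fin n)) (V := ℝ)
  have hG : 0 < Real.Gamma ((n : ℝ) / 2 + s) := Real.Gamma_pos_of_pos (by positivity)
  have ha : 0 < Cns n s / Real.Gamma ((n : ℝ) / 2 + s) := div_pos (Cns_pos hs0 hs1) hG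
  have hb := Calpha_pos hα0 hα1
  have hu := weightedIntegrable_ofReal (by omega) hα0 hs0 hu_loc.aestronglyMeasurable hu_space
  have hsol := hu.isJumpSol_of_real hα0 hα1 hs0 hs1 ha.le hb.le fun g => by
    let φ := SchwartzMap.compCLMOfContinuousLinearEquiv ℝ
      (WithLp.prodContinuousLinearEquiv 2 ℝ (EuclideanSpace ℝ (Fin n)) ℝ).symm g
    have hφ : ∀ z : SpaceTime (EuclideanSpace ℝ (Fin n)), g z = φ (z.fst, z.snd) := fun z => rfl
    have hi := hu.integrable_mul_jumpOperator hα0 hα1 hs0 hs1 ha.le hb.le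
      (SchwartzMap.postcompCLM Complex.ofRealCLM g)
    change Integrable (fun z => (u (z.fst, z.snd) : ℂ) * jumpOperator α s
      (Cns n s / Real.Gamma ((n : ℝ) / 2 + s)) (Calpha α) (fun z => (g z : ℂ)) z) volume at hi
    simp only [hφ, jumpOperator_ofReal hs0, ← Complex.ofReal_mul] at hi ⊢
    have hi' := hmp'.integrable_comp_of_integrable hi.re
    rw [integral_complex_ofReal, ← hmp'.integral_comp
      (MeasurableEquiv.toLp 2 (EuclideanSpace ℝ (Fin n) × ℝ)).measurableEmbedding]
    exact congrArg Complex.ofReal ((integral_prod_symm _ hi').trans (hu_sol φ))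
  obtain ⟨c, l, hl⟩ := hsol.exists_affine hα0 hα1 hs0 hs1 ha hb hu
  refine ⟨c.re, fun i => (l (EuclideanSpace.single i 1)).re, ?_⟩
  filter_upwards [hmp'.quasiMeasurePreserving.ae hl] with p hp
  have h1 : u p = (c + l p.1).re := by
    have hp' : (u p : ℂ) = c + l p.1 := hp
    rw [← hp', Complex.ofReal_re]
  rw [h1, Complex.add_re]
  congr 1
  have h2 : p.1 = ∑ i, p.1 i • EuclideanSpace.single i (1 : ℝ) := by
    ext j
    simp [Pi.single_apply]
  conv_lhs => rw [h2]
  simp [map_sum, mul_comm]
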